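/- arXiv:1611.09719 — 3 statements merged into one kernel-verified Lean document; each statement's English description precedes it below -/
import Mathlib

section
/- Let ζ₁, ζ₂ > −3 with ζ̄ := ζ₁ + ζ₂ + 3 < 0, let m ∈ ℕ and R > 0. Then there is a constant C, depending only on m, ζ₁, ζ₂ and R (and not on ε), such that for all ε = 2^{−N} with 4mε < 1 and all K₁, K₂ : ε²ℤ × εℤ → ℝ supported in the ball of radius R around the origin: ⦀K₁ ∗_ε K₂⦀_{ζ̄; m}^{(ε)} ≤ C ⦀K₁⦀_{ζ₁; m}^{(ε)} ⦀K₂⦀_{ζ₂; m}^{(ε)}, where (K₁ ∗_ε K₂)(z) := ε³ Σ_{w ∈ ε²ℤ × εℤ} K₁(z−w) K₂(w). -/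
open Real

noncomputable section

/-- Forward time difference `D̄_{t,ε²}` on grid functions (indexed form:
`f m j` is the value at the point `(ε² m, ε j)`). -/
def fdT (ε : ℝ) (f : ℤ → ℤ → ℝ) : ℤ → ℤ → ℝ :=
  fun m j => (f (m + 1) j - f m j) / ε ^ 2

/-- Forward space difference `D̄_{x,ε}` on grid functions. -/
def fdX (ε : ℝ) (f : ℤ → ℤ → ℝ) : ℤ → ℤ → ℝ :=
  fun m j => (f m (j + 1) - f m j) / ε

/-- Iterated forward differences `D̄_ε^k = D̄_{t,ε²}^{k₀} D̄_{x,ε}^{k₁}`. -/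
def fdiff (ε : ℝ) (k₀ k₁ : ℕ) (f : ℤ → ℤ → ℝ) : ℤ → ℤ → ℝ :=
  (fdT ε)^[k₀] ((fdX ε)^[k₁] f)

/-- Parabolic norm `‖z‖_s` of the grid point `z = (ε² m, ε j)`. -/
def snorm (ε : ℝ) (m j : ℤ) : ℝ :=
  max (Real.sqrt |ε ^ 2 * (m : ℝ)|) |ε * (j : ℝ)|

/-- `‖z‖_{s,ε} = ‖z‖_s ∨ ε` for the grid point `z = (ε² m, ε j)`. -/
def snormE (ε : ℝ) (m j : ℤ) : ℝ := max (snorm ε m j) ε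

/-- The grid function `K` is supported in the parabolic ball of radius `R`
around the origin. -/
def SuppIn (ε R : ℝ) (K : ℤ → ℤ → ℝ) : Prop :=
  ∀ m j : ℤ, R < snorm ε m j → K m j = 0

/-- `⦀K⦀_{ζ;m}^{(ε)} ≤ M`, expressed through the defining bounds. -/
def SingBound (ε ζ : ℝ) (m : ℕ) (M : ℝ) (K : ℤ → ℤ → ℝ) : Prop :=
  ∀ k₀ k₁ : ℕ, 2 * k₀ + k₁ ≤ m → ∀ mz j : ℤ,
    |fdiff ε k₀ k₁ K mz j| ≤ M * snormE ε mz j ^ (ζ - (2 * (k₀ : ℝ) + (k₁ : ℝ)))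

/-- The discrete space-time convolution `(K₁ ∗_ε K₂)(z) = ε³ Σ_w K₁(z-w) K₂(w)`
on grid indices. -/
def dconv (ε : ℝ) (K₁ K₂ : ℤ → ℤ → ℝ) : ℤ → ℤ → ℝ :=
  fun m j => ε ^ 3 * ∑' p : ℤ × ℤ, K₁ (m - p.1) (j - p.2) * K₂ p.1 p.2


/-- Rescaled parabolic norm. -/
def rho (t x : ℤ) : ℝ := max (max (Real.sqrt |(t : ℝ)|) |(x : ℝ)|) 1

lemma bern_pos {b y : ℝ} (hb : 0 < b) (hb1 : b ≤ 1) (hy : 1 ≤ y) :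
    b * y ^ (b - 1) ≤ y ^ b - (y - 1) ^ b := by
  have hy0 : 0 < y := by linarith
  have h := rpow_one_add_le_one_add_mul_self (s := -(1 / y))
    (by have : 1 / y ≤ 1 := by rw [div_le_one hy0]; exact hy
        linarith) hb.le hb1
  have e : (y - 1) ^ b = y ^ b * (1 + -(1 / y)) ^ b := by
    rw [← Real.mul_rpow hy0.le]
    · congr 1; field_simp; ring
    · have : 1 / y ≤ 1 := by rw [div_le_one hy0]; exact hy
      linarith
  have e2 : y ^ (b - 1) = y ^ b * (1 / y) := by
    rw [Real.rpow_sub_one hy0.ne']; ring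
  rw [e, e2]
  have := mul_le_mul_of_nonneg_left h (Real.rpow_nonneg hy0.le b)
  linarith

lemma bern_neg {b y : ℝ} (hb : b < 0) (hy : 1 ≤ y) :
    (-b) * (y + 1) ^ (b - 1) ≤ y ^ b - (y + 1) ^ b := by
  have hy0 : 0 < y := by linarith
  have hy1 : 0 < y + 1 := by linarith
  have hp : 0 < 1 - 1 / (y + 1) := by
    have : 1 / (y + 1) < 1 := by rw [div_lt_one hy1]; linarith
    linarith
  have h : 1 + (-b) * (1 / (y + 1)) ≤ (1 - 1 / (y + 1)) ^ b := by
    rw [Real.rpow_def_of_pos hp]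
    have h1 := Real.add_one_le_exp (Real.log (1 - 1 / (y + 1)) * b)
    have h2 := Real.log_le_sub_one_of_pos hp
    nlinarith
  have e : y ^ b = (y + 1) ^ b * (1 - 1 / (y + 1)) ^ b := by
    rw [← Real.mul_rpow hy1.le hp.le]
    congr 1; field_simp; ring
  have e2 : (y + 1) ^ (b - 1) = (y + 1) ^ b * (1 / (y + 1)) := by
    rw [Real.rpow_sub_one hy1.ne']; ring
  rw [e, e2]
  have := mul_le_mul_of_nonneg_left h (Real.rpow_nonneg hy1.le b)
  linarith

lemma sum1_pos {a : ℝ} (ha : -1 < a) (ha0 : a ≤ 0) (n : ℕ) :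
    ∑ i ∈ Finset.range n, (max 1 (i : ℝ)) ^ a ≤ (2 ^ (-a) / (a + 1)) * (n : ℝ) ^ (a + 1) := by
  induction n with
  | zero => simp; rw [Real.zero_rpow (by linarith)]; simp
  | succ n ih =>
    rw [Finset.sum_range_succ]
    have hb := bern_pos (b := a + 1) (y := (n : ℝ) + 1) (by linarith) (by linarith)
      (by have : (0:ℝ) ≤ n := n.cast_nonneg
          linarith)
    have h2 : ((2:ℝ) * max 1 (n : ℝ)) ^ a ≤ ((n : ℝ) + 1) ^ (a + 1 - 1) := by
      rw [add_sub_cancel_right]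
      apply Real.rpow_le_rpow_of_nonpos (by positivity) _ ha0
      have := le_max_left 1 (n : ℝ)
      have := le_max_right 1 (n : ℝ)
      linarith
    rw [Real.mul_rpow (by norm_num) (by positivity)] at h2
    have hC : (2:ℝ) ^ (-a) * 2 ^ a = 1 := by
      rw [← Real.rpow_add (by norm_num)]; simp
    have ha1 : 0 < a + 1 := by linarith
    push_cast
    rw [add_sub_cancel_right (n : ℝ) 1] at hb
    set X := (max 1 (n : ℝ)) ^ a
    set Y := (2:ℝ) ^ (-a)
    have hY : 0 < Y := by positivity
    have h3 : X ≤ Y / (a + 1) * (((n : ℝ) + 1) ^ (a + 1) - (n:ℝ) ^ (a + 1)) := by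
      calc X = Y / (a + 1) * ((a + 1) * (2 ^ a * X)) := by
            field_simp; linear_combination X * (-hC)
        _ ≤ _ := by
            apply mul_le_mul_of_nonneg_left _ (by positivity)
            exact le_trans (mul_le_mul_of_nonneg_left h2 ha1.le) hb
    linarith

lemma sum1_neg {a : ℝ} (ha : a < -1) (S : ℝ) (hS : 1 ≤ S) (n : ℕ) :
    ∑ i ∈ Finset.range n, (S + (i : ℝ)) ^ a ≤
      (2 ^ (-a) / (-(a + 1))) * (S ^ (a + 1) - (S + n) ^ (a + 1)) := by
  induction n with
  | zero => simp
  | succ n ih =>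
    rw [Finset.sum_range_succ]
    have hn : (0:ℝ) ≤ n := n.cast_nonneg
    have hb := bern_neg (b := a + 1) (y := S + (n : ℝ)) (by linarith) (by linarith)
    have h2 : ((2:ℝ) * (S + n)) ^ a ≤ (S + (n : ℝ) + 1) ^ (a + 1 - 1) := by
      rw [add_sub_cancel_right]
      apply Real.rpow_le_rpow_of_nonpos (by positivity) _ (by linarith)
      linarith
    rw [Real.mul_rpow (by norm_num) (by positivity)] at h2
    have hC : (2:ℝ) ^ (-a) * 2 ^ a = 1 := by
      rw [← Real.rpow_add (by norm_num)]; simp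
    have ha1 : 0 < -(a + 1) := by linarith
    push_cast
    rw [← add_assoc]
    set X := (S + (n : ℝ)) ^ a
    set Y := (2:ℝ) ^ (-a)
    have hY : 0 < Y := by positivity
    have h3 : X ≤ Y / (-(a + 1)) * ((S + n) ^ (a + 1) - (S + (n:ℝ) + 1) ^ (a + 1)) := by
      calc X = Y / (-(a + 1)) * (-(a + 1) * (2 ^ a * X)) := by
            rw [div_mul_eq_mul_div, mul_left_comm, mul_div_cancel_left₀ _ ha1.ne']
            linear_combination X * (-hC)
        _ ≤ _ := by
            apply mul_le_mul_of_nonneg_left _ (by positivity)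
            exact le_trans (mul_le_mul_of_nonneg_left h2 ha1.le) hb
    linarith

lemma sum_int_le {g : ℕ → ℝ} (hg : ∀ i, 0 ≤ g i) {K : ℝ}
    (hK : ∀ N, ∑ i ∈ Finset.range N, g i ≤ K) (T : Finset ℤ) :
    ∑ x ∈ T, g x.natAbs ≤ 2 * K := by
  have key : ∀ T : Finset ℤ, Set.InjOn Int.natAbs (T : Set ℤ) →
      ∑ x ∈ T, g x.natAbs ≤ K := by
    intro T hT
    rw [← Finset.sum_image (f := g) hT]
    refine le_trans ?_ (hK ((T.image Int.natAbs).sup id + 1))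
    apply Finset.sum_le_sum_of_subset_of_nonneg
    · intro i hi
      have := Finset.le_sup (f := id) hi
      simp only [id] at this
      exact Finset.mem_range.2 (Nat.lt_succ_of_le this)
    · intros; exact hg _
  rw [← Finset.sum_filter_add_sum_filter_not T (fun x => 0 ≤ x)]
  have h1 := key (T.filter (fun x => 0 ≤ x)) (by
    intro x hx y hy h
    simp at hx hy
    try simp at h
    omega)
  have h2 := key (T.filter (fun x => ¬ 0 ≤ x)) (by
    intro x hx y hy h
    simp at hx hy
    try simp at h
    omega)
  linarith

lemma sum_prod_le {w : ℤ → ℤ → ℝ} {φ ψ : ℤ → ℝ} (hφ : ∀ t, 0 ≤ φ t) (hψ : ∀ t, 0 ≤ ψ t)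
    (hw : ∀ t x, w t x ≤ φ t * ψ x) {A B : ℝ}
    (hA : ∀ T : Finset ℤ, ∑ t ∈ T, φ t ≤ A) (hB : ∀ T : Finset ℤ, ∑ t ∈ T, ψ t ≤ B)
    (T : Finset (ℤ × ℤ)) : ∑ p ∈ T, w p.1 p.2 ≤ A * B := by
  calc ∑ p ∈ T, w p.1 p.2 ≤ ∑ p ∈ T, φ p.1 * ψ p.2 := Finset.sum_le_sum (fun p _ => hw _ _)
    _ ≤ ∑ p ∈ (T.image Prod.fst) ×ˢ (T.image Prod.snd), φ p.1 * ψ p.2 := by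
        apply Finset.sum_le_sum_of_subset_of_nonneg
        · exact Finset.subset_product
        · intros; exact mul_nonneg (hφ _) (hψ _)
    _ = (∑ t ∈ T.image Prod.fst, φ t) * (∑ x ∈ T.image Prod.snd, ψ x) := by
        rw [Finset.sum_mul_sum, Finset.sum_product]
    _ ≤ A * B := by
        apply mul_le_mul (hA _) (hB _) (Finset.sum_nonneg (fun _ _ => hψ _))
        simpa using hA ∅

/-- the parabolic box -/
def inB (s : ℕ) (t x : ℤ) : Prop := |t| ≤ (s : ℤ) ^ 2 ∧ |x| ≤ (s : ℤ)

lemma rho_one (t x : ℤ) : 1 ≤ rho t x := le_max_right _ _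
lemma rho_pos (t x : ℤ) : 0 < rho t x := lt_of_lt_of_le one_pos (rho_one t x)
lemma rho_x (t x : ℤ) : |(x : ℝ)| ≤ rho t x := le_max_of_le_left (le_max_right _ _)
lemma rho_t (t x : ℤ) : |(t : ℝ)| ≤ rho t x ^ 2 := by
  have h : Real.sqrt |(t : ℝ)| ≤ rho t x := le_max_of_le_left (le_max_left _ _)
  rw [Real.sqrt_le_iff] at h
  exact h.2

lemma rho_far {s : ℕ} {t x : ℤ} (h : (s : ℤ) ≤ |x| ∨ (s : ℤ) ^ 2 ≤ |t|) :
    ((s : ℝ) + 1) / 2 ≤ rho t x := by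
  have h1 := rho_one t x
  have : (s : ℝ) ≤ rho t x := by
    rcases h with h | h
    · have : (s : ℝ) ≤ |(x : ℝ)| := by exact_mod_cast h
      exact this.trans (rho_x t x)
    · have : (s : ℝ) ^ 2 ≤ |(t : ℝ)| := by exact_mod_cast h
      have := this.trans (rho_t t x)
      exact (pow_le_pow_iff_left₀ (by positivity) (by positivity) (by norm_num)).1 this
  linarith

lemma rho_far' {s : ℕ} {t x : ℤ} (h : ¬ inB s t x) :
    ((s : ℝ) + 1) / 2 ≤ rho t x := by
  apply rho_far
  unfold inB at h
  by_contra hc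
  push Not at hc
  exact h ⟨hc.2.le, hc.1.le⟩

open Classical in
lemma L1 {ζ : ℝ} (h : -3 < ζ) (h0 : ζ ≤ 0) : ∃ C : ℝ, 0 < C ∧ ∀ (s : ℕ) (T : Finset (ℤ × ℤ)),
    ∑ p ∈ T, (if inB s p.1 p.2 then rho p.1 p.2 ^ ζ else 0) ≤ C * ((s : ℝ) + 1) ^ (ζ + 3) := by
  have ha : -1 < ζ / 3 := by linarith
  have ha0 : ζ / 3 ≤ 0 := by linarith
  set C := (2:ℝ) ^ (-(ζ / 3)) / (ζ / 3 + 1) with hC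
  have ha1 : 0 < ζ / 3 + 1 := by linarith
  have hCp : 0 < C := by positivity
  refine ⟨(2 * C) * (2 * C), by positivity, fun s T => ?_⟩
  have one : ∀ (n : ℕ) (T : Finset ℤ), ∑ x ∈ T,
      (if x.natAbs ≤ n then (max 1 ((x.natAbs : ℕ) : ℝ)) ^ (ζ / 3) else 0) ≤
        2 * (C * ((n : ℝ) + 1) ^ (ζ / 3 + 1)) := by
    intro n T
    apply sum_int_le (g := fun i => if i ≤ n then (max 1 (i : ℝ)) ^ (ζ / 3) else 0)
    · intro i; (try dsimp only); split_ifs <;> positivity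
    · intro N
      have := sum1_pos ha ha0 (n + 1)
      push_cast at this
      refine le_trans ?_ this
      rw [← Finset.sum_filter]
      apply Finset.sum_le_sum_of_subset_of_nonneg
      · intro i hi
        simp at hi ⊢
        omega
      · intros; positivity
  refine le_trans (sum_prod_le
    (φ := fun t => if t.natAbs ≤ s ^ 2 then (max 1 ((t.natAbs : ℕ) : ℝ)) ^ (ζ / 3) else 0)
    (ψ := fun t => if t.natAbs ≤ s then (max 1 ((t.natAbs : ℕ) : ℝ)) ^ (ζ / 3) else 0)
    (w := fun t x => if inB s t x then rho t x ^ ζ else 0)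
    ?_ ?_ ?_ (one (s ^ 2)) (one s) T) ?_
  · intro i; (try dsimp only); split_ifs <;> positivity
  · intro i; (try dsimp only); split_ifs <;> positivity
  · intro t x
    try dsimp only
    by_cases hB : inB s t x
    · have h1 : t.natAbs ≤ s ^ 2 := by
        have := hB.1
        rw [Int.abs_eq_natAbs] at this
        exact_mod_cast this
      have h2 : x.natAbs ≤ s := by
        have := hB.2
        rw [Int.abs_eq_natAbs] at this
        exact_mod_cast this
      rw [if_pos hB, if_pos h1, if_pos h2, Nat.cast_natAbs, Nat.cast_natAbs]
      push_cast
      have e : rho t x ^ ζ = (rho t x ^ 2) ^ (ζ / 3) * rho t x ^ (ζ / 3) := by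
        rw [← Real.rpow_natCast (rho t x) 2, ← Real.rpow_mul (rho_pos t x).le,
          ← Real.rpow_add (rho_pos t x)]
        congr 1; push_cast; ring
      rw [e]
      have r1 := rho_one t x
      apply mul_le_mul
      · apply Real.rpow_le_rpow_of_nonpos (by positivity) _ ha0
        apply max_le _ (rho_t t x)
        nlinarith
      · apply Real.rpow_le_rpow_of_nonpos (by positivity) _ ha0
        exact max_le r1 (rho_x t x)
      · positivity
      · positivity
    · rw [if_neg hB]
      apply mul_nonneg <;> split_ifs <;> positivity
  · push_cast
    have e : ((s : ℝ) + 1) ^ (ζ + 3) = (((s : ℝ) + 1) ^ 2) ^ (ζ / 3 + 1) * ((s : ℝ) + 1) ^ (ζ / 3 + 1) := by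
      have hs : 0 < (s : ℝ) + 1 := by positivity
      rw [← Real.rpow_natCast _ 2, ← Real.rpow_mul hs.le, ← Real.rpow_add hs]
      congr 1; push_cast; ring
    rw [e]
    have : ((s : ℝ) ^ 2 + 1) ^ (ζ / 3 + 1) ≤ (((s : ℝ) + 1) ^ 2) ^ (ζ / 3 + 1) := by
      apply Real.rpow_le_rpow (by positivity) _ ha1.le
      have : (0:ℝ) ≤ s := s.cast_nonneg
      nlinarith
    calc _ = 2 * C * (2 * C) * (((s : ℝ) ^ 2 + 1) ^ (ζ / 3 + 1) * ((s : ℝ) + 1) ^ (ζ / 3 + 1)) := by ring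
      _ ≤ _ := by gcongr

open Classical in
lemma L2 {ζ : ℝ} (h : ζ < -3) : ∃ C : ℝ, 0 < C ∧ ∀ (s : ℕ) (T : Finset (ℤ × ℤ)),
    ∑ p ∈ T, (if inB s p.1 p.2 then 0 else rho p.1 p.2 ^ ζ) ≤ C * ((s : ℝ) + 1) ^ (ζ + 3) := by
  have ha : ζ / 3 < -1 := by linarith
  set C := (2:ℝ) ^ (-(ζ / 3)) / (-(ζ / 3 + 1)) with hC
  have ha1 : 0 < -(ζ / 3 + 1) := by linarith
  have hCp : 0 < C := by positivity
  set D := (5:ℝ) ^ (-(ζ / 3)) * (3:ℝ) ^ (-(ζ / 3)) with hD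
  refine ⟨(5:ℝ) ^ (-(ζ / 3)) * (2 * C) * ((3:ℝ) ^ (-(ζ / 3)) * (2 * C)), by positivity, fun s T => ?_⟩
  have one : ∀ (c S : ℝ), 0 ≤ c → 1 ≤ S → ∀ (T : Finset ℤ), ∑ x ∈ T,
      (c * (S + ((x.natAbs : ℕ) : ℝ)) ^ (ζ / 3)) ≤ 2 * (c * (C * S ^ (ζ / 3 + 1))) := by
    intro c S hc hS T
    apply sum_int_le (g := fun i => c * (S + (i : ℝ)) ^ (ζ / 3))
    · intro i; positivity
    · intro N
      have := sum1_neg ha S hS N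
      rw [← Finset.mul_sum]
      apply mul_le_mul_of_nonneg_left _ hc
      refine le_trans this ?_
      apply mul_le_mul_of_nonneg_left _ hCp.le
      have : 0 ≤ (S + N) ^ (ζ / 3 + 1) := by positivity
      linarith
  have hs0 : (0:ℝ) ≤ s := s.cast_nonneg
  refine le_trans (sum_prod_le
    (φ := fun t => (5:ℝ) ^ (-(ζ / 3)) * (((s:ℝ) + 1) ^ 2 + ((t.natAbs : ℕ) : ℝ)) ^ (ζ / 3))
    (ψ := fun t => (3:ℝ) ^ (-(ζ / 3)) * (((s:ℝ) + 1) + ((t.natAbs : ℕ) : ℝ)) ^ (ζ / 3))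
    (w := fun t x => if inB s t x then 0 else rho t x ^ ζ)
    ?_ ?_ ?_ (one _ _ (by positivity) (by nlinarith)) (one _ _ (by positivity) (by linarith)) T) ?_
  · intro i; positivity
  · intro i; positivity
  · intro t x
    try dsimp only
    by_cases hB : inB s t x
    · rw [if_pos hB]; positivity
    · rw [if_neg hB, Nat.cast_natAbs, Nat.cast_natAbs]
      push_cast
      have e : rho t x ^ ζ = (rho t x ^ 2) ^ (ζ / 3) * rho t x ^ (ζ / 3) := by
        rw [← Real.rpow_natCast (rho t x) 2, ← Real.rpow_mul (rho_pos t x).le,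
          ← Real.rpow_add (rho_pos t x)]
        congr 1; push_cast; ring
      rw [e]
      have r1 := rho_far' hB
      have r2 := rho_x t x
      have r3 := rho_t t x
      have hr := rho_pos t x
      have inv : ∀ c : ℝ, 0 < c → c ^ (-(ζ / 3)) = (c⁻¹) ^ (ζ / 3) := by
        intro c hc
        rw [Real.rpow_neg hc.le, Real.inv_rpow hc.le]
      rw [inv 5 (by norm_num), inv 3 (by norm_num),
        ← Real.mul_rpow (x := (5:ℝ)⁻¹) (by norm_num) (by positivity),
        ← Real.mul_rpow (x := (3:ℝ)⁻¹) (by norm_num) (by positivity)]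
      apply mul_le_mul
      · apply Real.rpow_le_rpow_of_nonpos (by positivity) _ (by linarith)
        nlinarith
      · apply Real.rpow_le_rpow_of_nonpos (by positivity) _ (by linarith)
        linarith
      · positivity
      · positivity
  · have e : ((s : ℝ) + 1) ^ (ζ + 3) = (((s : ℝ) + 1) ^ 2) ^ (ζ / 3 + 1) * ((s : ℝ) + 1) ^ (ζ / 3 + 1) := by
      have hs : 0 < (s : ℝ) + 1 := by positivity
      rw [← Real.rpow_natCast _ 2, ← Real.rpow_mul hs.le, ← Real.rpow_add hs]
      congr 1; push_cast; ring
    rw [e]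
    apply le_of_eq; ring

/-- pairing over the box -/
def AB (s : ℕ) (n j : ℤ) (f g : ℤ → ℤ → ℝ) : ℝ :=
  ∑ t ∈ Finset.Ico (-(s : ℤ) ^ 2) ((s : ℤ) ^ 2 + 1), ∑ x ∈ Finset.Ico (-(s : ℤ)) ((s : ℤ) + 1),
    f t x * g (n - t) (j - x)

lemma tele (h : ℤ → ℝ) (a : ℤ) (n : ℕ) :
    ∑ t ∈ Finset.Ico a (a + n), (h (t + 1) - h t) = h (a + n) - h a := by
  induction n with
  | zero => simp
  | succ n ih =>
    have : Finset.Ico a (a + ((n + 1 : ℕ) : ℤ)) = insert (a + (n : ℤ)) (Finset.Ico a (a + n)) := by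
      ext y; simp only [Finset.mem_Ico, Finset.mem_insert]; push_cast; omega
    rw [this, Finset.sum_insert (by simp), ih]
    push_cast
    rw [← add_assoc]; ring

lemma tele' (h : ℤ → ℝ) (a : ℕ) :
    ∑ t ∈ Finset.Ico (-(a : ℤ)) ((a : ℤ) + 1), (h (t + 1) - h t) = h (a + 1) - h (-a) := by
  have := tele h (-(a : ℤ)) (2 * a + 1)
  have e : -(a : ℤ) + ((2 * a + 1 : ℕ) : ℤ) = a + 1 := by push_cast; ring
  rwa [e] at this

lemma stepT (s : ℕ) (n j : ℤ) (f g : ℤ → ℤ → ℝ) {P Q : ℝ}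
    (hf : ∀ t x : ℤ, ((s : ℤ) ≤ |x| ∨ (s : ℤ) ^ 2 ≤ |t|) → |f t x| ≤ P)
    (hg : ∀ t x : ℤ, |t| ≤ (s : ℤ) ^ 2 + 1 → |x| ≤ (s : ℤ) + 1 → |g (n - t) (j - x)| ≤ Q) :
    |AB s n j (fdT 1 f) g - AB s n j f (fdT 1 g)| ≤ (2 * s + 1) * (2 * (P * Q)) := by
  have hP : 0 ≤ P := (abs_nonneg _).trans (hf 0 s (Or.inl (le_abs_self _)))
  unfold AB fdT
  rw [← Finset.sum_sub_distrib]
  simp_rw [← Finset.sum_sub_distrib]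
  rw [Finset.sum_comm]
  have e : ∀ x : ℤ, ∑ t ∈ Finset.Ico (-(s : ℤ) ^ 2) ((s : ℤ) ^ 2 + 1),
      ((f (t + 1) x - f t x) / 1 ^ 2 * g (n - t) (j - x)
        - f t x * ((g (n - t + 1) (j - x) - g (n - t) (j - x)) / 1 ^ 2)) =
      f ((s : ℤ) ^ 2 + 1) x * g (n - (s : ℤ) ^ 2) (j - x)
        - f (-(s : ℤ) ^ 2) x * g (n - (-((s : ℤ) ^ 2 + 1))) (j - x) := by
    intro x
    have h := tele' (fun t => f t x * g (n + 1 - t) (j - x)) (s ^ 2)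
    push_cast at h
    rw [show n + 1 - ((s : ℤ) ^ 2 + 1) = n - (s : ℤ) ^ 2 by ring,
      show n + 1 - (-(s : ℤ) ^ 2) = n - (-((s : ℤ) ^ 2 + 1)) by ring] at h
    rw [← h]
    apply Finset.sum_congr rfl
    intro t _
    rw [show n + 1 - (t + 1) = n - t by ring, show n + 1 - t = n - t + 1 by ring]
    ring
  simp_rw [e]
  refine (Finset.abs_sum_le_sum_abs _ _).trans ?_
  have : ∀ x ∈ Finset.Ico (-(s : ℤ)) ((s : ℤ) + 1),
      |f ((s : ℤ) ^ 2 + 1) x * g (n - (s : ℤ) ^ 2) (j - x)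
        - f (-(s : ℤ) ^ 2) x * g (n - (-((s : ℤ) ^ 2 + 1))) (j - x)| ≤ 2 * (P * Q) := by
    intro x hx
    rw [Finset.mem_Ico] at hx
    have hx' : |x| ≤ (s : ℤ) + 1 := by rw [abs_le]; omega
    have hs : (0 : ℤ) ≤ (s : ℤ) ^ 2 := by positivity
    refine (abs_sub _ _).trans ?_
    rw [abs_mul, abs_mul, two_mul]
    apply add_le_add
    · apply mul_le_mul (hf _ _ (Or.inr _)) (hg _ _ _ hx') (abs_nonneg _) hP
      · rw [abs_of_nonneg (by linarith)]; linarith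
      · rw [abs_of_nonneg (by linarith)]; linarith
    · apply mul_le_mul (hf _ _ (Or.inr _)) (hg _ _ _ hx') (abs_nonneg _) hP
      · rw [abs_neg, abs_of_nonneg hs]
      · rw [abs_neg, abs_of_nonneg (by linarith)]
  refine (Finset.sum_le_card_nsmul _ _ _ this).trans ?_
  rw [Int.card_Ico, nsmul_eq_mul]
  apply le_of_eq
  congr 1
  have : ((s : ℤ) + 1 - -(s : ℤ)).toNat = 2 * s + 1 := by omega
  rw [this]; push_cast; ring

lemma stepX (s : ℕ) (n j : ℤ) (f g : ℤ → ℤ → ℝ) {P Q : ℝ}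
    (hf : ∀ t x : ℤ, ((s : ℤ) ≤ |x| ∨ (s : ℤ) ^ 2 ≤ |t|) → |f t x| ≤ P)
    (hg : ∀ t x : ℤ, |t| ≤ (s : ℤ) ^ 2 + 1 → |x| ≤ (s : ℤ) + 1 → |g (n - t) (j - x)| ≤ Q) :
    |AB s n j (fdX 1 f) g - AB s n j f (fdX 1 g)| ≤ (2 * (s : ℝ) ^ 2 + 1) * (2 * (P * Q)) := by
  have hP : 0 ≤ P := (abs_nonneg _).trans (hf 0 s (Or.inl (le_abs_self _)))
  unfold AB fdX
  rw [← Finset.sum_sub_distrib]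
  simp_rw [← Finset.sum_sub_distrib]
  have e : ∀ t : ℤ, ∑ x ∈ Finset.Ico (-(s : ℤ)) ((s : ℤ) + 1),
      ((f t (x + 1) - f t x) / 1 * g (n - t) (j - x)
        - f t x * ((g (n - t) (j - x + 1) - g (n - t) (j - x)) / 1)) =
      f t ((s : ℤ) + 1) * g (n - t) (j - s)
        - f t (-(s : ℤ)) * g (n - t) (j - (-((s : ℤ) + 1))) := by
    intro t
    have h := tele' (fun x => f t x * g (n - t) (j + 1 - x)) s
    rw [show j + 1 - ((s : ℤ) + 1) = j - (s : ℤ) by ring,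
      show j + 1 - (-(s : ℤ)) = j - (-((s : ℤ) + 1)) by ring] at h
    rw [← h]
    apply Finset.sum_congr rfl
    intro x _
    rw [show j + 1 - (x + 1) = j - x by ring, show j + 1 - x = j - x + 1 by ring]
    ring
  simp_rw [e]
  refine (Finset.abs_sum_le_sum_abs _ _).trans ?_
  have : ∀ t ∈ Finset.Ico (-(s : ℤ) ^ 2) ((s : ℤ) ^ 2 + 1),
      |f t ((s : ℤ) + 1) * g (n - t) (j - s)
        - f t (-(s : ℤ)) * g (n - t) (j - (-((s : ℤ) + 1)))| ≤ 2 * (P * Q) := by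
    intro t ht
    rw [Finset.mem_Ico] at ht
    have ht' : |t| ≤ (s : ℤ) ^ 2 + 1 := by rw [abs_le]; constructor <;> linarith [ht.1, ht.2]
    have hs : (0 : ℤ) ≤ (s : ℤ) := by positivity
    refine (abs_sub _ _).trans ?_
    rw [abs_mul, abs_mul, two_mul]
    apply add_le_add
    · apply mul_le_mul (hf _ _ (Or.inl _)) (hg _ _ ht' _) (abs_nonneg _) hP
      · rw [abs_of_nonneg (by linarith)]; linarith
      · rw [abs_of_nonneg (by linarith)]; linarith
    · apply mul_le_mul (hf _ _ (Or.inl _)) (hg _ _ ht' _) (abs_nonneg _) hP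
      · rw [abs_neg, abs_of_nonneg hs]
      · rw [abs_neg, abs_of_nonneg (by linarith)]
  refine (Finset.sum_le_card_nsmul _ _ _ this).trans ?_
  rw [Int.card_Ico, nsmul_eq_mul]
  apply le_of_eq
  congr 1
  have : ((s : ℤ) ^ 2 + 1 - -(s : ℤ) ^ 2).toNat = 2 * s ^ 2 + 1 := by
    have e : ((s : ℤ) ^ 2 + 1 - -(s : ℤ) ^ 2) = ((2 * s ^ 2 + 1 : ℕ) : ℤ) := by push_cast; ring
    rw [e, Int.toNat_natCast]
  rw [this]; push_cast; ring

lemma geom (n j : ℤ) (s : ℕ) (hs : (s : ℝ) ≤ rho n j / 4) (t x : ℤ)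
    (ht : |t| ≤ (s : ℤ) ^ 2 + 1) (hx : |x| ≤ (s : ℤ) + 1) :
    rho n j / 4 ≤ rho (n - t) (j - x) := by
  have ht' : |(t : ℝ)| ≤ (s : ℝ) ^ 2 + 1 := by exact_mod_cast ht
  have hx' : |(x : ℝ)| ≤ (s : ℝ) + 1 := by exact_mod_cast hx
  have h1 := rho_one (n - t) (j - x)
  have hX := rho_x (n - t) (j - x)
  have hT := rho_t (n - t) (j - x)
  have hr1 := rho_one n j
  push_cast at hX hT
  by_cases hr : rho n j < 4
  · linarith
  push Not at hr
  have hs0 : (0:ℝ) ≤ s := s.cast_nonneg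
  have hj : |(j : ℝ)| ≤ |(j : ℝ) - x| + |(x : ℝ)| := by
    have := abs_add_le ((j : ℝ) - x) x
    simpa using this
  have hn : |(n : ℝ)| ≤ |(n : ℝ) - t| + |(t : ℝ)| := by
    have := abs_add_le ((n : ℝ) - t) t
    simpa using this
  have hcase : rho n j = Real.sqrt |(n : ℝ)| ∨ rho n j = |(j : ℝ)| ∨ rho n j = 1 := by
    unfold rho
    rcases max_choice (max (Real.sqrt |(n : ℝ)|) |(j : ℝ)|) 1 with h | h
    · rw [h]
      rcases max_choice (Real.sqrt |(n : ℝ)|) |(j : ℝ)| with h' | h' <;> rw [h'] <;> simp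
    · right; right; exact h
  rcases hcase with h | h | h
  · have h2 : rho n j ^ 2 = |(n : ℝ)| := by rw [h, Real.sq_sqrt (abs_nonneg _)]
    have h3 : (s : ℝ) ^ 2 ≤ (rho n j / 4) ^ 2 := by gcongr
    have h4 : (rho n j / 4) ^ 2 ≤ rho (n - t) (j - x) ^ 2 := by nlinarith
    exact (pow_le_pow_iff_left₀ (by positivity) (by positivity) (by norm_num)).1 h4
  · linarith
  · linarith

lemma fdTX_comm (f : ℤ → ℤ → ℝ) : fdX 1 (fdT 1 f) = fdT 1 (fdX 1 f) := by
  funext t x; unfold fdX fdT; ring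

lemma fdiff_T (k₀ k₁ : ℕ) (f : ℤ → ℤ → ℝ) : fdiff 1 (k₀ + 1) k₁ f = fdT 1 (fdiff 1 k₀ k₁ f) := by
  unfold fdiff; rw [Function.iterate_succ_apply']

lemma fdiff_X (k₀ k₁ : ℕ) (f : ℤ → ℤ → ℝ) : fdiff 1 k₀ (k₁ + 1) f = fdX 1 (fdiff 1 k₀ k₁ f) := by
  induction k₀ with
  | zero => unfold fdiff; simp only [Function.iterate_zero, id]; rw [Function.iterate_succ_apply']
  | succ k ih => rw [fdiff_T, ih, fdiff_T, fdTX_comm]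

/-- normalized bound -/
def NB (ζ : ℝ) (m : ℕ) (M : ℝ) (K : ℤ → ℤ → ℝ) : Prop :=
  ∀ k₀ k₁ : ℕ, 2 * k₀ + k₁ ≤ m → ∀ t x : ℤ,
    |fdiff 1 k₀ k₁ K t x| ≤ M * rho t x ^ (ζ - (2 * (k₀ : ℝ) + (k₁ : ℝ)))

lemma moves {ζ₁ ζ₂ : ℝ} (h₁ : ζ₁ < 0) (h₂ : ζ₂ < 0) {m : ℕ} {M₁ M₂ : ℝ}
    (hM₁ : 0 ≤ M₁) (hM₂ : 0 ≤ M₂) {K₁ K₂ : ℤ → ℤ → ℝ} (hK₁ : NB ζ₁ m M₁ K₁) (hK₂ : NB ζ₂ m M₂ K₂)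
    (n j : ℤ) (s : ℕ) (hs : (s : ℝ) ≤ rho n j / 4) (hs' : rho n j / 4 ≤ s + 1)
    (q : ℝ) (hq : q = rho n j / 8)
    (k₀ k₁ : ℕ) (hk : 2 * k₀ + k₁ ≤ m) :
    |AB s n j (fdiff 1 k₀ k₁ K₁) K₂ - AB s n j K₁ (fdiff 1 k₀ k₁ K₂)| ≤
      (k₀ + k₁ : ℕ) * (288 * (M₁ * M₂ * q ^ (ζ₁ + ζ₂ + 3 - (2 * (k₀ : ℝ) + k₁)))) := by
  have hr := rho_one n j
  have hq0 : 0 < q := by rw [hq]; linarith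
  have hf : ∀ a b : ℕ, 2 * a + b ≤ m → ∀ t x : ℤ, ((s : ℤ) ≤ |x| ∨ (s : ℤ) ^ 2 ≤ |t|) →
      |fdiff 1 a b K₁ t x| ≤ M₁ * q ^ (ζ₁ - (2 * (a : ℝ) + b)) := by
    intro a b hab t x h
    refine (hK₁ a b hab t x).trans ?_
    apply mul_le_mul_of_nonneg_left _ hM₁
    apply Real.rpow_le_rpow_of_nonpos hq0
    · have := rho_far h
      rw [hq]; linarith
    · have : (0:ℝ) ≤ 2 * (a : ℝ) + b := by positivity
      linarith
  have hg : ∀ a b : ℕ, 2 * a + b ≤ m → ∀ t x : ℤ, |t| ≤ (s : ℤ) ^ 2 + 1 → |x| ≤ (s : ℤ) + 1 →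
      |fdiff 1 a b K₂ (n - t) (j - x)| ≤ M₂ * q ^ (ζ₂ - (2 * (a : ℝ) + b)) := by
    intro a b hab t x ht hx
    refine (hK₂ a b hab _ _).trans ?_
    apply mul_le_mul_of_nonneg_left _ hM₂
    apply Real.rpow_le_rpow_of_nonpos hq0
    · have := geom n j s hs t x ht hx
      rw [hq]; linarith
    · have : (0:ℝ) ≤ 2 * (a : ℝ) + b := by positivity
      linarith
  have hs0 : (0:ℝ) ≤ s := s.cast_nonneg
  set E := 288 * (M₁ * M₂ * q ^ (ζ₁ + ζ₂ + 3 - (2 * (k₀ : ℝ) + k₁))) with hE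
  -- move time differences
  have mT : ∀ a b : ℕ, a + b = k₀ →
      |AB s n j (fdiff 1 k₀ k₁ K₁) K₂ - AB s n j (fdiff 1 a k₁ K₁) (fdiff 1 b 0 K₂)| ≤ b * E := by
    intro a b
    induction b generalizing a with
    | zero => intro h; simp at h; subst h; simp [fdiff]
    | succ b ih =>
      intro h
      have h1 := ih (a + 1) (by omega)
      rw [fdiff_T a] at h1
      have h2 := stepT s n j (fdiff 1 a k₁ K₁) (fdiff 1 b 0 K₂)
        (hf a k₁ (by omega)) (hg b 0 (by omega))
      rw [← fdiff_T b] at h2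
      have h3 : (2 * (s : ℝ) + 1) * (2 * (M₁ * q ^ (ζ₁ - (2 * (a : ℝ) + k₁)) *
          (M₂ * q ^ (ζ₂ - (2 * (b : ℝ) + (0 : ℕ)))))) ≤ E := by
        have e : q ^ (ζ₁ + ζ₂ + 3 - (2 * (k₀ : ℝ) + k₁)) =
            q * (q ^ (ζ₁ - (2 * (a : ℝ) + k₁)) * q ^ (ζ₂ - (2 * (b : ℝ) + (0 : ℕ)))) := by
          rw [← Real.rpow_add hq0]
          nth_rewrite 2 [← Real.rpow_one q]
          rw [← Real.rpow_add hq0]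
          congr 1
          rw [← h]; push_cast; ring
        rw [hE, e]
        set X := q ^ (ζ₁ - (2 * (a : ℝ) + k₁)) * q ^ (ζ₂ - (2 * (b : ℝ) + (0 : ℕ))) with hX
        have hX0 : 0 ≤ X := by positivity
        calc _ = (2 * (s : ℝ) + 1) * (2 * (M₁ * M₂ * X)) := by rw [hX]; ring
          _ ≤ (144 * q) * (2 * (M₁ * M₂ * X)) := by
              apply mul_le_mul_of_nonneg_right _ (by positivity)
              rw [hq]; linarith
          _ = _ := by ring
      have h4 := abs_sub_le (AB s n j (fdiff 1 k₀ k₁ K₁) K₂)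
        (AB s n j (fdT 1 (fdiff 1 a k₁ K₁)) (fdiff 1 b 0 K₂))
        (AB s n j (fdiff 1 a k₁ K₁) (fdiff 1 (b + 1) 0 K₂))
      push_cast
      linarith
  have mX : ∀ a b : ℕ, a + b = k₁ →
      |AB s n j (fdiff 1 0 k₁ K₁) (fdiff 1 k₀ 0 K₂) - AB s n j (fdiff 1 0 a K₁) (fdiff 1 k₀ b K₂)|
        ≤ b * E := by
    intro a b
    induction b generalizing a with
    | zero => intro h; simp at h; subst h; simp
    | succ b ih =>
      intro h
      have h1 := ih (a + 1) (by omega)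
      rw [fdiff_X 0 a] at h1
      have h2 := stepX s n j (fdiff 1 0 a K₁) (fdiff 1 k₀ b K₂)
        (hf 0 a (by omega)) (hg k₀ b (by omega))
      rw [← fdiff_X k₀ b] at h2
      have h3 : (2 * (s : ℝ) ^ 2 + 1) * (2 * (M₁ * q ^ (ζ₁ - (2 * ((0 : ℕ) : ℝ) + a)) *
          (M₂ * q ^ (ζ₂ - (2 * (k₀ : ℝ) + b))))) ≤ E := by
        have e : q ^ (ζ₁ + ζ₂ + 3 - (2 * (k₀ : ℝ) + k₁)) =
            q ^ 2 * (q ^ (ζ₁ - (2 * ((0 : ℕ) : ℝ) + a)) * q ^ (ζ₂ - (2 * (k₀ : ℝ) + b))) := by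
          rw [← Real.rpow_add hq0]
          rw [← Real.rpow_natCast q 2]
          rw [← Real.rpow_add hq0]
          congr 1
          rw [← h]; push_cast; ring
        rw [hE, e]
        set X := q ^ (ζ₁ - (2 * ((0 : ℕ) : ℝ) + a)) * q ^ (ζ₂ - (2 * (k₀ : ℝ) + b)) with hX
        have hX0 : 0 ≤ X := by positivity
        calc _ = (2 * (s : ℝ) ^ 2 + 1) * (2 * (M₁ * M₂ * X)) := by rw [hX]; ring
          _ ≤ (144 * q ^ 2) * (2 * (M₁ * M₂ * X)) := by
              apply mul_le_mul_of_nonneg_right _ (by positivity)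
              rw [hq]
              have h3 : (s : ℝ) ^ 2 ≤ (rho n j / 4) ^ 2 := by gcongr
              nlinarith
          _ = _ := by ring
      have h4 := abs_sub_le (AB s n j (fdiff 1 0 k₁ K₁) (fdiff 1 k₀ 0 K₂))
        (AB s n j (fdX 1 (fdiff 1 0 a K₁)) (fdiff 1 k₀ b K₂))
        (AB s n j (fdiff 1 0 a K₁) (fdiff 1 k₀ (b + 1) K₂))
      push_cast
      linarith
  have t1 := mT 0 k₀ (by omega)
  have t2 := mX 0 k₁ (by omega)
  have e0 : fdiff 1 0 0 K₁ = K₁ := by simp [fdiff]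
  rw [e0] at t2
  have h4 := abs_sub_le (AB s n j (fdiff 1 k₀ k₁ K₁) K₂)
        (AB s n j (fdiff 1 0 k₁ K₁) (fdiff 1 k₀ 0 K₂))
        (AB s n j K₁ (fdiff 1 k₀ k₁ K₂))
  push_cast
  linarith

open Classical in
lemma core {ζ₁ ζ₂ : ℝ} (h₁ : -3 < ζ₁) (h₂ : -3 < ζ₂) (hbar : ζ₁ + ζ₂ + 3 < 0) (m : ℕ) :
    ∃ C : ℝ, 0 < C ∧ ∀ K₁ K₂ : ℤ → ℤ → ℝ, ∀ T : Finset (ℤ × ℤ),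
      (∀ p : ℤ × ℤ, p ∉ T → K₂ p.1 p.2 = 0) → ∀ M₁ M₂ : ℝ, 0 ≤ M₁ → 0 ≤ M₂ →
      NB ζ₁ m M₁ K₁ → NB ζ₂ m M₂ K₂ → ∀ k₀ k₁ : ℕ, 2 * k₀ + k₁ ≤ m → ∀ n j : ℤ,
      |∑' p : ℤ × ℤ, fdiff 1 k₀ k₁ K₁ (n - p.1) (j - p.2) * K₂ p.1 p.2| ≤
        C * M₁ * M₂ * rho n j ^ (ζ₁ + ζ₂ + 3 - (2 * (k₀ : ℝ) + k₁)) := by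
  have hz1 : ζ₁ < 0 := by linarith
  have hz2 : ζ₂ < 0 := by linarith
  obtain ⟨C₁, hC₁, H₁⟩ := L1 h₁ hz1.le
  obtain ⟨C₂, hC₂, H₂⟩ := L1 h₂ hz2.le
  obtain ⟨C₃, hC₃, H₃⟩ := L2 (ζ := ζ₁ + ζ₂) (by linarith)
  refine ⟨(C₁ * 10 ^ (ζ₁ + 3) + 288 * m + (C₂ * 10 ^ (ζ₂ + 3) + 2 * C₃)) *
    8 ^ ((m : ℝ) - (ζ₁ + ζ₂ + 3)), by positivity, ?_⟩
  intro K₁ K₂ T hT M₁ M₂ hM₁ hM₂ hK₁ hK₂ k₀ k₁ hk n j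
  set κ : ℝ := 2 * (k₀ : ℝ) + k₁ with hκ
  have hκ0 : 0 ≤ κ := by positivity
  have hκm : κ ≤ m := by rw [hκ]; exact_mod_cast hk
  have hr := rho_one n j
  set s := ⌊rho n j / 4⌋₊ with hsdef
  have hs : (s : ℝ) ≤ rho n j / 4 := Nat.floor_le (by positivity)
  have hs' : rho n j / 4 ≤ (s : ℝ) + 1 := (Nat.lt_floor_add_one _).le
  obtain ⟨q, hq⟩ : ∃ q, q = rho n j / 8 := ⟨_, rfl⟩
  have hq0 : 0 < q := by rw [hq]; linarith
  have hsq : (s : ℝ) + 1 ≤ 10 * q := by rw [hq]; linarith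
  have hqs : q ≤ (s : ℝ) + 1 := by rw [hq]; linarith
  have hqs2 : q ≤ ((s : ℝ) + 1) / 2 := by rw [hq]; linarith
  have up : ∀ ζ : ℝ, -3 < ζ → ((s : ℝ) + 1) ^ (ζ + 3) ≤ 10 ^ (ζ + 3) * q ^ (ζ + 3) := by
    intro ζ h
    rw [← Real.mul_rpow (by norm_num) hq0.le]
    exact Real.rpow_le_rpow (by positivity) hsq (by linarith)
  set L := fdiff 1 k₀ k₁ K₁ with hL
  set F : ℤ × ℤ → ℝ := fun u => L u.1 u.2 * K₂ (n - u.1) (j - u.2) with hF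
  set Bx : Finset (ℤ × ℤ) := (Finset.Ico (-(s : ℤ) ^ 2) ((s : ℤ) ^ 2 + 1)) ×ˢ
    (Finset.Ico (-(s : ℤ)) ((s : ℤ) + 1)) with hBx
  have memB : ∀ u : ℤ × ℤ, u ∈ Bx ↔ inB s u.1 u.2 := by
    intro u
    rw [hBx, Finset.mem_product, Finset.mem_Ico, Finset.mem_Ico, inB, abs_le, abs_le,
      Int.lt_add_one_iff, Int.lt_add_one_iff]
  set U : Finset (ℤ × ℤ) := T.image (fun p => (n - p.1, j - p.2)) ∪ Bx with hU
  have e1 : ∑' p : ℤ × ℤ, L (n - p.1) (j - p.2) * K₂ p.1 p.2 = ∑ u ∈ U, F u := by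
    rw [← Equiv.tsum_eq (Equiv.subLeft ((n, j) : ℤ × ℤ))]
    rw [tsum_eq_sum (s := U)]
    · apply Finset.sum_congr rfl
      intro u _
      simp [hF]
    · intro u hu
      have : K₂ (n - u.1) (j - u.2) = 0 := by
        apply hT (n - u.1, j - u.2)
        intro hmem
        apply hu
        rw [hU, Finset.mem_union]
        left
        rw [Finset.mem_image]
        exact ⟨_, hmem, by simp⟩
      simp [this]
  have e2 : ∑ u ∈ U, F u = ∑ u ∈ U \ Bx, F u + AB s n j L K₂ := by
    rw [← Finset.sum_sdiff (s₁ := Bx) (s₂ := U) Finset.subset_union_right]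
    congr 1
    rw [hBx, Finset.sum_product]
    rfl
  set Z := M₁ * M₂ * q ^ (ζ₁ + ζ₂ + 3 - κ) with hZ
  have hZ0 : 0 ≤ Z := by positivity
  -- part I
  have pI : |AB s n j K₁ (fdiff 1 k₀ k₁ K₂)| ≤ C₁ * 10 ^ (ζ₁ + 3) * Z := by
    have e : AB s n j K₁ (fdiff 1 k₀ k₁ K₂) =
        ∑ u ∈ Bx, K₁ u.1 u.2 * fdiff 1 k₀ k₁ K₂ (n - u.1) (j - u.2) := by
      rw [hBx, Finset.sum_product]; rfl
    rw [e]
    refine (Finset.abs_sum_le_sum_abs _ _).trans ?_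
    calc _ ≤ ∑ u ∈ Bx, (M₁ * M₂ * q ^ (ζ₂ - κ)) * (if inB s u.1 u.2 then rho u.1 u.2 ^ ζ₁ else 0) := by
          apply Finset.sum_le_sum
          intro u hu
          have hu' := (memB u).1 hu
          rw [if_pos hu', abs_mul]
          have b1 : |K₁ u.1 u.2| ≤ M₁ * rho u.1 u.2 ^ ζ₁ := by
            have := hK₁ 0 0 (by omega) u.1 u.2
            simpa [fdiff] using this
          have b2 : |fdiff 1 k₀ k₁ K₂ (n - u.1) (j - u.2)| ≤ M₂ * q ^ (ζ₂ - κ) := by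
            refine (hK₂ k₀ k₁ hk _ _).trans ?_
            apply mul_le_mul_of_nonneg_left _ hM₂
            apply Real.rpow_le_rpow_of_nonpos hq0
            · have := geom n j s hs u.1 u.2 (by linarith [hu'.1]) (by linarith [hu'.2])
              rw [hq]; linarith
            · linarith
          have hp := rho_pos u.1 u.2
          calc _ ≤ (M₁ * rho u.1 u.2 ^ ζ₁) * (M₂ * q ^ (ζ₂ - κ)) :=
                mul_le_mul b1 b2 (abs_nonneg _) (by positivity)
            _ = _ := by ring
      _ = (M₁ * M₂ * q ^ (ζ₂ - κ)) * ∑ u ∈ Bx, (if inB s u.1 u.2 then rho u.1 u.2 ^ ζ₁ else 0) := by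
          rw [Finset.mul_sum]
      _ ≤ (M₁ * M₂ * q ^ (ζ₂ - κ)) * (C₁ * (10 ^ (ζ₁ + 3) * q ^ (ζ₁ + 3))) := by
          apply mul_le_mul_of_nonneg_left _ (by positivity)
          exact (H₁ s Bx).trans (mul_le_mul_of_nonneg_left (up ζ₁ h₁) hC₁.le)
      _ = _ := by
          rw [hZ, show ζ₁ + ζ₂ + 3 - κ = (ζ₂ - κ) + (ζ₁ + 3) by ring, Real.rpow_add hq0 (ζ₂ - κ)]; ring
  -- part II
  have pII := moves hz1 hz2 hM₁ hM₂ hK₁ hK₂ n j s hs hs' q hq k₀ k₁ hk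
  rw [← hκ, ← hZ] at pII
  have pII' : ((k₀ + k₁ : ℕ) : ℝ) * (288 * Z) ≤ 288 * m * Z := by
    have : ((k₀ + k₁ : ℕ) : ℝ) ≤ m := by exact_mod_cast (by omega : k₀ + k₁ ≤ m)
    nlinarith
  -- part III
  have pIII : |∑ u ∈ U \ Bx, F u| ≤ (C₂ * 10 ^ (ζ₂ + 3) + 2 * C₃) * Z := by
    refine (Finset.abs_sum_le_sum_abs _ _).trans ?_
    set V : ℤ × ℤ → ℝ := fun p => if inB s p.1 p.2 then rho p.1 p.2 ^ ζ₂ else 0 with hV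
    set W : ℤ × ℤ → ℝ := fun p => if inB s p.1 p.2 then 0 else rho p.1 p.2 ^ (ζ₁ + ζ₂) with hW
    have hW0 : ∀ p, 0 ≤ W p := by
      intro p; have := rho_pos p.1 p.2
      rw [hW]; dsimp only; split_ifs <;> positivity
    have pt : ∀ u ∈ U \ Bx, |F u| ≤ (M₁ * M₂ * q ^ (-κ)) *
        (q ^ ζ₁ * V (n - u.1, j - u.2) + W u + W (n - u.1, j - u.2)) := by
      intro u hu
      have huB : ¬ inB s u.1 u.2 := fun h => (Finset.mem_sdiff.1 hu).2 ((memB u).2 h)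
      have hp := rho_pos u.1 u.2
      have hv := rho_pos (n - u.1) (j - u.2)
      have far := hqs2.trans (rho_far' huB)
      have b1 : |L u.1 u.2| ≤ M₁ * (q ^ (-κ) * rho u.1 u.2 ^ ζ₁) := by
        refine (hK₁ k₀ k₁ hk _ _).trans ?_
        apply mul_le_mul_of_nonneg_left _ hM₁
        rw [← hκ, show ζ₁ - κ = -κ + ζ₁ by ring, Real.rpow_add hp]
        apply mul_le_mul_of_nonneg_right _ (by positivity)
        exact Real.rpow_le_rpow_of_nonpos hq0 far (by linarith)
      have b2 : |K₂ (n - u.1) (j - u.2)| ≤ M₂ * rho (n - u.1) (j - u.2) ^ ζ₂ := by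
        have := hK₂ 0 0 (by omega) (n - u.1) (j - u.2)
        simpa [fdiff] using this
      have b3 : rho u.1 u.2 ^ ζ₁ * rho (n - u.1) (j - u.2) ^ ζ₂ ≤
          q ^ ζ₁ * V (n - u.1, j - u.2) + W u + W (n - u.1, j - u.2) := by
        by_cases hvB : inB s (n - u.1) (j - u.2)
        · have : rho u.1 u.2 ^ ζ₁ * rho (n - u.1) (j - u.2) ^ ζ₂ ≤ q ^ ζ₁ * V (n - u.1, j - u.2) := by
            rw [hV]; dsimp only; rw [if_pos hvB]
            apply mul_le_mul_of_nonneg_right _ (by positivity)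
            exact Real.rpow_le_rpow_of_nonpos hq0 far hz1.le
          linarith [hW0 u, hW0 (n - u.1, j - u.2)]
        · have v0 : V (n - u.1, j - u.2) = 0 := by rw [hV]; dsimp only; rw [if_neg hvB]
          have w1 : W u = rho u.1 u.2 ^ (ζ₁ + ζ₂) := by rw [hW]; dsimp only; rw [if_neg huB]
          have w2 : W (n - u.1, j - u.2) = rho (n - u.1) (j - u.2) ^ (ζ₁ + ζ₂) := by
            rw [hW]; dsimp only; rw [if_neg hvB]
          rcases le_total (rho u.1 u.2) (rho (n - u.1) (j - u.2)) with h | h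
          · have : rho u.1 u.2 ^ ζ₁ * rho (n - u.1) (j - u.2) ^ ζ₂ ≤ W u := by
              rw [w1, Real.rpow_add hp]
              apply mul_le_mul_of_nonneg_left _ (by positivity)
              exact Real.rpow_le_rpow_of_nonpos hp h hz2.le
            rw [v0]; linarith [hW0 (n - u.1, j - u.2)]
          · have : rho u.1 u.2 ^ ζ₁ * rho (n - u.1) (j - u.2) ^ ζ₂ ≤ W (n - u.1, j - u.2) := by
              rw [w2, Real.rpow_add hv]
              apply mul_le_mul_of_nonneg_right _ (by positivity)
              exact Real.rpow_le_rpow_of_nonpos hv h hz1.le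
            rw [v0]; linarith [hW0 u]
      rw [hF]; dsimp only; rw [abs_mul]
      calc _ ≤ (M₁ * (q ^ (-κ) * rho u.1 u.2 ^ ζ₁)) * (M₂ * rho (n - u.1) (j - u.2) ^ ζ₂) :=
            mul_le_mul b1 b2 (abs_nonneg _) (by positivity)
        _ = (M₁ * M₂ * q ^ (-κ)) * (rho u.1 u.2 ^ ζ₁ * rho (n - u.1) (j - u.2) ^ ζ₂) := by ring
        _ ≤ _ := mul_le_mul_of_nonneg_left b3 (by positivity)
    refine (Finset.sum_le_sum pt).trans ?_
    rw [← Finset.mul_sum, Finset.sum_add_distrib, Finset.sum_add_distrib, ← Finset.mul_sum]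
    have inj : Set.InjOn (fun u : ℤ × ℤ => (n - u.1, j - u.2)) ((U \ Bx : Finset (ℤ × ℤ)) : Set (ℤ × ℤ)) := by
      intro a _ b _ h
      simp only [Prod.mk.injEq, sub_right_inj] at h
      exact Prod.ext h.1 h.2
    have sV : ∑ u ∈ U \ Bx, V (n - u.1, j - u.2) ≤ C₂ * (10 ^ (ζ₂ + 3) * q ^ (ζ₂ + 3)) := by
      rw [← Finset.sum_image (f := V) inj]
      exact (H₂ s _).trans (mul_le_mul_of_nonneg_left (up ζ₂ h₂) hC₂.le)
    have dn : ((s : ℝ) + 1) ^ (ζ₁ + ζ₂ + 3) ≤ q ^ (ζ₁ + ζ₂ + 3) :=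
      Real.rpow_le_rpow_of_nonpos hq0 hqs hbar.le
    have sW1 : ∑ u ∈ U \ Bx, W u ≤ C₃ * q ^ (ζ₁ + ζ₂ + 3) :=
      (H₃ s _).trans (mul_le_mul_of_nonneg_left dn hC₃.le)
    have sW2 : ∑ u ∈ U \ Bx, W (n - u.1, j - u.2) ≤ C₃ * q ^ (ζ₁ + ζ₂ + 3) := by
      rw [← Finset.sum_image (f := W) inj]
      exact (H₃ s _).trans (mul_le_mul_of_nonneg_left dn hC₃.le)
    have sV' := mul_le_mul_of_nonneg_left sV (Real.rpow_nonneg hq0.le ζ₁)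
    calc _ ≤ (M₁ * M₂ * q ^ (-κ)) * (q ^ ζ₁ * (C₂ * (10 ^ (ζ₂ + 3) * q ^ (ζ₂ + 3))) +
            C₃ * q ^ (ζ₁ + ζ₂ + 3) + C₃ * q ^ (ζ₁ + ζ₂ + 3)) := by
          apply mul_le_mul_of_nonneg_left _ (by positivity)
          linarith
      _ = _ := by
          have ee : q ^ (ζ₁ + ζ₂ + 3) = q ^ ζ₁ * q ^ (ζ₂ + 3) := by
            rw [← Real.rpow_add hq0]; congr 1; ring
          rw [hZ, show ζ₁ + ζ₂ + 3 - κ = -κ + (ζ₁ + ζ₂ + 3) by ring, Real.rpow_add hq0 (-κ), ee]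
          ring
  -- conclusion
  have hZle : Z ≤ 8 ^ ((m : ℝ) - (ζ₁ + ζ₂ + 3)) * (M₁ * M₂ * rho n j ^ (ζ₁ + ζ₂ + 3 - κ)) := by
    have e : q ^ (ζ₁ + ζ₂ + 3 - κ) = rho n j ^ (ζ₁ + ζ₂ + 3 - κ) * 8 ^ (κ - (ζ₁ + ζ₂ + 3)) := by
      rw [hq, Real.div_rpow (by positivity) (by norm_num), div_eq_mul_inv,
        ← Real.rpow_neg (by norm_num)]
      congr 2; ring
    have l : (8:ℝ) ^ (κ - (ζ₁ + ζ₂ + 3)) ≤ 8 ^ ((m : ℝ) - (ζ₁ + ζ₂ + 3)) :=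
      Real.rpow_le_rpow_of_exponent_le (by norm_num) (by linarith)
    rw [hZ, e]
    calc _ = (M₁ * M₂ * rho n j ^ (ζ₁ + ζ₂ + 3 - κ)) * 8 ^ (κ - (ζ₁ + ζ₂ + 3)) := by ring
      _ ≤ (M₁ * M₂ * rho n j ^ (ζ₁ + ζ₂ + 3 - κ)) * 8 ^ ((m : ℝ) - (ζ₁ + ζ₂ + 3)) :=
          mul_le_mul_of_nonneg_left l (by positivity)
      _ = _ := by ring
  rw [e1, e2]
  have t1 := abs_add_le (∑ u ∈ U \ Bx, F u) (AB s n j L K₂)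
  have t2 := abs_sub_le (AB s n j L K₂) (AB s n j K₁ (fdiff 1 k₀ k₁ K₂)) 0
  rw [sub_zero, sub_zero] at t2
  calc _ ≤ (C₁ * 10 ^ (ζ₁ + 3) + 288 * m + (C₂ * 10 ^ (ζ₂ + 3) + 2 * C₃)) * Z := by linarith
    _ ≤ (C₁ * 10 ^ (ζ₁ + 3) + 288 * m + (C₂ * 10 ^ (ζ₂ + 3) + 2 * C₃)) *
        (8 ^ ((m : ℝ) - (ζ₁ + ζ₂ + 3)) * (M₁ * M₂ * rho n j ^ (ζ₁ + ζ₂ + 3 - κ))) :=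
        mul_le_mul_of_nonneg_left hZle (by positivity)
    _ = _ := by ring

lemma fdX_scale (ε : ℝ) (c : ℝ) (f : ℤ → ℤ → ℝ) :
    fdX ε (fun t x => c * f t x) = fun t x => (c / ε) * fdX 1 f t x := by
  funext t x; unfold fdX; ring

lemma fdT_scale (ε : ℝ) (c : ℝ) (f : ℤ → ℤ → ℝ) :
    fdT ε (fun t x => c * f t x) = fun t x => (c / ε ^ 2) * fdT 1 f t x := by
  funext t x; unfold fdT; ring

lemma fdiff_scale (ε : ℝ) (k₀ k₁ : ℕ) (c : ℝ) (f : ℤ → ℤ → ℝ) :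
    fdiff ε k₀ k₁ (fun t x => c * f t x) =
      fun t x => (c / ε ^ (2 * k₀ + k₁)) * fdiff 1 k₀ k₁ f t x := by
  have hX : ∀ k, (fdX ε)^[k] (fun t x => c * f t x) =
      fun t x => (c / ε ^ k) * (fdX 1)^[k] f t x := by
    intro k
    induction k with
    | zero => simp
    | succ k ih =>
      rw [Function.iterate_succ_apply', Function.iterate_succ_apply', ih, fdX_scale]
      funext t x; rw [pow_succ, div_div]
  unfold fdiff
  induction k₀ with
  | zero => simp [hX]
  | succ k ih =>
    rw [Function.iterate_succ_apply', Function.iterate_succ_apply', ih, fdT_scale]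
    funext t x
    rw [div_div, ← pow_add]
    congr 3; ring

lemma snormE_eq {ε : ℝ} (hε : 0 < ε) (t x : ℤ) : snormE ε t x = ε * rho t x := by
  unfold snormE snorm rho
  rw [abs_mul, abs_mul, Real.sqrt_mul (abs_nonneg _), abs_of_pos hε, abs_of_pos (by positivity : 0 < ε ^ 2),
    Real.sqrt_sq hε.le, mul_max_of_nonneg _ _ hε.le, mul_max_of_nonneg _ _ hε.le, mul_one]

lemma toNB {ε : ℝ} (hε : 0 < ε) {ζ : ℝ} {m : ℕ} {M : ℝ} {K : ℤ → ℤ → ℝ}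
    (h : SingBound ε ζ m M K) : NB ζ m (M * ε ^ ζ) K := by
  intro k₀ k₁ hk t x
  have h1 := h k₀ k₁ hk t x
  have e := fdiff_scale ε k₀ k₁ 1 K
  simp only [one_mul] at e
  change |fdiff ε k₀ k₁ (fun t x => K t x) t x| ≤ _ at h1
  rw [e, snormE_eq hε, Real.mul_rpow hε.le (rho_pos t x).le, abs_mul,
    abs_of_pos (by positivity), Real.rpow_sub hε] at h1
  have e3 : ε ^ (2 * (k₀ : ℝ) + k₁) = ε ^ (2 * k₀ + k₁) := by
    rw [← Real.rpow_natCast]; push_cast; rfl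
  rw [e3] at h1
  have hp : 0 < ε ^ (2 * k₀ + k₁) := by positivity
  have := mul_le_mul_of_nonneg_left h1 hp.le
  calc _ = ε ^ (2 * k₀ + k₁) * (1 / ε ^ (2 * k₀ + k₁) * |fdiff 1 k₀ k₁ K t x|) := by
        field_simp
    _ ≤ _ := this
    _ = _ := by field_simp

lemma fdiff_conv (K₁ K₂ : ℤ → ℤ → ℝ) (T : Finset (ℤ × ℤ))
    (hT : ∀ p : ℤ × ℤ, p ∉ T → K₂ p.1 p.2 = 0) (k₀ k₁ : ℕ) :
    fdiff 1 k₀ k₁ (fun n j => ∑' p : ℤ × ℤ, K₁ (n - p.1) (j - p.2) * K₂ p.1 p.2) =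
      fun n j => ∑' p : ℤ × ℤ, fdiff 1 k₀ k₁ K₁ (n - p.1) (j - p.2) * K₂ p.1 p.2 := by
  have fin : ∀ (L : ℤ → ℤ → ℝ), (fun n j => ∑' p : ℤ × ℤ, L (n - p.1) (j - p.2) * K₂ p.1 p.2) =
      fun n j => ∑ p ∈ T, L (n - p.1) (j - p.2) * K₂ p.1 p.2 := by
    intro L; funext n j
    apply tsum_eq_sum
    intro p hp; rw [hT p hp, mul_zero]
  rw [fin, fin]
  induction k₀ with
  | zero =>
    induction k₁ with
    | zero => simp [fdiff]
    | succ k ih =>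
      rw [fdiff_X, ih, fdiff_X]
      funext n j
      unfold fdX
      rw [← Finset.sum_sub_distrib, div_one]
      apply Finset.sum_congr rfl
      intro p _
      rw [show j + 1 - p.2 = j - p.2 + 1 by ring]; ring
  | succ k ih =>
    rw [fdiff_T, ih, fdiff_T]
    funext n j
    unfold fdT
    rw [← Finset.sum_sub_distrib, one_pow, div_one]
    apply Finset.sum_congr rfl
    intro p _
    rw [show n + 1 - p.1 = n - p.1 + 1 by ring]; ring

lemma finSupp {ε R : ℝ} (hε : 0 < ε) {K : ℤ → ℤ → ℝ} (h : SuppIn ε R K) :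
    ∃ T : Finset (ℤ × ℤ), ∀ p : ℤ × ℤ, p ∉ T → K p.1 p.2 = 0 := by
  obtain ⟨A, hA⟩ := exists_nat_gt (max (R / ε) ((R / ε) ^ 2))
  refine ⟨Finset.Icc (-(A : ℤ)) A ×ˢ Finset.Icc (-(A : ℤ)) A, fun p hp => ?_⟩
  apply h
  by_contra hc
  push Not at hc
  apply hp
  unfold snorm at hc
  have c1 := (le_max_left _ _).trans hc
  have c2 := (le_max_right _ _).trans hc
  rw [abs_mul, abs_of_pos hε] at c2
  rw [abs_mul, Real.sqrt_mul (abs_nonneg _), abs_of_pos (by positivity : 0 < ε ^ 2),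
    Real.sqrt_sq hε.le] at c1
  have d2 : |(p.2 : ℝ)| ≤ R / ε := by rw [le_div_iff₀ hε]; linarith
  have d1 : Real.sqrt |(p.1 : ℝ)| ≤ R / ε := by rw [le_div_iff₀ hε]; linarith
  rw [Real.sqrt_le_iff] at d1
  have f1 : |(p.1 : ℝ)| ≤ A := (d1.2.trans (le_max_right _ _)).trans hA.le
  have f2 : |(p.2 : ℝ)| ≤ A := (d2.trans (le_max_left _ _)).trans hA.le
  have g1 : |p.1| ≤ (A : ℤ) := by exact_mod_cast f1
  have g2 : |p.2| ≤ (A : ℤ) := by exact_mod_cast f2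
  rw [Finset.mem_product, Finset.mem_Icc, Finset.mem_Icc]
  exact ⟨abs_le.1 g1, abs_le.1 g2⟩

/-- convolution of discrete singular kernels of orders
`ζ₁, ζ₂ > -3` with `ζ̄ = ζ₁ + ζ₂ + 3 < 0` is a discrete singular kernel of
order `ζ̄`, uniformly in `ε`. -/
theorem statement12 (ζ₁ ζ₂ : ℝ) (h₁ : -3 < ζ₁) (h₂ : -3 < ζ₂)
    (hbar : ζ₁ + ζ₂ + 3 < 0) (m : ℕ) (R : ℝ) (hR : 0 < R) :
    ∃ C : ℝ, 0 < C ∧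
      ∀ (N : ℕ) (ε : ℝ), ε = ((2 : ℝ) ^ N)⁻¹ → 4 * (m : ℝ) * ε < 1 →
      ∀ K₁ K₂ : ℤ → ℤ → ℝ, SuppIn ε R K₁ → SuppIn ε R K₂ →
      ∀ M₁ M₂ : ℝ, 0 ≤ M₁ → 0 ≤ M₂ →
        SingBound ε ζ₁ m M₁ K₁ → SingBound ε ζ₂ m M₂ K₂ →
        SingBound ε (ζ₁ + ζ₂ + 3) m (C * M₁ * M₂) (dconv ε K₁ K₂) := by
  obtain ⟨C, hC, H⟩ := core h₁ h₂ hbar m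
  refine ⟨C, hC, ?_⟩
  intro N ε hεN _ K₁ K₂ _ hS₂ M₁ M₂ hM₁ hM₂ hB₁ hB₂ k₀ k₁ hk n j
  have hε : 0 < ε := by rw [hεN]; positivity
  obtain ⟨T, hT⟩ := finSupp hε hS₂
  have h := H K₁ K₂ T hT (M₁ * ε ^ ζ₁) (M₂ * ε ^ ζ₂) (by positivity) (by positivity)
    (toNB hε hB₁) (toNB hε hB₂) k₀ k₁ hk n j
  unfold dconv
  rw [fdiff_scale, fdiff_conv K₁ K₂ T hT, snormE_eq hε,
    Real.mul_rpow hε.le (rho_pos n j).le, abs_mul, abs_of_pos (by positivity)]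
  have e : ε ^ (ζ₁ + ζ₂ + 3 - (2 * (k₀ : ℝ) + k₁)) =
      ε ^ 3 / ε ^ (2 * k₀ + k₁) * (ε ^ ζ₁ * ε ^ ζ₂) := by
    rw [Real.rpow_sub hε, Real.rpow_add hε, Real.rpow_add hε, ← Real.rpow_natCast ε 3,
      ← Real.rpow_natCast ε (2 * k₀ + k₁)]
    push_cast; ring
  rw [e]
  refine (mul_le_mul_of_nonneg_left h (by positivity)).trans ?_
  apply le_of_eq; ring
end
end

section
/- Let ζ₁, ζ₂ > −3 with ζ̄ := ζ₁ + ζ₂ + 3 ∈ (0,∞) \ ℕ, let m ∈ ℕ, set m̄ := m ∨ (⌊ζ̄⌋ + 2), and let R > 0. For ε = 2^{−N} and K₁, K₂ : ε²ℤ × εℤ → ℝ supported in the ball of radius R around the origin, define K̄^ε(z) := (K₁ ∗_ε K₂)(z) − Σ_{k=(k₀,k₁), |k|_s < ζ̄} ((z)_{ε,k} / (k₀! k₁!)) D̄_ε^k (K₁ ∗_ε K₂)(0), where for z = (t,x) one sets (z)_{ε,k} := Π_{0 ≤ j < k₀} (t − ε² j) · Π_{0 ≤ j < k₁} (x − ε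 j). Then there is a constant C, depending only on m, ζ₁, ζ₂ and R (and not on ε), such that for all ε with 4mε < 1: ⦀K̄^ε⦀_{ζ̄; m}^{(ε)} ≤ C ⦀K₁⦀_{ζ₁; m̄}^{(ε)} ⦀K₂⦀_{ζ₂; m̄}^{(ε)}. -/
open Real

noncomputable section

/-- The discrete monomial `(z)_{ε,k}` for `z = (ε² m, ε j)` and `k = (k₀,k₁)`. -/
def dmonomial (ε : ℝ) (k₀ k₁ : ℕ) (m j : ℤ) : ℝ :=
  (∏ i ∈ Finset.range k₀, (ε ^ 2 * (m : ℝ) - ε ^ 2 * (i : ℝ))) *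
    ∏ i ∈ Finset.range k₁, (ε * (j : ℝ) - ε * (i : ℝ))

/-- The convolution with its discrete Taylor polynomial at the origin (up to
parabolic degree `< ζ̄`) subtracted. -/
def dconvTaylor (ε : ℝ) (zbar : ℝ) (K₁ K₂ : ℤ → ℤ → ℝ) : ℤ → ℤ → ℝ :=
  fun m j => dconv ε K₁ K₂ m j -
    ∑ k₀ ∈ Finset.range (Nat.ceil zbar), ∑ k₁ ∈ Finset.range (Nat.ceil zbar),
      if (2 * (k₀ : ℝ) + (k₁ : ℝ)) < zbar then
        dmonomial ε k₀ k₁ m j / ((k₀.factorial : ℝ) * (k₁.factorial : ℝ)) *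
          fdiff ε k₀ k₁ (dconv ε K₁ K₂) 0 0
      else 0

def dT (f : ℤ → ℤ → ℝ) : ℤ → ℤ → ℝ := fun m j => f (m + 1) j - f m j
def dX (f : ℤ → ℤ → ℝ) : ℤ → ℤ → ℝ := fun m j => f m (j + 1) - f m j
def dd (k₀ k₁ : ℕ) (f : ℤ → ℤ → ℝ) : ℤ → ℤ → ℝ := dT^[k₀] (dX^[k₁] f)
def nn (m j : ℤ) : ℝ := max (max (√|(m : ℝ)|) |(j : ℝ)|) 1

lemma one_le_nn (m j : ℤ) : 1 ≤ nn m j := le_max_right _ _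
lemma nn_pos (m j : ℤ) : 0 < nn m j := lt_of_lt_of_le one_pos (one_le_nn m j)
lemma sqrt_le_nn (m j : ℤ) : √|(m : ℝ)| ≤ nn m j := le_trans (le_max_left _ _) (le_max_left _ _)
lemma abs_le_nn (m j : ℤ) : |(j : ℝ)| ≤ nn m j := le_trans (le_max_right _ _) (le_max_left _ _)
lemma abs_le_nn_sq (m j : ℤ) : |(m : ℝ)| ≤ nn m j ^ 2 := by
  have := sqrt_le_nn m j
  rw [Real.sqrt_le_iff] at this
  exact this.2

lemma nn_add (a b c d : ℤ) : nn (a + c) (b + d) ≤ nn a b + nn c d := by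
  have h1 : √|((a + c : ℤ) : ℝ)| ≤ nn a b + nn c d := by
    refine le_trans ?_ (add_le_add (sqrt_le_nn a b) (sqrt_le_nn c d))
    rw [Real.sqrt_le_iff]
    refine ⟨by positivity, ?_⟩
    push_cast
    have e1 := Real.sq_sqrt (abs_nonneg (a : ℝ))
    have e2 := Real.sq_sqrt (abs_nonneg (c : ℝ))
    have e3 := abs_add_le (a : ℝ) c
    have e4 := mul_nonneg (Real.sqrt_nonneg |(a : ℝ)|) (Real.sqrt_nonneg |(c : ℝ)|)
    nlinarith
  have h2 : |((b + d : ℤ) : ℝ)| ≤ nn a b + nn c d := by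
    push_cast
    exact (abs_add_le _ _).trans (add_le_add (abs_le_nn a b) (abs_le_nn c d))
  have := one_le_nn a b
  have := one_le_nn c d
  exact max_le (max_le h1 h2) (by linarith)

lemma nn_neg (a b : ℤ) : nn (-a) (-b) = nn a b := by simp [nn]

lemma nn_tri (a b c d : ℤ) : nn a b ≤ nn (a - c) (b - d) + nn c d := by
  have := nn_add (a - c) (b - d) c d
  simpa using this

lemma nn_tri' (a b c d : ℤ) : nn c d ≤ nn (a - c) (b - d) + nn a b := by
  have := nn_add (-(a - c)) (-(b - d)) a b
  rw [nn_neg] at this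
  simpa using this

lemma nn_nat_le (a b n : ℕ) (h : 2 * a + b ≤ n) : nn a b ≤ n + 1 := by
  have h' : (2 * a + b : ℝ) ≤ n := by exact_mod_cast h
  have ha : (0:ℝ) ≤ a := by positivity
  have hb : (0:ℝ) ≤ b := by positivity
  refine max_le (max_le ?_ ?_) (by linarith)
  · rw [Real.sqrt_le_iff]
    refine ⟨by linarith, ?_⟩
    simp only [Int.cast_natCast, abs_of_nonneg ha]
    nlinarith
  · simp only [Int.cast_natCast, abs_of_nonneg hb]; linarith

lemma rpow_cmp {c x y : ℝ} (hc : 1 ≤ c) (hx : 0 < x) (hy : 0 < y) (h1 : x ≤ c * y) (h2 : y ≤ c * x)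
    (s : ℝ) : x ^ s ≤ c ^ |s| * y ^ s := by
  have hc0 : 0 < c := by linarith
  rcases le_total 0 s with hs | hs
  · rw [abs_of_nonneg hs, ← Real.mul_rpow hc0.le hy.le]
    exact Real.rpow_le_rpow hx.le h1 hs
  · rw [abs_of_nonpos hs, Real.rpow_neg hc0.le, ← Real.inv_rpow hc0.le, ← Real.mul_rpow (by positivity) hy.le]
    apply Real.rpow_le_rpow_of_nonpos (by positivity) _ hs
    rw [inv_mul_le_iff₀ hc0]; exact h2

/-! ### algebra of dd -/
lemma dT_dX_comm : Function.Commute dT dX := by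
  intro f; funext m j; simp only [dT, dX]; ring

lemma dd_zero (f) : dd 0 0 f = f := rfl
lemma dd_succX (k₀ k₁ : ℕ) (f) : dd k₀ (k₁ + 1) f = dd k₀ k₁ (dX f) := rfl
lemma dd_succT (k₀ k₁ : ℕ) (f) : dd (k₀ + 1) k₁ f = dd k₀ k₁ (dT f) := by
  unfold dd
  rw [Function.iterate_succ_apply, (dT_dX_comm.iterate_right k₁).eq]
lemma dd_succT' (k₀ k₁ : ℕ) (f) : dd (k₀ + 1) k₁ f = dT (dd k₀ k₁ f) := by
  unfold dd; rw [Function.iterate_succ_apply']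
lemma dd_succX' (k₀ k₁ : ℕ) (f) : dd k₀ (k₁ + 1) f = dX (dd k₀ k₁ f) := by
  unfold dd
  rw [Function.iterate_succ_apply', (dT_dX_comm.iterate_left k₀).eq]

/-- induction principle -/
lemma dd_ind {P : ℕ → ℕ → Prop} (h0 : P 0 0) (hX : ∀ k₀ k₁, P k₀ k₁ → P k₀ (k₁ + 1))
    (hT : ∀ k₀ k₁, P k₀ k₁ → P (k₀ + 1) k₁) (k₀ k₁ : ℕ) : P k₀ k₁ := by
  induction k₀ with
  | zero => induction k₁ with
    | zero => exact h0
    | succ k ih => exact hX _ _ ih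
  | succ k ih => exact hT _ _ ih

lemma dd_add (k₀ k₁ : ℕ) (f g : ℤ → ℤ → ℝ) : dd k₀ k₁ (f + g) = dd k₀ k₁ f + dd k₀ k₁ g := by
  refine dd_ind (P := fun k₀ k₁ => dd k₀ k₁ (f + g) = dd k₀ k₁ f + dd k₀ k₁ g) rfl ?_ ?_ k₀ k₁
  · intro k₀ k₁ h
    rw [dd_succX', h, dd_succX', dd_succX']; funext m j; simp only [dX, Pi.add_apply]; ring
  · intro k₀ k₁ h
    rw [dd_succT', h, dd_succT', dd_succT']; funext m j; simp only [dT, Pi.add_apply]; ring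

lemma dd_smul (k₀ k₁ : ℕ) (c : ℝ) (f : ℤ → ℤ → ℝ) : dd k₀ k₁ (c • f) = c • dd k₀ k₁ f := by
  refine dd_ind (P := fun k₀ k₁ => dd k₀ k₁ (c • f) = c • dd k₀ k₁ f) rfl ?_ ?_ k₀ k₁
  · intro k₀ k₁ h
    rw [dd_succX', h, dd_succX']; funext m j; simp only [dX, Pi.smul_apply, smul_eq_mul]; ring
  · intro k₀ k₁ h
    rw [dd_succT', h, dd_succT']; funext m j; simp only [dT, Pi.smul_apply, smul_eq_mul]; ring

lemma dd_sub (k₀ k₁ : ℕ) (f g : ℤ → ℤ → ℝ) : dd k₀ k₁ (f - g) = dd k₀ k₁ f - dd k₀ k₁ g := by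
  have : f - g = f + (-1 : ℝ) • g := by funext m j; simp [sub_eq_add_neg]
  rw [this, dd_add, dd_smul]; funext m j; simp [sub_eq_add_neg]

lemma dd_sum {ι : Type*} (k₀ k₁ : ℕ) (s : Finset ι) (f : ι → ℤ → ℤ → ℝ) :
    dd k₀ k₁ (∑ i ∈ s, f i) = ∑ i ∈ s, dd k₀ k₁ (f i) := by
  classical
  induction s using Finset.induction_on with
  | empty =>
    simp only [Finset.sum_empty]
    have := dd_smul k₀ k₁ 0 0
    simpa using this
  | insert a s ha ih => rw [Finset.sum_insert ha, Finset.sum_insert ha, dd_add, ih]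

def sh (a b : ℤ) (f : ℤ → ℤ → ℝ) : ℤ → ℤ → ℝ := fun m j => f (m + a) (j + b)

lemma dd_sh (k₀ k₁ : ℕ) (a b : ℤ) (f) : dd k₀ k₁ (sh a b f) = sh a b (dd k₀ k₁ f) := by
  refine dd_ind (P := fun k₀ k₁ => dd k₀ k₁ (sh a b f) = sh a b (dd k₀ k₁ f)) rfl ?_ ?_ k₀ k₁
  · intro k₀ k₁ h
    rw [dd_succX', h, dd_succX']; funext m j; simp only [dX, sh]; rw [add_right_comm]
  · intro k₀ k₁ h
    rw [dd_succT', h, dd_succT']; funext m j; simp only [dT, sh]; rw [add_right_comm]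

lemma dd_vanish (k₀ k₁ : ℕ) : ∀ (f : ℤ → ℤ → ℝ) (m j : ℤ),
    (∀ a b : ℕ, a ≤ k₀ → b ≤ k₁ → f (m + a) (j + b) = 0) → dd k₀ k₁ f m j = 0 := by
  refine dd_ind (P := fun k₀ k₁ => ∀ (f : ℤ → ℤ → ℝ) (m j : ℤ),
    (∀ a b : ℕ, a ≤ k₀ → b ≤ k₁ → f (m + a) (j + b) = 0) → dd k₀ k₁ f m j = 0) ?_ ?_ ?_ k₀ k₁
  · intro f m j h; simpa [dd_zero] using h 0 0 le_rfl le_rfl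
  · intro k₀ k₁ ih f m j h
    rw [dd_succX]
    apply ih
    intro a b ha hb
    have h1 := h a (b+1) ha (by omega)
    have h2 := h a b ha (by omega)
    simp only [dX]; push_cast at h1; rw [add_assoc, h1, h2]; simp
  · intro k₀ k₁ ih f m j h
    rw [dd_succT]
    apply ih
    intro a b ha hb
    have h1 := h (a+1) b (by omega) hb
    have h2 := h a b (by omega) hb
    simp only [dT]; push_cast at h1; rw [add_assoc, h1, h2]; simp

/-! ### separable functions -/
def d1 (f : ℤ → ℝ) : ℤ → ℝ := fun m => f (m + 1) - f m

lemma dd_sep (k₀ k₁ : ℕ) (f g : ℤ → ℝ) :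
    dd k₀ k₁ (fun m j => f m * g j) = fun m j => (d1^[k₀] f) m * (d1^[k₁] g) j := by
  refine dd_ind (P := fun k₀ k₁ => dd k₀ k₁ (fun m j => f m * g j) = fun m j => (d1^[k₀] f) m * (d1^[k₁] g) j) rfl ?_ ?_ k₀ k₁
  · intro k₀ k₁ h
    rw [dd_succX', h]; funext m j
    rw [Function.iterate_succ_apply']; simp only [dX, d1]; ring
  · intro k₀ k₁ h
    rw [dd_succT', h]; funext m j
    rw [Function.iterate_succ_apply']; simp only [dT, d1]; ring

/-! ### singular bounds -/
def SB (ζ : ℝ) (n : ℕ) (M : ℝ) (f : ℤ → ℤ → ℝ) : Prop :=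
  ∀ k₀ k₁ : ℕ, 2 * k₀ + k₁ ≤ n → ∀ m j : ℤ,
    |dd k₀ k₁ f m j| ≤ M * nn m j ^ (ζ - (2 * (k₀ : ℝ) + (k₁ : ℝ)))

lemma SB.mono {ζ M f} {n n' : ℕ} (h : SB ζ n M f) (hn : n' ≤ n) : SB ζ n' M f :=
  fun k₀ k₁ hk => h k₀ k₁ (hk.trans hn)

lemma SB.dX {ζ M f} {n : ℕ} (h : SB ζ (n + 1) M f) : SB (ζ - 1) n M (dX f) := by
  intro k₀ k₁ hk m j
  have := h k₀ (k₁ + 1) (by omega) m j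
  rw [dd_succX] at this
  convert this using 3
  push_cast; ring

lemma SB.dT {ζ M f} {n : ℕ} (h : SB ζ (n + 2) M f) : SB (ζ - 2) n M (dT f) := by
  intro k₀ k₁ hk m j
  have := h (k₀ + 1) k₁ (by omega) m j
  rw [dd_succT] at this
  convert this using 3
  push_cast; ring

lemma SB.sh {ζ M f} {n : ℕ} (hM : 0 ≤ M) (h : SB ζ n M f) (a b : ℤ) (hab : nn a b ≤ 1) :
    SB ζ n ((2:ℝ) ^ (|ζ| + n) * M) (sh a b f) := by
  intro k₀ k₁ hk m j
  rw [dd_sh]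
  refine (h k₀ k₁ hk _ _).trans ?_
  have h1 := nn_add m j a b
  have h2 := nn_add (m + a) (j + b) (-a) (-b)
  rw [nn_neg] at h2
  have h2' : nn m j ≤ nn (m + a) (j + b) + nn a b := by simpa using h2
  have := one_le_nn m j
  have := one_le_nn (m+a) (j+b)
  have key := rpow_cmp (c := 2) (by norm_num) (nn_pos (m+a) (j+b)) (nn_pos m j) (by linarith) (by linarith)
    (ζ - (2 * (k₀ : ℝ) + (k₁ : ℝ)))
  have hk' : (2 * (k₀ : ℝ) + (k₁ : ℝ)) ≤ n := by exact_mod_cast hk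
  have h3 : |ζ - (2 * (k₀ : ℝ) + (k₁ : ℝ))| ≤ |ζ| + n := by
    refine (abs_sub _ _).trans ?_
    rw [abs_of_nonneg (a := 2 * (k₀ : ℝ) + (k₁ : ℝ)) (by positivity)]
    linarith
  have h4 : (2:ℝ) ^ |ζ - (2 * (k₀ : ℝ) + (k₁ : ℝ))| ≤ 2 ^ (|ζ| + n) :=
    Real.rpow_le_rpow_of_exponent_le (by norm_num) h3
  have h5 : 0 ≤ nn m j ^ (ζ - (2 * (k₀ : ℝ) + (k₁ : ℝ))) := Real.rpow_nonneg (nn_pos _ _).le _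
  calc M * nn (m+a) (j+b) ^ (ζ - (2 * (k₀ : ℝ) + (k₁ : ℝ)))
      ≤ M * (2 ^ (|ζ| + n) * nn m j ^ (ζ - (2 * (k₀ : ℝ) + (k₁ : ℝ)))) := by gcongr; exact key.trans (by gcongr)
    _ = _ := by ring

lemma prod_bound (k₀ k₁ : ℕ) : ∀ α β : ℝ, ∃ C : ℝ, 0 ≤ C ∧ ∀ (f g : ℤ → ℤ → ℝ) (A B : ℝ), 0 ≤ A → 0 ≤ B →
    SB α (2 * k₀ + k₁) A f → SB β (2 * k₀ + k₁) B g → ∀ m j,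
    |dd k₀ k₁ (f * g) m j| ≤ C * (A * B) * nn m j ^ (α + β - (2 * (k₀ : ℝ) + (k₁ : ℝ))) := by
  refine dd_ind (P := fun k₀ k₁ => ∀ α β : ℝ, ∃ C : ℝ, 0 ≤ C ∧ ∀ (f g : ℤ → ℤ → ℝ) (A B : ℝ), 0 ≤ A → 0 ≤ B →
    SB α (2 * k₀ + k₁) A f → SB β (2 * k₀ + k₁) B g → ∀ m j,
    |dd k₀ k₁ (f * g) m j| ≤ C * (A * B) * nn m j ^ (α + β - (2 * (k₀ : ℝ) + (k₁ : ℝ)))) ?_ ?_ ?_ k₀ k₁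
  · intro α β
    refine ⟨1, by norm_num, ?_⟩
    intro f g A B hA hB hf hg m j
    have h1 := hf 0 0 le_rfl m j
    have h2 := hg 0 0 le_rfl m j
    simp only [dd_zero, Nat.cast_zero, mul_zero, add_zero, sub_zero, Pi.mul_apply, abs_mul] at *
    rw [Real.rpow_add (nn_pos _ _)]
    calc _ ≤ _ := mul_le_mul h1 h2 (abs_nonneg _) (mul_nonneg hA (Real.rpow_nonneg (nn_pos _ _).le _))
      _ = _ := by ring
  · intro k₀ k₁ ih α β
    obtain ⟨C1, hC1, H1⟩ := ih (α - 1) β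
    obtain ⟨C2, hC2, H2⟩ := ih α (β - 1)
    refine ⟨C1 * (2:ℝ) ^ (|β| + (2 * k₀ + k₁ : ℕ)) + C2, by positivity, ?_⟩
    intro f g A B hA hB hf hg m j
    have e : dX (f * g) = dX f * sh 0 1 g + f * dX g := by
      funext m j; simp only [dX, sh, Pi.mul_apply, Pi.add_apply, add_zero]; ring
    rw [dd_succX, e, dd_add]
    have b1 := H1 (dX f) (sh 0 1 g) A _ hA (by positivity) hf.dX
      ((hg.mono (by omega)).sh hB 0 1 (by simp [nn])) m j
    have b2 := H2 f (dX g) A B hA hB (hf.mono (by omega)) hg.dX m j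
    have e1 : α - 1 + β - (2 * (k₀ : ℝ) + (k₁ : ℝ)) = α + β - (2 * (k₀ : ℝ) + ((k₁ + 1 : ℕ) : ℝ)) := by push_cast; ring
    have e2 : α + (β - 1) - (2 * (k₀ : ℝ) + (k₁ : ℝ)) = α + β - (2 * (k₀ : ℝ) + ((k₁ + 1 : ℕ) : ℝ)) := by push_cast; ring
    rw [e1] at b1
    rw [e2] at b2
    refine (abs_add_le _ _).trans ((add_le_add b1 b2).trans (le_of_eq ?_))
    ring
  · intro k₀ k₁ ih α β
    obtain ⟨C1, hC1, H1⟩ := ih (α - 2) β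
    obtain ⟨C2, hC2, H2⟩ := ih α (β - 2)
    refine ⟨C1 * (2:ℝ) ^ (|β| + (2 * k₀ + k₁ : ℕ)) + C2, by positivity, ?_⟩
    intro f g A B hA hB hf hg m j
    have e : dT (f * g) = dT f * sh 1 0 g + f * dT g := by
      funext m j; simp only [dT, sh, Pi.mul_apply, Pi.add_apply, add_zero]; ring
    rw [dd_succT, e, dd_add]
    have b1 := H1 (dT f) (sh 1 0 g) A _ hA (by positivity) (hf.mono (by omega)).dT
      ((hg.mono (by omega)).sh hB 1 0 (by simp [nn])) m j
    have b2 := H2 f (dT g) A B hA hB (hf.mono (by omega)) (hg.mono (by omega)).dT m j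
    have e1 : α - 2 + β - (2 * (k₀ : ℝ) + (k₁ : ℝ)) = α + β - (2 * ((k₀ + 1 : ℕ) : ℝ) + (k₁ : ℝ)) := by push_cast; ring
    have e2 : α + (β - 2) - (2 * (k₀ : ℝ) + (k₁ : ℝ)) = α + β - (2 * ((k₀ + 1 : ℕ) : ℝ) + (k₁ : ℝ)) := by push_cast; ring
    rw [e1] at b1
    rw [e2] at b2
    refine (abs_add_le _ _).trans ((add_le_add b1 b2).trans (le_of_eq ?_))
    ring

lemma card_ball (S : Finset (ℤ × ℤ)) (r : ℝ) (hr : 0 < r) (h : ∀ p ∈ S, nn p.1 p.2 ≤ r) :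
    (S.card : ℝ) ≤ 9 * r ^ 3 := by
  rcases S.eq_empty_or_nonempty with rfl | ⟨p0, hp0⟩
  · simp; positivity
  have hr1 : 1 ≤ r := (one_le_nn _ _).trans (h p0 hp0)
  have hsub : S ⊆ Finset.Icc (-⌊r ^ 2⌋) ⌊r ^ 2⌋ ×ˢ Finset.Icc (-⌊r⌋) ⌊r⌋ := by
    intro p hp
    have h1 := (abs_le_nn_sq p.1 p.2).trans (pow_le_pow_left₀ (nn_pos _ _).le (h p hp) 2)
    have h2 := (abs_le_nn p.1 p.2).trans (h p hp)
    rw [abs_le] at h1 h2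
    simp only [Finset.mem_product, Finset.mem_Icc]
    refine ⟨⟨?_, ?_⟩, ?_, ?_⟩
    · rw [neg_le, Int.le_floor]; push_cast; linarith [h1.1]
    · rw [Int.le_floor]; exact h1.2
    · rw [neg_le, Int.le_floor]; push_cast; linarith [h2.1]
    · rw [Int.le_floor]; exact h2.2
  have hc := Finset.card_le_card hsub
  rw [Finset.card_product, Int.card_Icc, Int.card_Icc] at hc
  have f1 : (0:ℤ) ≤ ⌊r ^ 2⌋ := Int.floor_nonneg.2 (by positivity)
  have f2 : (0:ℤ) ≤ ⌊r⌋ := Int.floor_nonneg.2 (by positivity)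
  have g1 : (((⌊r ^ 2⌋ + 1 - -⌊r ^ 2⌋).toNat : ℕ) : ℝ) ≤ 3 * r ^ 2 := by
    have : (((⌊r ^ 2⌋ + 1 - -⌊r ^ 2⌋).toNat : ℕ) : ℝ) = ((⌊r ^ 2⌋ + 1 - -⌊r ^ 2⌋ : ℤ) : ℝ) := by
      exact_mod_cast Int.toNat_of_nonneg (by omega)
    rw [this]; push_cast
    have := Int.floor_le (r ^ 2)
    nlinarith
  have g2 : (((⌊r⌋ + 1 - -⌊r⌋).toNat : ℕ) : ℝ) ≤ 3 * r := by
    have : (((⌊r⌋ + 1 - -⌊r⌋).toNat : ℕ) : ℝ) = ((⌊r⌋ + 1 - -⌊r⌋ : ℤ) : ℝ) := by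
      exact_mod_cast Int.toNat_of_nonneg (by omega)
    rw [this]; push_cast
    have := Int.floor_le r
    nlinarith
  calc (S.card : ℝ) ≤ (((⌊r ^ 2⌋ + 1 - -⌊r ^ 2⌋).toNat : ℕ) : ℝ) * (((⌊r⌋ + 1 - -⌊r⌋).toNat : ℕ) : ℝ) := by exact_mod_cast hc
    _ ≤ (3 * r ^ 2) * (3 * r) := by gcongr
    _ = _ := by ring

lemma sum_shell (ζ : ℝ) (S : Finset (ℤ × ℤ)) (r : ℝ) (hr : 0 < r)
    (h : ∀ p ∈ S, nn p.1 p.2 ≤ r) (h' : ∀ p ∈ S, r ≤ 2 * nn p.1 p.2) :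
    ∑ p ∈ S, nn p.1 p.2 ^ ζ ≤ 9 * 2 ^ |ζ| * r ^ (ζ + 3) := by
  have h0 : 0 ≤ (2:ℝ) ^ |ζ| * r ^ ζ := by positivity
  calc ∑ p ∈ S, nn p.1 p.2 ^ ζ ≤ ∑ p ∈ S, (2:ℝ) ^ |ζ| * r ^ ζ := by
        apply Finset.sum_le_sum
        intro p hp
        apply rpow_cmp (by norm_num) (nn_pos _ _) hr _ (h' p hp)
        have := h p hp; linarith
    _ = S.card * ((2:ℝ) ^ |ζ| * r ^ ζ) := by rw [Finset.sum_const, nsmul_eq_mul]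
    _ ≤ (9 * r ^ 3) * ((2:ℝ) ^ |ζ| * r ^ ζ) := by gcongr; exact card_ball S r hr h
    _ = _ := by
      rw [Real.rpow_add hr, show (3:ℝ) = ((3:ℕ):ℝ) by norm_num, Real.rpow_natCast]; ring

lemma sum_ball (ζ : ℝ) (hζ : -3 < ζ) : ∃ C : ℝ, 0 ≤ C ∧ ∀ (S : Finset (ℤ × ℤ)) (r : ℝ), 0 < r →
    (∀ p ∈ S, nn p.1 p.2 ≤ r) → ∑ p ∈ S, nn p.1 p.2 ^ ζ ≤ C * r ^ (ζ + 3) := by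
  set q : ℝ := (2:ℝ)⁻¹ ^ (ζ + 3) with hq
  have hq0 : 0 < q := by positivity
  have hq1 : q < 1 := Real.rpow_lt_one (by norm_num) (by norm_num) (by linarith)
  set D : ℝ := 9 * 2 ^ |ζ| with hD
  have hD0 : 0 ≤ D := by positivity
  have hC0 : 0 ≤ D / (1 - q) := div_nonneg hD0 (by linarith)
  refine ⟨D / (1 - q), hC0, ?_⟩
  have main : ∀ n : ℕ, ∀ (S : Finset (ℤ × ℤ)) (r : ℝ), 0 < r → r < 2 ^ n →
    (∀ p ∈ S, nn p.1 p.2 ≤ r) → ∑ p ∈ S, nn p.1 p.2 ^ ζ ≤ D / (1 - q) * r ^ (ζ + 3) := by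
    intro n
    induction n with
    | zero =>
      intro S r hr h1 h
      have : S = ∅ := by
        apply Finset.eq_empty_of_forall_notMem
        intro p hp
        have := h p hp
        have := one_le_nn p.1 p.2
        simp at h1; linarith
      subst this; simp; positivity
    | succ n ih =>
      intro S r hr h1 h
      classical
      rw [← Finset.sum_filter_add_sum_filter_not S (fun p => nn p.1 p.2 ≤ r / 2)]
      have a1 := ih (S.filter (fun p => nn p.1 p.2 ≤ r / 2)) (r / 2) (by positivity)
        (by rw [pow_succ] at h1; linarith) (fun p hp => (Finset.mem_filter.1 hp).2)
      have a2 := sum_shell ζ (S.filter (fun p => ¬ nn p.1 p.2 ≤ r / 2)) r hr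
        (fun p hp => h p (Finset.mem_filter.1 hp).1)
        (fun p hp => by have := (Finset.mem_filter.1 hp).2; push Not at this; linarith)
      refine (add_le_add a1 a2).trans (le_of_eq ?_)
      rw [show r / 2 = 2⁻¹ * r by ring, Real.mul_rpow (by norm_num) hr.le, ← hq, ← hD]
      have : 1 - q ≠ 0 := by linarith
      field_simp; ring
  intro S r hr h
  obtain ⟨n, hn⟩ := pow_unbounded_of_one_lt r (by norm_num : (1:ℝ) < 2)
  exact main n S r hr hn h

lemma sum_tail (ζ : ℝ) (hζ : ζ < -3) : ∃ C : ℝ, 0 ≤ C ∧ ∀ (S : Finset (ℤ × ℤ)) (r : ℝ), 0 < r →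
    (∀ p ∈ S, r ≤ nn p.1 p.2) → ∑ p ∈ S, nn p.1 p.2 ^ ζ ≤ C * r ^ (ζ + 3) := by
  set q : ℝ := (2:ℝ) ^ (ζ + 3) with hq
  have hq0 : 0 < q := by positivity
  have hq1 : q < 1 := Real.rpow_lt_one_of_one_lt_of_neg (by norm_num) (by linarith)
  set D : ℝ := 9 * 2 ^ |ζ| with hD
  have hD0 : 0 ≤ D := by positivity
  have hC0 : 0 ≤ D * q / (1 - q) := div_nonneg (by positivity) (by linarith)
  refine ⟨D * q / (1 - q), hC0, ?_⟩
  intro S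
  obtain ⟨R0, hR0⟩ : ∃ R0 : ℝ, ∀ p ∈ S, nn p.1 p.2 ≤ R0 := by
    refine ⟨∑ p ∈ S, nn p.1 p.2, fun p hp => ?_⟩
    exact Finset.single_le_sum (f := fun p : ℤ × ℤ => nn p.1 p.2) (fun i _ => (nn_pos _ _).le) hp
  have main : ∀ n : ℕ, ∀ (S' : Finset (ℤ × ℤ)) (r : ℝ), S' ⊆ S → 0 < r → R0 < 2 ^ n * r →
    (∀ p ∈ S', r ≤ nn p.1 p.2) → ∑ p ∈ S', nn p.1 p.2 ^ ζ ≤ D * q / (1 - q) * r ^ (ζ + 3) := by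
    intro n
    induction n with
    | zero =>
      intro S' r hs hr h1 h
      have : S' = ∅ := by
        apply Finset.eq_empty_of_forall_notMem
        intro p hp
        have := h p hp
        have := hR0 p (hs hp)
        simp at h1; linarith
      subst this; simp; positivity
    | succ n ih =>
      intro S' r hs hr h1 h
      classical
      rw [← Finset.sum_filter_add_sum_filter_not S' (fun p => 2 * r ≤ nn p.1 p.2)]
      have a1 := ih (S'.filter (fun p => 2 * r ≤ nn p.1 p.2)) (2 * r) ((Finset.filter_subset _ _).trans hs) (by positivity)
        (by rw [pow_succ] at h1; linarith) (fun p hp => (Finset.mem_filter.1 hp).2)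
      have a2 := sum_shell ζ (S'.filter (fun p => ¬ 2 * r ≤ nn p.1 p.2)) (2 * r) (by positivity)
        (fun p hp => by have := (Finset.mem_filter.1 hp).2; push Not at this; linarith)
        (fun p hp => by have := h p (Finset.mem_filter.1 hp).1; linarith)
      refine (add_le_add a1 a2).trans (le_of_eq ?_)
      rw [Real.mul_rpow (by norm_num) hr.le, ← hq, ← hD]
      have : 1 - q ≠ 0 := by linarith
      field_simp; ring
  intro r hr h
  obtain ⟨n, hn⟩ := pow_unbounded_of_one_lt (R0 / r) (by norm_num : (1:ℝ) < 2)
  exact main n S r subset_rfl hr (by rwa [div_lt_iff₀ hr] at hn) h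

/-! ### path lemma -/
lemma incr (δ : ℝ) (hδ : 0 < δ) (hδ1 : δ ≤ 1) (l : ℕ) :
    (l : ℝ) ^ δ + δ * ((l : ℝ) + 1) ^ (δ - 1) ≤ ((l : ℝ) + 1) ^ δ := by
  have hx : (0:ℝ) < (l:ℝ) + 1 := by positivity
  have h := rpow_one_add_le_one_add_mul_self (s := -1 / ((l:ℝ) + 1)) (by
    rw [le_div_iff₀ hx]; have : (0:ℝ) ≤ l := by positivity
    linarith) hδ.le hδ1
  have e : (l : ℝ) = (l + 1) * (1 + -1 / ((l:ℝ) + 1)) := by field_simp; ring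
  have e0 : 0 ≤ 1 + -1 / ((l:ℝ) + 1) := by
    have : 1 + -1 / ((l:ℝ) + 1) = l / (l + 1) := by field_simp; ring
    rw [this]; positivity
  have e1 : (l : ℝ) ^ δ = (l + 1 : ℝ) ^ δ * (1 + -1 / ((l:ℝ) + 1)) ^ δ := by
    rw [← Real.mul_rpow hx.le e0, ← e]
  rw [e1, Real.rpow_sub_one hx.ne']
  have hp : (0:ℝ) < ((l:ℝ) + 1) ^ δ := by positivity
  calc _ ≤ (l + 1 : ℝ) ^ δ * (1 + δ * (-1 / ((l:ℝ) + 1))) + δ * ((l + 1 : ℝ) ^ δ / (l + 1)) := by gcongr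
    _ = _ := by field_simp; ring

lemma path1 (δ : ℝ) (hδ : 0 < δ) (hδ1 : δ ≤ 1) (A : ℝ) (hA : 0 ≤ A) (g : ℤ → ℝ) (n : ℤ)
    (h : ∀ i : ℤ, |(i : ℝ)| ≤ |(n : ℝ)| → |g (i + 1) - g i| ≤ A * (max |(i : ℝ)| 1) ^ (δ - 1)) :
    |g n - g 0| ≤ 2 * A / δ * |(n : ℝ)| ^ δ := by
  have two : ∀ l : ℕ, (max (l : ℝ) 1) ^ (δ - 1) ≤ 2 * ((l : ℝ) + 1) ^ (δ - 1) := by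
    intro l
    have h1 : (0:ℝ) ≤ l := by positivity
    have := rpow_cmp (c := 2) (by norm_num) (x := max (l:ℝ) 1) (y := (l:ℝ) + 1) (by positivity) (by positivity)
      (max_le (by linarith) (by linarith)) (by linarith [le_max_left (l:ℝ) 1, le_max_right (l:ℝ) 1]) (δ - 1)
    refine this.trans ?_
    gcongr
    calc (2:ℝ) ^ |δ - 1| ≤ 2 ^ (1:ℝ) := by
          apply Real.rpow_le_rpow_of_exponent_le (by norm_num)
          rw [abs_of_nonpos (by linarith)]; linarith
      _ = 2 := by simp
  have key : ∀ l : ℕ, (l : ℝ) ≤ |(n : ℝ)| →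
      |g l - g 0| ≤ 2 * A / δ * (l : ℝ) ^ δ ∧ |g (-l) - g 0| ≤ 2 * A / δ * (l : ℝ) ^ δ := by
    intro l
    induction l with
    | zero => intro _; simp [Real.zero_rpow hδ.ne']
    | succ l ih =>
      intro hl
      push_cast at hl
      obtain ⟨i1, i2⟩ := ih (by linarith)
      have hl0 : (0:ℝ) ≤ l := by positivity
      have inc := incr δ hδ hδ1 l
      have hpos : 0 ≤ ((l:ℝ) + 1) ^ (δ - 1) := by positivity
      have inc' : 2 * A / δ * (l : ℝ) ^ δ + 2 * A * ((l : ℝ) + 1) ^ (δ - 1) ≤ 2 * A / δ * ((l : ℝ) + 1) ^ δ := by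
        have : 0 ≤ 2 * A / δ := by positivity
        calc _ = 2 * A / δ * ((l : ℝ) ^ δ + δ * ((l : ℝ) + 1) ^ (δ - 1)) := by field_simp
          _ ≤ _ := by gcongr
      push_cast
      constructor
      · have hh := h l (by simp; linarith)
        simp only [Int.cast_natCast, abs_of_nonneg hl0] at hh
        have := mul_le_mul_of_nonneg_left (two l) hA
        have t : |g (l + 1) - g 0| ≤ |g (l + 1) - g l| + |g l - g 0| := abs_sub_le _ _ _
        linarith
      · have hh := h (-(l + 1)) (by push_cast; rw [abs_neg, abs_of_nonneg (by positivity)]; exact hl)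
        push_cast at hh
        rw [abs_neg, abs_of_nonneg (a := (l:ℝ) + 1) (by positivity), max_eq_left (by linarith),
          show (-((l:ℤ) + 1) + 1) = -(l:ℤ) by ring, abs_sub_comm] at hh
        have t : |g (-(l + 1)) - g 0| ≤ |g (-(l + 1)) - g (-l)| + |g (-l) - g 0| := abs_sub_le _ _ _
        have : 0 ≤ A * ((l:ℝ) + 1) ^ (δ - 1) := by positivity
        linarith
  have e : |(n : ℝ)| = (n.natAbs : ℝ) := by
    rw [← Int.cast_abs, Int.abs_eq_natAbs]; simp
  have := key n.natAbs (by rw [e])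
  rw [e]
  rcases Int.natAbs_eq n with h | h
  · rw [← h] at this; exact this.1
  · rw [← h] at this; exact this.2

lemma path_bound (γ : ℝ) (hγ : 0 < γ) : ∃ C : ℝ, 0 ≤ C ∧ ∀ (A : ℝ) (f : ℤ → ℤ → ℝ), 0 ≤ A → f 0 0 = 0 →
    (∀ m j, |dX f m j| ≤ A * nn m j ^ (γ - 1)) → (∀ m j, |dT f m j| ≤ A * nn m j ^ (γ - 2)) →
    ∀ m j, |f m j| ≤ C * A * nn m j ^ γ := by
  set a := min γ 1 with ha
  set b := min (γ / 2) 1 with hb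
  have ha0 : 0 < a := lt_min hγ one_pos
  have hb0 : 0 < b := lt_min (by linarith) one_pos
  refine ⟨2 / a + 2 / b, by positivity, ?_⟩
  intro A f hA h0 hX hT m j
  have hN := one_le_nn m j
  have hN0 := nn_pos m j
  have s1 : |f 0 j| ≤ 2 / a * A * nn m j ^ γ := by
    have := path1 a ha0 (min_le_right _ _) (A * nn m j ^ (γ - a)) (by positivity) (fun i => f 0 i) j ?_
    · simp only [h0, sub_zero] at this
      refine this.trans ?_
      calc 2 * (A * nn m j ^ (γ - a)) / a * |(j:ℝ)| ^ a ≤ 2 * (A * nn m j ^ (γ - a)) / a * nn m j ^ a := by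
            gcongr; exact abs_le_nn m j
        _ = 2 / a * A * (nn m j ^ (γ - a) * nn m j ^ a) := by ring
        _ = _ := by rw [← Real.rpow_add hN0, sub_add_cancel]
    · intro i hi
      refine (hX 0 i).trans ?_
      have e : nn 0 i = max |(i:ℝ)| 1 := by simp [nn]
      have e' : max |(i:ℝ)| 1 ≤ nn m j := max_le (hi.trans (abs_le_nn m j)) hN
      rw [e, mul_assoc]
      have e1 : (0:ℝ) < max |(i:ℝ)| 1 := by positivity
      gcongr
      rw [show γ - 1 = (γ - a) + (a - 1) by ring, Real.rpow_add e1]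
      gcongr
      linarith [min_le_left γ 1]
  have s2 : |f m j - f 0 j| ≤ 2 / b * A * nn m j ^ γ := by
    have := path1 b hb0 (min_le_right _ _) (A * nn m j ^ (γ - 2 * b)) (by positivity) (fun i => f i j) m ?_
    · refine this.trans ?_
      calc 2 * (A * nn m j ^ (γ - 2 * b)) / b * |(m:ℝ)| ^ b ≤ 2 * (A * nn m j ^ (γ - 2 * b)) / b * (nn m j ^ 2) ^ b := by
            gcongr; exact abs_le_nn_sq m j
        _ = 2 / b * A * (nn m j ^ (γ - 2 * b) * nn m j ^ (2 * b)) := by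
          rw [Real.rpow_mul hN0.le]; norm_cast; ring
        _ = _ := by rw [← Real.rpow_add hN0, sub_add_cancel]
    · intro i hi
      refine (hT i j).trans ?_
      have e' : nn i j ≤ nn m j := by
        refine max_le (max_le ?_ (abs_le_nn m j)) hN
        exact (Real.sqrt_le_sqrt hi).trans (sqrt_le_nn m j)
      rw [mul_assoc]
      have e1 : (0:ℝ) < max |(i:ℝ)| 1 := by positivity
      have e2 := nn_pos i j
      gcongr
      rw [show γ - 2 = (γ - 2 * b) + 2 * (b - 1) by ring, Real.rpow_add e2]
      have e3 : nn i j ^ (2 * (b - 1)) ≤ max |(i:ℝ)| 1 ^ (b - 1) := by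
        rw [Real.rpow_mul e2.le]
        apply Real.rpow_le_rpow_of_nonpos e1 _ (by linarith [min_le_right (γ/2) 1])
        norm_cast
        push_cast
        exact max_le (abs_le_nn_sq i j) (one_le_pow₀ (one_le_nn i j))
      gcongr
      linarith [min_le_left (γ/2) 1]
  have : |f m j| ≤ |f m j - f 0 j| + |f 0 j| := by
    have := abs_add_le (f m j - f 0 j) (f 0 j); simpa using this
  calc _ ≤ _ := this.trans (add_le_add s2 s1)
    _ = _ := by ring

/-! ### cutoff -/
def dh (h : ℝ) (g : ℝ → ℝ) : ℝ → ℝ := fun x => g (x + h) - g x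

lemma d1_dh (h : ℝ) (g : ℝ → ℝ) (k : ℕ) :
    d1^[k] (fun i : ℤ => g (h * i)) = fun i : ℤ => (dh h)^[k] g (h * i) := by
  induction k with
  | zero => rfl
  | succ k ih =>
    rw [Function.iterate_succ_apply', ih, Function.iterate_succ_apply']
    funext i; simp only [d1, dh]; push_cast; rw [mul_add, mul_one]

lemma dh_bound (φ : ℕ → ℝ → ℝ) (hφ : ∀ n x, HasDerivAt (φ n) (φ (n + 1) x) x) (B : ℕ → ℝ)
    (hB : ∀ n x, |φ n x| ≤ B n) (h : ℝ) (hh : 0 ≤ h) (k : ℕ) :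
    ∀ n, (∀ x, HasDerivAt ((dh h)^[k] (φ n)) ((dh h)^[k] (φ (n + 1)) x) x) ∧
      ∀ x, |(dh h)^[k] (φ n) x| ≤ B (n + k) * h ^ k := by
  induction k with
  | zero => intro n; exact ⟨hφ n, by simpa using hB n⟩
  | succ k ih =>
    intro n
    constructor
    · intro x
      rw [Function.iterate_succ_apply', Function.iterate_succ_apply']
      exact ((ih n).1 (x + h)).comp_add_const x h |>.sub ((ih n).1 x)
    · intro x
      rw [Function.iterate_succ_apply']
      have := Convex.norm_image_sub_le_of_norm_deriv_le (𝕜 := ℝ) (f := (dh h)^[k] (φ n)) (s := Set.univ)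
        (x := x) (y := x + h) (C := B (n + 1 + k) * h ^ k) (fun y _ => ((ih n).1 y).differentiableAt)
        (fun y _ => by rw [((ih n).1 y).deriv]; exact (ih (n + 1)).2 y) convex_univ trivial trivial
      simp only [Real.norm_eq_abs, add_sub_cancel_left, abs_of_nonneg hh] at this
      refine this.trans (le_of_eq ?_)
      rw [show n + 1 + k = n + (k + 1) by ring]; ring

lemma exists_bump : ∃ (φ : ℝ → ℝ) (B : ℕ → ℝ), (∀ s, |s| ≤ 1 / 2 → φ s = 1) ∧ (∀ s, 1 ≤ |s| → φ s = 0) ∧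
    (∀ n, 0 ≤ B n) ∧
    ∀ (n : ℕ) (h : ℝ), 0 ≤ h → ∀ m : ℤ, |d1^[n] (fun i : ℤ => φ (h * i)) m| ≤ B n * h ^ n := by
  let b : ContDiffBump (0 : ℝ) := ⟨1 / 2, 1, by norm_num, by norm_num⟩
  have hb : ContDiff ℝ ((⊤ : ℕ∞) : WithTop ℕ∞) b := b.contDiff
  have hcs : ∀ n, HasCompactSupport (iteratedDeriv n b) := by
    intro n
    induction n with
    | zero => simpa using b.hasCompactSupport
    | succ n ih => rw [iteratedDeriv_succ]; exact ih.deriv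
  have hbd : ∀ n, ∃ C, ∀ x, ‖iteratedDeriv n b x‖ ≤ C := fun n =>
    (hcs n).exists_bound_of_continuous (hb.continuous_iteratedDeriv n (by exact_mod_cast le_top))
  choose B hB using hbd
  refine ⟨b, B, ?_, ?_, ?_, ?_⟩
  · intro s hs; apply b.one_of_mem_closedBall; rw [mem_closedBall_zero_iff, Real.norm_eq_abs]; exact hs
  · intro s hs; apply b.zero_of_le_dist; simpa using hs
  · intro n; exact (norm_nonneg _).trans (hB n 0)
  · intro n h hh m
    rw [d1_dh]
    have := (dh_bound (fun n => iteratedDeriv n b) (fun n x => by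
      rw [iteratedDeriv_succ]
      exact ((hb.differentiable_iteratedDeriv n (by exact_mod_cast WithTop.coe_lt_top n)) x).hasDerivAt) B (fun n x => hB n x) h hh n 0).2 (h * m)
    simpa using this

lemma dd_const (k₀ k₁ : ℕ) (hk : 0 < 2 * k₀ + k₁) : dd k₀ k₁ (1 : ℤ → ℤ → ℝ) = 0 := by
  have z : dd k₀ k₁ (0 : ℤ → ℤ → ℝ) = 0 := by funext m j; exact dd_vanish _ _ _ _ _ (by simp)
  rcases k₁ with _ | k₁
  · rcases k₀ with _ | k₀
    · simp at hk
    · rw [dd_succT]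
      have : dT 1 = 0 := by funext m j; simp [dT]
      rw [this]; funext m j; exact dd_vanish _ _ _ _ _ (by simp)
  · rw [dd_succX]
    have : dX 1 = 0 := by funext m j; simp [dX]
    rw [this]; funext m j; exact dd_vanish _ _ _ _ _ (by simp)

lemma exists_cutoff (n : ℕ) : ∃ B : ℝ, 0 ≤ B ∧ ∀ ρ : ℝ, 8 * ((n : ℝ) + 1) ≤ ρ → ∃ χ : ℤ → ℤ → ℝ,
    SB 0 n B (1 - χ) ∧ (∀ m j, nn m j ≤ ρ / 4 → χ m j = 1) ∧ (∀ m j, ρ / 2 < nn m j → χ m j = 0) := by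
  obtain ⟨φ, b, h1, h0, hb, hd⟩ := exists_bump
  set B' := ∑ i ∈ Finset.range (n + 1), b i with hB'
  have hB'0 : 0 ≤ B' := Finset.sum_nonneg (fun i _ => hb i)
  have hbB : ∀ i ≤ n, b i ≤ B' := fun i hi =>
    Finset.single_le_sum (f := b) (fun i _ => hb i) (Finset.mem_range.2 (by omega))
  refine ⟨1 + B' ^ 2 * 4 ^ n, by positivity, ?_⟩
  intro ρ hρ
  have hn : (0:ℝ) ≤ n := by positivity
  have hρ0 : 0 < ρ := by linarith
  set χ : ℤ → ℤ → ℝ := fun m j => φ (4 / ρ ^ 2 * m) * φ (2 / ρ * j) with hχ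
  have hvan : ∀ m j, ρ / 2 < nn m j → χ m j = 0 := by
    intro m j h
    simp only [nn, lt_max_iff] at h
    rcases h with (h | h) | h
    · have : φ (4 / ρ ^ 2 * m) = 0 := by
        apply h0
        rw [abs_mul, abs_of_pos (by positivity : 0 < 4 / ρ ^ 2), div_mul_eq_mul_div, le_div_iff₀ (by positivity)]
        rw [Real.lt_sqrt (by positivity)] at h
        nlinarith
      simp [hχ, this]
    · have : φ (2 / ρ * j) = 0 := by
        apply h0
        rw [abs_mul, abs_of_pos (by positivity : 0 < 2 / ρ), div_mul_eq_mul_div, le_div_iff₀ (by positivity)]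
        linarith
      simp [hχ, this]
    · linarith
  refine ⟨χ, ?_, ?_, hvan⟩
  · have hbd : ∀ k₀ k₁ : ℕ, 2 * k₀ + k₁ ≤ n → ∀ m j : ℤ,
        |dd k₀ k₁ χ m j| ≤ B' ^ 2 * 2 ^ n * ρ ^ (-(2 * (k₀ : ℝ) + k₁)) := by
      intro k₀ k₁ hk m j
      rw [hχ, dd_sep k₀ k₁ (fun m : ℤ => φ (4 / ρ ^ 2 * m)) (fun j : ℤ => φ (2 / ρ * j)), abs_mul]
      have a1 := hd k₀ (4 / ρ ^ 2) (by positivity) m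
      have a2 := hd k₁ (2 / ρ) (by positivity) j
      have c1 := hbB k₀ (by omega)
      have c2 := hbB k₁ (by omega)
      have e : ρ ^ (-(2 * (k₀ : ℝ) + k₁)) = (ρ ^ (2 * k₀ + k₁))⁻¹ := by
        rw [Real.rpow_neg hρ0.le]; congr 1; exact_mod_cast Real.rpow_natCast ρ (2 * k₀ + k₁)
      calc _ ≤ (B' * (4 / ρ ^ 2) ^ k₀) * (B' * (2 / ρ) ^ k₁) := by
            refine mul_le_mul (a1.trans ?_) (a2.trans ?_) (abs_nonneg _) (by positivity) <;> gcongr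
        _ = B' ^ 2 * 2 ^ (2 * k₀ + k₁) * (ρ ^ (2 * k₀ + k₁))⁻¹ := by
          rw [div_pow, div_pow, pow_add, pow_add, pow_mul, pow_mul]; norm_num; field_simp
        _ ≤ _ := by rw [e]; gcongr; norm_num
    intro k₀ k₁ hk m j
    have hN := nn_pos m j
    rcases Nat.eq_zero_or_pos (2 * k₀ + k₁) with hz | hpos
    · obtain rfl : k₀ = 0 := by omega
      obtain rfl : k₁ = 0 := by omega
      have := hbd 0 0 hk m j
      simp [dd_zero] at this ⊢
      have t : |1 - χ m j| ≤ 1 + |χ m j| := by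
        have := abs_sub (1:ℝ) (χ m j); simpa using this
      refine t.trans (add_le_add_right (this.trans ?_) 1)
      gcongr; norm_num
    · rw [dd_sub, dd_const _ _ hpos]
      simp only [zero_sub, Pi.neg_apply, abs_neg]
      have hκ : (2 * (k₀ : ℝ) + k₁) ≤ n := by exact_mod_cast hk
      by_cases hc : nn m j ≤ 2 * ρ
      · refine (hbd k₀ k₁ hk m j).trans ?_
        have : ρ ^ (-(2 * (k₀ : ℝ) + k₁)) ≤ 2 ^ n * nn m j ^ (-(2 * (k₀ : ℝ) + k₁)) := by
          calc ρ ^ (-(2 * (k₀ : ℝ) + k₁)) ≤ (2⁻¹ * nn m j) ^ (-(2 * (k₀ : ℝ) + k₁)) := by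
                apply Real.rpow_le_rpow_of_nonpos (by positivity) (by linarith)
                have : 0 ≤ 2 * (k₀ : ℝ) + k₁ := by positivity
                linarith
            _ = 2 ^ (2 * (k₀ : ℝ) + k₁) * nn m j ^ (-(2 * (k₀ : ℝ) + k₁)) := by
              rw [Real.mul_rpow (by norm_num) hN.le, Real.inv_rpow (by norm_num), ← Real.rpow_neg (by norm_num), neg_neg]
            _ ≤ 2 ^ (n:ℝ) * nn m j ^ (-(2 * (k₀ : ℝ) + k₁)) := by gcongr; norm_num
            _ = _ := by rw [Real.rpow_natCast]
        calc _ ≤ B' ^ 2 * 2 ^ n * (2 ^ n * nn m j ^ (-(2 * (k₀ : ℝ) + k₁))) := by gcongr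
          _ = B' ^ 2 * 4 ^ n * nn m j ^ (-(2 * (k₀ : ℝ) + k₁)) := by
            rw [show (4:ℝ) = 2 * 2 by norm_num, mul_pow]; ring
          _ ≤ _ := by gcongr; linarith
      · push Not at hc
        rw [dd_vanish]
        · simp; positivity
        · intro a b ha hb'
          apply hvan
          have t := nn_tri' (m + a) (j + b) a b
          have t1 := nn_add (m + a) (j + b) (-a) (-b)
          rw [nn_neg] at t1
          have t2 := nn_nat_le a b n (by omega)
          simp only [add_neg_cancel_right] at t1
          linarith
  · intro m j h
    have e1 : φ (4 / ρ ^ 2 * m) = 1 := by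
      apply h1
      rw [abs_mul, abs_of_pos (by positivity : 0 < 4 / ρ ^ 2), div_mul_eq_mul_div, div_le_iff₀ (by positivity)]
      have := (sqrt_le_nn m j).trans h
      rw [Real.sqrt_le_iff] at this
      nlinarith [this.2]
    have e2 : φ (2 / ρ * j) = 1 := by
      apply h1
      rw [abs_mul, abs_of_pos (by positivity : 0 < 2 / ρ), div_mul_eq_mul_div, div_le_iff₀ (by positivity)]
      have := (abs_le_nn m j).trans h
      linarith
    simp [hχ, e1, e2]

/-! ### convolution -/
def conv (f g : ℤ → ℤ → ℝ) : ℤ → ℤ → ℝ := fun m j => ∑' p : ℤ × ℤ, f (m - p.1) (j - p.2) * g p.1 p.2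

def FS (g : ℤ → ℤ → ℝ) : Prop := ∃ S : Finset (ℤ × ℤ), ∀ p ∉ S, g p.1 p.2 = 0

lemma conv_eq {g : ℤ → ℤ → ℝ} {S : Finset (ℤ × ℤ)} (hS : ∀ p ∉ S, g p.1 p.2 = 0) (f m j) :
    conv f g m j = ∑ p ∈ S, f (m - p.1) (j - p.2) * g p.1 p.2 :=
  tsum_eq_sum (fun p hp => by rw [hS p hp, mul_zero])

lemma conv_comm (f g) : conv f g = conv g f := by
  funext m j
  unfold conv
  rw [← (Equiv.subLeft ((m, j) : ℤ × ℤ)).tsum_eq]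
  apply tsum_congr
  intro p
  simp [Equiv.subLeft_apply, mul_comm]

lemma conv_add (f₁ f₂ : ℤ → ℤ → ℝ) {g} (hg : FS g) : conv (f₁ + f₂) g = conv f₁ g + conv f₂ g := by
  obtain ⟨S, hS⟩ := hg
  funext m j
  simp only [Pi.add_apply, conv_eq hS, add_mul, Finset.sum_add_distrib]

lemma dd_conv (k₀ k₁ : ℕ) (f : ℤ → ℤ → ℝ) {g} (hg : FS g) : dd k₀ k₁ (conv f g) = conv (dd k₀ k₁ f) g := by
  obtain ⟨S, hS⟩ := hg
  refine dd_ind (P := fun k₀ k₁ => dd k₀ k₁ (conv f g) = conv (dd k₀ k₁ f) g) rfl ?_ ?_ k₀ k₁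
  · intro k₀ k₁ h
    rw [dd_succX', h, dd_succX']; funext m j
    simp only [dX, conv_eq hS, ← Finset.sum_sub_distrib, ← sub_mul]
    apply Finset.sum_congr rfl; intro p _; rw [add_sub_right_comm]
  · intro k₀ k₁ h
    rw [dd_succT', h, dd_succT']; funext m j
    simp only [dT, conv_eq hS, ← Finset.sum_sub_distrib, ← sub_mul]
    apply Finset.sum_congr rfl; intro p _; rw [add_sub_right_comm]

lemma conv_near (α b : ℝ) (hα : -3 < α) (hb : b < 0) : ∃ C : ℝ, 0 ≤ C ∧ ∀ (g h : ℤ → ℤ → ℝ) (M A : ℝ) (m j : ℤ),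
    0 ≤ M → 0 ≤ A → FS h → (∀ a c, |g a c| ≤ M * nn a c ^ b) → (∀ a c, |h a c| ≤ A * nn a c ^ α) →
    (∀ a c, nn m j / 2 < nn a c → h a c = 0) → |conv g h m j| ≤ C * (M * A) * nn m j ^ (α + 3 + b) := by
  obtain ⟨C, hC, H⟩ := sum_ball α hα
  refine ⟨C * 2⁻¹ ^ (α + 3 + b), by positivity, ?_⟩
  intro g h M A m j hM hA hh hg hhb hv
  obtain ⟨S, hS⟩ := hh
  classical
  have hS' : ∀ p ∉ S.filter (fun p => nn p.1 p.2 ≤ nn m j / 2), h p.1 p.2 = 0 := by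
    intro p hp
    by_cases hpS : p ∈ S
    · apply hv
      rw [Finset.mem_filter] at hp
      push Not at hp
      exact hp hpS
    · exact hS p hpS
  rw [conv_eq hS']
  have hN := nn_pos m j
  have key := H (S.filter (fun p => nn p.1 p.2 ≤ nn m j / 2)) (nn m j / 2) (by positivity) (fun p hp => (Finset.mem_filter.1 hp).2)
  calc _ ≤ ∑ p ∈ S.filter (fun p => nn p.1 p.2 ≤ nn m j / 2), |g (m - p.1) (j - p.2) * h p.1 p.2| := Finset.abs_sum_le_sum_abs _ _
    _ ≤ ∑ p ∈ S.filter (fun p => nn p.1 p.2 ≤ nn m j / 2), (M * (nn m j / 2) ^ b) * (A * nn p.1 p.2 ^ α) := by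
      apply Finset.sum_le_sum
      intro p hp
      have hp2 := (Finset.mem_filter.1 hp).2
      rw [abs_mul]
      refine mul_le_mul ((hg _ _).trans ?_) (hhb _ _) (abs_nonneg _) (by positivity)
      gcongr 1
      apply Real.rpow_le_rpow_of_nonpos (by positivity) _ hb.le
      have := nn_tri m j p.1 p.2
      linarith
    _ = M * A * (nn m j / 2) ^ b * ∑ p ∈ S.filter (fun p => nn p.1 p.2 ≤ nn m j / 2), nn p.1 p.2 ^ α := by
      rw [Finset.mul_sum]; apply Finset.sum_congr rfl; intro p _; ring
    _ ≤ M * A * (nn m j / 2) ^ b * (C * (nn m j / 2) ^ (α + 3)) := by gcongr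
    _ = C * (M * A) * ((nn m j / 2) ^ (α + 3) * (nn m j / 2) ^ b) := by ring
    _ = _ := by
      rw [← Real.rpow_add (by positivity), div_eq_mul_inv, mul_comm (nn m j) 2⁻¹, Real.mul_rpow (by norm_num) hN.le]; ring

lemma conv_far (a β c : ℝ) (ha : a < 0) (hβ : -3 < β) (hab : a + β < -3) (hc : 0 < c) :
    ∃ C : ℝ, 0 ≤ C ∧ ∀ (g h : ℤ → ℤ → ℝ) (M A : ℝ) (m j : ℤ),
    0 ≤ M → 0 ≤ A → FS h → (∀ u v, |g u v| ≤ M * nn u v ^ a) → (∀ u v, |h u v| ≤ A * nn u v ^ β) →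
    (∀ u v, nn u v < c * nn m j → g u v = 0) → |conv g h m j| ≤ C * (M * A) * nn m j ^ (a + β + 3) := by
  obtain ⟨C1, hC1, H1⟩ := sum_ball β hβ
  obtain ⟨C2, hC2, H2⟩ := sum_tail (a + β) hab
  refine ⟨c ^ a * (C1 * 2 ^ (β + 3)) + 2⁻¹ ^ a * (C2 * 2 ^ (a + β + 3)), by positivity, ?_⟩
  intro g h M A m j hM hA hh hg hhb hv
  obtain ⟨S, hS⟩ := hh
  rw [conv_eq hS]
  have hN := nn_pos m j
  set ρ := nn m j with hρ
  refine (Finset.abs_sum_le_sum_abs _ _).trans ?_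
  classical
  rw [← Finset.sum_filter_add_sum_filter_not S (fun p => nn p.1 p.2 ≤ 2 * ρ)]
  have k1 := H1 (S.filter (fun p => nn p.1 p.2 ≤ 2 * ρ)) (2 * ρ) (by positivity) (fun p hp => (Finset.mem_filter.1 hp).2)
  have k2 := H2 (S.filter (fun p => ¬ nn p.1 p.2 ≤ 2 * ρ)) (2 * ρ) (by positivity)
    (fun p hp => by have := (Finset.mem_filter.1 hp).2; push Not at this; exact this.le)
  have s1 : ∑ p ∈ S.filter (fun p => nn p.1 p.2 ≤ 2 * ρ), |g (m - p.1) (j - p.2) * h p.1 p.2|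
      ≤ (M * A) * (c * ρ) ^ a * (C1 * (2 * ρ) ^ (β + 3)) := by
    calc _ ≤ ∑ p ∈ S.filter (fun p => nn p.1 p.2 ≤ 2 * ρ), (M * (c * ρ) ^ a) * (A * nn p.1 p.2 ^ β) := by
          apply Finset.sum_le_sum
          intro p hp
          rw [abs_mul]
          have hA' : 0 ≤ A * nn p.1 p.2 ^ β := (abs_nonneg _).trans (hhb _ _)
          refine mul_le_mul ?_ (hhb _ _) (abs_nonneg _) (by positivity)
          by_cases hcase : nn (m - p.1) (j - p.2) < c * ρ
          · rw [hv _ _ hcase]; simp; positivity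
          · push Not at hcase
            refine (hg _ _).trans ?_
            gcongr 1
            exact Real.rpow_le_rpow_of_nonpos (by positivity) hcase ha.le
      _ = M * A * (c * ρ) ^ a * ∑ p ∈ S.filter (fun p => nn p.1 p.2 ≤ 2 * ρ), nn p.1 p.2 ^ β := by
        rw [Finset.mul_sum]; apply Finset.sum_congr rfl; intro p _; ring
      _ ≤ _ := by gcongr
  have s2 : ∑ p ∈ S.filter (fun p => ¬ nn p.1 p.2 ≤ 2 * ρ), |g (m - p.1) (j - p.2) * h p.1 p.2|
      ≤ (M * A) * 2⁻¹ ^ a * (C2 * (2 * ρ) ^ (a + β + 3)) := by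
    calc _ ≤ ∑ p ∈ S.filter (fun p => ¬ nn p.1 p.2 ≤ 2 * ρ), (M * (2⁻¹ * nn p.1 p.2) ^ a) * (A * nn p.1 p.2 ^ β) := by
          apply Finset.sum_le_sum
          intro p hp
          have hp2 := (Finset.mem_filter.1 hp).2
          push Not at hp2
          have := nn_pos p.1 p.2
          rw [abs_mul]
          refine mul_le_mul ((hg _ _).trans ?_) (hhb _ _) (abs_nonneg _) (by positivity)
          gcongr 1
          apply Real.rpow_le_rpow_of_nonpos (by positivity) _ ha.le
          have := nn_tri' m j p.1 p.2
          linarith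
      _ = M * A * 2⁻¹ ^ a * ∑ p ∈ S.filter (fun p => ¬ nn p.1 p.2 ≤ 2 * ρ), nn p.1 p.2 ^ (a + β) := by
        rw [Finset.mul_sum]; apply Finset.sum_congr rfl; intro p _
        rw [Real.rpow_add (nn_pos _ _), Real.mul_rpow (by norm_num) (nn_pos _ _).le]; ring
      _ ≤ _ := by gcongr
  refine (add_le_add s1 s2).trans (le_of_eq ?_)
  rw [Real.mul_rpow hc.le hN.le, Real.mul_rpow (by norm_num) hN.le, Real.mul_rpow (by norm_num) hN.le]
  have e : ρ ^ (a + β + 3) = ρ ^ a * ρ ^ (β + 3) := by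
    rw [← Real.rpow_add hN]; congr 1; ring
  rw [e]
  generalize ρ ^ (β + 3) = X
  ring

theorem conv_bound (α β : ℝ) (hα : -3 < α) (hβ : -3 < β) (k₀ k₁ : ℕ) (hk : α + β + 3 < 2 * (k₀ : ℝ) + k₁) :
    ∃ C : ℝ, 0 ≤ C ∧ ∀ (K₁ K₂ : ℤ → ℤ → ℝ) (M₁ M₂ : ℝ), 0 ≤ M₁ → 0 ≤ M₂ → FS K₁ → FS K₂ →
    SB α (2 * k₀ + k₁) M₁ K₁ → SB β (2 * k₀ + k₁) M₂ K₂ → ∀ m j,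
    |dd k₀ k₁ (conv K₁ K₂) m j| ≤ C * (M₁ * M₂) * nn m j ^ (α + β + 3 - (2 * (k₀ : ℝ) + k₁)) := by
  set κ : ℝ := 2 * (k₀ : ℝ) + k₁ with hκ
  set n : ℕ := 2 * k₀ + k₁ with hn
  have hc : 0 < 1 / (8 * ((n:ℝ) + 1)) := by positivity
  obtain ⟨B, hB, HB⟩ := exists_cutoff n
  obtain ⟨Cn, hCn, Hn⟩ := conv_near α (β - κ) hα (by linarith)
  obtain ⟨Cf, hCf, Hf⟩ := conv_far (α - κ) β _ (by linarith) hβ (by linarith) hc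
  obtain ⟨Cp, hCp, Hp⟩ := prod_bound k₀ k₁ α 0
  refine ⟨Cn * (1 + B) + Cf * (Cp * B) + Cf, by positivity, ?_⟩
  intro K₁ K₂ M₁ M₂ hM₁ hM₂ hF1 hF2 h1 h2 m j
  have hN := nn_pos m j
  have e1 : α + 3 + (β - κ) = α + β + 3 - κ := by ring
  have e2 : α - κ + β + 3 = α + β + 3 - κ := by ring
  rw [e1] at Hn
  rw [e2] at Hf
  have hK2 : ∀ u v, |K₂ u v| ≤ M₂ * nn u v ^ β := by
    intro u v; simpa [dd_zero] using h2 0 0 (by omega) u v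
  have hK1 : ∀ u v, |K₁ u v| ≤ M₁ * nn u v ^ α := by
    intro u v; simpa [dd_zero] using h1 0 0 (by omega) u v
  have hP : 0 ≤ nn m j ^ (α + β + 3 - κ) := by positivity
  by_cases hρ : 8 * ((n:ℝ) + 1) ≤ nn m j
  · obtain ⟨χ, hχ, hχ1, hχ0⟩ := HB (nn m j) hρ
    have hχb : ∀ u v, |χ u v| ≤ 1 + B := by
      intro u v
      have := hχ 0 0 (by omega) u v
      simp [dd_zero] at this
      have t : |χ u v| ≤ |1 - χ u v| + 1 := by
        have := abs_sub (1 - χ u v) 1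
        simpa using this
      linarith
    have hF : FS (K₁ * χ) := by
      obtain ⟨S, hS⟩ := hF1
      exact ⟨S, fun p hp => by simp [hS p hp]⟩
    have split : dd k₀ k₁ (conv K₁ K₂) = conv (dd k₀ k₁ K₂) (K₁ * χ) + conv (dd k₀ k₁ (K₁ * (1 - χ))) K₂ := by
      have : K₁ = K₁ * χ + K₁ * (1 - χ) := by ring
      conv_lhs => rw [this]
      rw [conv_add _ _ hF2, dd_add, conv_comm (K₁ * χ) K₂, dd_conv _ _ _ hF, dd_conv _ _ _ hF2]
    have b1 := Hn (dd k₀ k₁ K₂) (K₁ * χ) M₂ (M₁ * (1 + B)) m j hM₂ (by positivity) hF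
      (fun u v => h2 k₀ k₁ le_rfl u v)
      (fun u v => by
        simp only [Pi.mul_apply, abs_mul]
        have := nn_pos u v
        calc _ ≤ (M₁ * nn u v ^ α) * (1 + B) := mul_le_mul (hK1 u v) (hχb u v) (abs_nonneg _) (by positivity)
          _ = _ := by ring)
      (fun u v h => by simp [hχ0 u v h])
    have b2 := Hf (dd k₀ k₁ (K₁ * (1 - χ))) K₂ (Cp * (M₁ * B)) M₂ m j (by positivity) hM₂ hF2
      (fun u v => by
        have := Hp K₁ (1 - χ) M₁ B hM₁ hB h1 hχ u v
        simpa using this) hK2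
      (fun u v h => by
        apply dd_vanish
        intro a b ha hb
        have t1 := nn_add u v a b
        have t2 := nn_nat_le a b n (by omega)
        have h' : nn u v < nn m j / 8 := by
          refine h.trans_le ?_
          rw [div_mul_eq_mul_div, one_mul]
          apply div_le_div_of_nonneg_left hN.le (by norm_num)
          have : (0:ℝ) ≤ n := by positivity
          linarith
        have := hχ1 (u + a) (v + b) (by linarith)
        simp [this])
    rw [split]
    refine (abs_add_le _ _).trans ((add_le_add b1 b2).trans ?_)
    have : 0 ≤ Cf * (M₁ * M₂) * nn m j ^ (α + β + 3 - κ) := by positivity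
    linarith
  · push Not at hρ
    rw [dd_conv _ _ _ hF2]
    have b2 := Hf (dd k₀ k₁ K₁) K₂ M₁ M₂ m j hM₁ hM₂ hF2 (fun u v => h1 k₀ k₁ le_rfl u v) hK2
      (fun u v h => by
        exfalso
        have h3 := one_le_nn u v
        rw [div_mul_eq_mul_div, one_mul, lt_div_iff₀ (by positivity)] at h
        nlinarith)
    refine b2.trans ?_
    gcongr
    have : 0 ≤ Cn * (1 + B) + Cf * (Cp * B) := by positivity
    linarith

/-! ### Taylor polynomial -/
def bb (k : ℕ) (m : ℤ) : ℝ := (∏ i ∈ Finset.range k, ((m : ℝ) - (i : ℝ))) / (k.factorial : ℝ)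

lemma d1_bb_succ (k : ℕ) : d1 (bb (k + 1)) = bb k := by
  funext m
  have hf : (k.factorial : ℝ) ≠ 0 := by exact_mod_cast k.factorial_ne_zero
  have h1 : ∏ i ∈ Finset.range (k + 1), (((m + 1 : ℤ) : ℝ) - (i : ℝ))
      = (∏ i ∈ Finset.range k, ((m : ℝ) - (i : ℝ))) * (m + 1) := by
    rw [Finset.prod_range_succ']
    congr 1
    · apply Finset.prod_congr rfl; intro i _; push_cast; ring
    · push_cast; ring
  have hk : ((k : ℝ) + 1) ≠ 0 := by positivity
  simp only [d1, bb]
  rw [h1, Finset.prod_range_succ, Nat.factorial_succ]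
  push_cast
  field_simp
  ring

lemma d1_bb_zero : d1 (bb 0) = 0 := by
  funext m; simp [d1, bb]

lemma d1_iter_zero (l : ℕ) : d1^[l] 0 = 0 := by
  induction l with
  | zero => rfl
  | succ l ih =>
    rw [Function.iterate_succ_apply', ih]; funext m; simp [d1]

lemma bb_iter_zero (l : ℕ) : ∀ k, k < l → d1^[l] (bb k) = 0 := by
  induction l with
  | zero => intro k hk; omega
  | succ l ih =>
    intro k hk
    rw [Function.iterate_succ_apply]
    rcases k with _ | k
    · rw [d1_bb_zero, d1_iter_zero]
    · rw [d1_bb_succ]; exact ih k (by omega)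

lemma bb_at_zero (l : ℕ) : ∀ k, d1^[l] (bb k) 0 = if k = l then 1 else 0 := by
  induction l with
  | zero =>
    intro k
    rcases k with _ | k
    · simp [bb]
    · simp [bb, Finset.prod_range_succ']
  | succ l ih =>
    intro k
    rw [Function.iterate_succ_apply]
    rcases k with _ | k
    · rw [d1_bb_zero, d1_iter_zero]; simp
    · rw [d1_bb_succ, ih k]; simp

def TT (z : ℝ) (G : ℤ → ℤ → ℝ) : ℤ → ℤ → ℝ :=
  G - ∑ k₀ ∈ Finset.range (Nat.ceil z), ∑ k₁ ∈ Finset.range (Nat.ceil z),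
    (if (2 * (k₀ : ℝ) + (k₁ : ℝ)) < z then dd k₀ k₁ G 0 0 else 0) • (fun m j => bb k₀ m * bb k₁ j)

lemma dd_TT (z : ℝ) (G : ℤ → ℤ → ℝ) (l₀ l₁ : ℕ) (m j : ℤ) : dd l₀ l₁ (TT z G) m j =
    dd l₀ l₁ G m j - ∑ k₀ ∈ Finset.range (Nat.ceil z), ∑ k₁ ∈ Finset.range (Nat.ceil z),
    (if (2 * (k₀ : ℝ) + (k₁ : ℝ)) < z then dd k₀ k₁ G 0 0 else 0) *
      (d1^[l₀] (bb k₀) m * d1^[l₁] (bb k₁) j) := by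
  unfold TT
  rw [dd_sub, dd_sum]
  simp only [dd_sum, dd_smul, dd_sep, Pi.sub_apply, Finset.sum_apply, Pi.smul_apply, smul_eq_mul]

lemma dd_TT_high (z : ℝ) (G : ℤ → ℤ → ℝ) (l₀ l₁ : ℕ) (h : z < 2 * (l₀ : ℝ) + l₁) (m j : ℤ) :
    dd l₀ l₁ (TT z G) m j = dd l₀ l₁ G m j := by
  rw [dd_TT, sub_eq_self]
  apply Finset.sum_eq_zero; intro k₀ _
  apply Finset.sum_eq_zero; intro k₁ _
  by_cases hc : (2 * (k₀ : ℝ) + (k₁ : ℝ)) < z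
  · have h2 : 2 * k₀ + k₁ < 2 * l₀ + l₁ := by exact_mod_cast hc.trans h
    rcases (by omega : k₀ < l₀ ∨ k₁ < l₁) with h3 | h3
    · rw [bb_iter_zero l₀ k₀ h3]; simp
    · rw [bb_iter_zero l₁ k₁ h3]; simp
  · rw [if_neg hc, zero_mul]

lemma dd_TT_zero (z : ℝ) (G : ℤ → ℤ → ℝ) (l₀ l₁ : ℕ) (h : 2 * (l₀ : ℝ) + l₁ < z) :
    dd l₀ l₁ (TT z G) 0 0 = 0 := by
  have p0 : (0:ℝ) ≤ l₀ := by positivity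
  have p1 : (0:ℝ) ≤ l₁ := by positivity
  have m0 : l₀ ∈ Finset.range (Nat.ceil z) := Finset.mem_range.2 (Nat.lt_ceil.2 (by linarith))
  have m1 : l₁ ∈ Finset.range (Nat.ceil z) := Finset.mem_range.2 (Nat.lt_ceil.2 (by linarith))
  rw [dd_TT, sub_eq_zero, Finset.sum_eq_single_of_mem l₀ m0, Finset.sum_eq_single_of_mem l₁ m1]
  · simp [bb_at_zero, h]
  · intro b _ hb; rw [bb_at_zero l₁ b, if_neg hb]; simp
  · intro b _ hb
    apply Finset.sum_eq_zero; intro k₁ _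
    rw [bb_at_zero l₀ b, if_neg hb]; simp

lemma taylor_bound (z : ℝ) (hz : ∀ q : ℕ, z ≠ (q : ℝ)) (n : ℕ) (hn : Nat.floor z + 2 ≤ n) :
    ∃ C : ℝ, 1 ≤ C ∧ ∀ (G : ℤ → ℤ → ℝ) (A : ℝ), 0 ≤ A →
    (∀ k₀ k₁ : ℕ, z < 2 * (k₀ : ℝ) + k₁ → 2 * k₀ + k₁ ≤ n → ∀ m j,
      |dd k₀ k₁ G m j| ≤ A * nn m j ^ (z - (2 * (k₀ : ℝ) + k₁))) →
    SB z n (C * A) (TT z G) := by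
  have main : ∀ d : ℕ, ∃ C : ℝ, 1 ≤ C ∧ ∀ (G : ℤ → ℤ → ℝ) (A : ℝ), 0 ≤ A →
    (∀ k₀ k₁ : ℕ, z < 2 * (k₀ : ℝ) + k₁ → 2 * k₀ + k₁ ≤ n → ∀ m j,
      |dd k₀ k₁ G m j| ≤ A * nn m j ^ (z - (2 * (k₀ : ℝ) + k₁))) →
    ∀ k₀ k₁ : ℕ, 2 * k₀ + k₁ ≤ n → n < 2 * k₀ + k₁ + d → ∀ m j,
      |dd k₀ k₁ (TT z G) m j| ≤ C * A * nn m j ^ (z - (2 * (k₀ : ℝ) + k₁)) := by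
    intro d
    induction d with
    | zero => exact ⟨1, le_rfl, by intros; omega⟩
    | succ d ih =>
      obtain ⟨C, hC, H⟩ := ih
      obtain ⟨P, hP0, hP⟩ : ∃ P : ℝ, 0 ≤ P ∧ (0 < z - ((n : ℝ) - d) → ∀ (A : ℝ) (f : ℤ → ℤ → ℝ), 0 ≤ A → f 0 0 = 0 →
          (∀ m j, |dX f m j| ≤ A * nn m j ^ (z - ((n : ℝ) - d) - 1)) →
          (∀ m j, |dT f m j| ≤ A * nn m j ^ (z - ((n : ℝ) - d) - 2)) →
          ∀ m j, |f m j| ≤ P * A * nn m j ^ (z - ((n : ℝ) - d))) := by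
        by_cases hpos : 0 < z - ((n : ℝ) - d)
        · obtain ⟨P, h0, h⟩ := path_bound _ hpos
          exact ⟨P, h0, fun _ => h⟩
        · exact ⟨0, le_rfl, fun h => absurd h hpos⟩
      refine ⟨C * (1 + P), by nlinarith, ?_⟩
      intro G A hA hG k₀ k₁ hk hkd m j
      have hN := nn_pos m j
      by_cases hlt : n < 2 * k₀ + k₁ + d
      · refine (H G A hA hG k₀ k₁ hk hlt m j).trans ?_
        gcongr
        nlinarith
      have hkn : 2 * k₀ + k₁ + d = n := by omega
      have hkr : (2 * (k₀ : ℝ) + k₁) = (n : ℝ) - d := by rw [← hkn]; push_cast; ring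
      rcases lt_or_ge z (2 * (k₀ : ℝ) + k₁) with hlow | hhigh
      · rw [dd_TT_high z G k₀ k₁ hlow]
        refine (hG k₀ k₁ hlow hk m j).trans ?_
        gcongr
        nlinarith [mul_nonneg (by linarith : 0 ≤ C) hP0]
      · have hne : z ≠ (2 * (k₀ : ℝ) + k₁) := by
          have := hz (2 * k₀ + k₁); push_cast at this; exact this
        have hstrict : (2 * (k₀ : ℝ) + k₁) < z := lt_of_le_of_ne hhigh (Ne.symm hne)
        have hfl : 2 * k₀ + k₁ ≤ Nat.floor z := Nat.le_floor (by push_cast; exact hhigh)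
        have := hP (by linarith) (C * A) (dd k₀ k₁ (TT z G)) (by positivity) (dd_TT_zero z G k₀ k₁ hstrict)
          (fun m j => by
            rw [← dd_succX']
            have := H G A hA hG k₀ (k₁ + 1) (by omega) (by omega) m j
            rw [← hkr]
            convert this using 3
            push_cast; ring)
          (fun m j => by
            rw [← dd_succT']
            have := H G A hA hG (k₀ + 1) k₁ (by omega) (by omega) m j
            rw [← hkr]
            convert this using 3
            push_cast; ring) m j
        rw [← hkr] at this
        refine this.trans ?_
        rw [show P * (C * A) = P * C * A by ring]
        have hPC : P * C ≤ C * (1 + P) := by nlinarith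
        exact mul_le_mul_of_nonneg_right (mul_le_mul_of_nonneg_right hPC hA) (by positivity)
  obtain ⟨C, hC, H⟩ := main (n + 1)
  exact ⟨C, hC, fun G A hA hG k₀ k₁ hk m j => H G A hA hG k₀ k₁ hk (by omega) m j⟩

theorem core_s13 (α β : ℝ) (hα : -3 < α) (hβ : -3 < β) (hz : ∀ q : ℕ, α + β + 3 ≠ (q : ℝ)) (n : ℕ)
    (hn : Nat.floor (α + β + 3) + 2 ≤ n) :
    ∃ C : ℝ, 0 < C ∧ ∀ (K₁ K₂ : ℤ → ℤ → ℝ) (M₁ M₂ : ℝ), 0 ≤ M₁ → 0 ≤ M₂ → FS K₁ → FS K₂ →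
    SB α n M₁ K₁ → SB β n M₂ K₂ → SB (α + β + 3) n (C * (M₁ * M₂)) (TT (α + β + 3) (conv K₁ K₂)) := by
  have h1 : ∀ k₀ k₁ : ℕ, ∃ C : ℝ, 0 ≤ C ∧ (α + β + 3 < 2 * (k₀ : ℝ) + k₁ →
      ∀ (K₁ K₂ : ℤ → ℤ → ℝ) (M₁ M₂ : ℝ), 0 ≤ M₁ → 0 ≤ M₂ → FS K₁ → FS K₂ →
      SB α (2 * k₀ + k₁) M₁ K₁ → SB β (2 * k₀ + k₁) M₂ K₂ → ∀ m j,
      |dd k₀ k₁ (conv K₁ K₂) m j| ≤ C * (M₁ * M₂) * nn m j ^ (α + β + 3 - (2 * (k₀ : ℝ) + k₁))) := by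
    intro k₀ k₁
    by_cases hk : α + β + 3 < 2 * (k₀ : ℝ) + k₁
    · obtain ⟨C, h0, h⟩ := conv_bound α β hα hβ k₀ k₁ hk
      exact ⟨C, h0, fun _ => h⟩
    · exact ⟨0, le_rfl, fun h => absurd h hk⟩
  choose c hc0 hc using h1
  set D : ℝ := 1 + ∑ a ∈ Finset.range (n + 1), ∑ b ∈ Finset.range (n + 1), c a b with hD
  have hcD : ∀ k₀ k₁ : ℕ, 2 * k₀ + k₁ ≤ n → c k₀ k₁ ≤ D := by
    intro k₀ k₁ hk
    have s1 : c k₀ k₁ ≤ ∑ b ∈ Finset.range (n + 1), c k₀ b :=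
      Finset.single_le_sum (f := fun b => c k₀ b) (fun b _ => hc0 k₀ b) (Finset.mem_range.2 (by omega))
    have s2 : ∑ b ∈ Finset.range (n + 1), c k₀ b ≤ ∑ a ∈ Finset.range (n + 1), ∑ b ∈ Finset.range (n + 1), c a b :=
      Finset.single_le_sum (f := fun a => ∑ b ∈ Finset.range (n + 1), c a b)
        (fun a _ => Finset.sum_nonneg (fun b _ => hc0 a b)) (Finset.mem_range.2 (by omega))
    linarith
  have hD0 : 0 < D := by
    have : 0 ≤ ∑ a ∈ Finset.range (n + 1), ∑ b ∈ Finset.range (n + 1), c a b :=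
      Finset.sum_nonneg (fun a _ => Finset.sum_nonneg (fun b _ => hc0 a b))
    linarith
  obtain ⟨E, hE, HE⟩ := taylor_bound (α + β + 3) hz n hn
  refine ⟨E * D, by positivity, ?_⟩
  intro K₁ K₂ M₁ M₂ hM₁ hM₂ hF1 hF2 h1 h2
  have := HE (conv K₁ K₂) (D * (M₁ * M₂)) (by positivity) (fun k₀ k₁ hk hkn m j => by
    refine (hc k₀ k₁ hk K₁ K₂ M₁ M₂ hM₁ hM₂ hF1 hF2 (h1.mono hkn) (h2.mono hkn) m j).trans ?_
    have := nn_pos m j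
    gcongr
    exact hcD k₀ k₁ hkn)
  rwa [mul_assoc]

/-! ### scaling -/
lemma fdX_iter (ε : ℝ) (k : ℕ) (f) : (fdX ε)^[k] f = fun m j => dX^[k] f m j / ε ^ k := by
  induction k with
  | zero => funext m j; simp
  | succ k ih =>
    rw [Function.iterate_succ_apply', ih, Function.iterate_succ_apply']
    funext m j; simp only [fdX, dX]; rw [← sub_div, div_div, pow_succ]

lemma fdT_iter (ε : ℝ) (k : ℕ) (f) : (fdT ε)^[k] f = fun m j => dT^[k] f m j / (ε ^ 2) ^ k := by
  induction k with
  | zero => funext m j; simp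
  | succ k ih =>
    rw [Function.iterate_succ_apply', ih, Function.iterate_succ_apply']
    funext m j; simp only [fdT, dT]; rw [← sub_div, div_div, pow_succ (ε ^ 2) k]

lemma fdiff_eq (ε : ℝ) (k₀ k₁ : ℕ) (f : ℤ → ℤ → ℝ) (m j : ℤ) :
    fdiff ε k₀ k₁ f m j = dd k₀ k₁ f m j / ε ^ (2 * k₀ + k₁) := by
  have e : (fun m j => dX^[k₁] f m j / ε ^ k₁) = (ε ^ k₁)⁻¹ • dX^[k₁] f := by
    funext m j; simp [div_eq_inv_mul]
  have e2 : ∀ g c, dT^[k₀] (c • g) = c • dT^[k₀] g := fun g c => dd_smul k₀ 0 c g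
  unfold fdiff
  rw [fdX_iter, fdT_iter, e, e2]
  simp only [Pi.smul_apply, smul_eq_mul, dd]
  rw [pow_add, pow_mul, div_eq_mul_inv, div_eq_mul_inv, mul_inv]; ring

lemma snorm_eq (ε : ℝ) (hε : 0 < ε) (m j : ℤ) : snorm ε m j = ε * max (√|(m : ℝ)|) |(j : ℝ)| := by
  unfold snorm
  rw [abs_mul, abs_mul, abs_of_pos hε, abs_of_pos (by positivity : 0 < ε ^ 2),
    Real.sqrt_mul (by positivity), Real.sqrt_sq hε.le, mul_max_of_nonneg _ _ hε.le]

lemma snormE_eq_s13 (ε : ℝ) (hε : 0 < ε) (m j : ℤ) : snormE ε m j = ε * nn m j := by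
  unfold snormE nn
  rw [snorm_eq ε hε, mul_max_of_nonneg _ 1 hε.le, mul_one]

lemma SingBound_iff (ε : ℝ) (hε : 0 < ε) (ζ M : ℝ) (n : ℕ) (K) :
    SingBound ε ζ n M K ↔ SB ζ n (M * ε ^ ζ) K := by
  unfold SingBound SB
  refine forall_congr' fun k₀ => forall_congr' fun k₁ => forall_congr' fun _ =>
    forall_congr' fun m => forall_congr' fun j => ?_
  have hp : 0 < ε ^ (2 * k₀ + k₁) := by positivity
  rw [fdiff_eq, snormE_eq_s13 ε hε, abs_div, abs_of_pos hp, div_le_iff₀ hp,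
    Real.mul_rpow hε.le (nn_pos _ _).le, Real.rpow_sub hε,
    show ε ^ (2 * (k₀ : ℝ) + k₁) = ε ^ (2 * k₀ + k₁) by exact_mod_cast Real.rpow_natCast ε (2 * k₀ + k₁)]
  have : M * (ε ^ ζ / ε ^ (2 * k₀ + k₁) * nn m j ^ (ζ - (2 * (k₀ : ℝ) + k₁))) * ε ^ (2 * k₀ + k₁)
    = M * ε ^ ζ * nn m j ^ (ζ - (2 * (k₀ : ℝ) + k₁)) := by
    generalize nn m j ^ (ζ - (2 * (k₀ : ℝ) + k₁)) = X
    field_simp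
  rw [this]

lemma FS_of_supp (ε R : ℝ) (hε : 0 < ε) (K) (h : SuppIn ε R K) : FS K := by
  set a : ℤ := ⌈(R / ε) ^ 2⌉ with ha
  set b : ℤ := ⌈R / ε⌉ with hb
  refine ⟨Finset.Icc (-a) a ×ˢ Finset.Icc (-b) b, ?_⟩
  intro p hp
  apply h
  by_contra hcon
  push Not at hcon
  apply hp
  rw [snorm_eq ε hε, ← le_div_iff₀' hε, max_le_iff, Real.sqrt_le_iff] at hcon
  obtain ⟨⟨_, h1⟩, h2⟩ := hcon
  have h1' := h1.trans (Int.le_ceil _)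
  have h2' := h2.trans (Int.le_ceil _)
  rw [← ha, abs_le] at h1'
  rw [← hb, abs_le] at h2'
  simp only [Finset.mem_product, Finset.mem_Icc]
  exact ⟨⟨by exact_mod_cast h1'.1, by exact_mod_cast h1'.2⟩, by exact_mod_cast h2'.1, by exact_mod_cast h2'.2⟩

lemma dmonomial_eq (ε : ℝ) (k₀ k₁ : ℕ) (m j : ℤ) :
    dmonomial ε k₀ k₁ m j / ((k₀.factorial : ℝ) * (k₁.factorial : ℝ)) = ε ^ (2 * k₀ + k₁) * (bb k₀ m * bb k₁ j) := by
  unfold dmonomial bb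
  simp only [← mul_sub, Finset.prod_mul_distrib, Finset.prod_const, Finset.card_range]
  rw [pow_add, pow_mul]
  field_simp

lemma dconvTaylor_eq (ε : ℝ) (hε : 0 < ε) (z : ℝ) (K₁ K₂) :
    dconvTaylor ε z K₁ K₂ = ε ^ 3 • TT z (conv K₁ K₂) := by
  have e : dconv ε K₁ K₂ = ε ^ 3 • conv K₁ K₂ := rfl
  funext m j
  unfold dconvTaylor TT
  simp only [e, dmonomial_eq, fdiff_eq, dd_smul, Pi.smul_apply, Pi.sub_apply, Finset.sum_apply, smul_eq_mul, mul_sub,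
    Finset.mul_sum]
  congr 1
  apply Finset.sum_congr rfl; intro k₀ _
  apply Finset.sum_congr rfl; intro k₁ _
  split_ifs
  · field_simp
  · simp

/-- convolution of discrete singular kernels of orders
`ζ₁, ζ₂ > -3` with `ζ̄ = ζ₁ + ζ₂ + 3 ∈ (0,∞) \ ℕ`, after subtracting the
discrete Taylor polynomial at the origin, is a discrete singular kernel of
order `ζ̄`, uniformly in `ε`. -/
theorem statement13 (ζ₁ ζ₂ : ℝ) (h₁ : -3 < ζ₁) (h₂ : -3 < ζ₂)
    (hbar_pos : 0 < ζ₁ + ζ₂ + 3) (hbar_nat : ∀ q : ℕ, ζ₁ + ζ₂ + 3 ≠ (q : ℝ))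
    (m : ℕ) (R : ℝ) (hR : 0 < R) :
    ∃ C : ℝ, 0 < C ∧
      ∀ (N : ℕ) (ε : ℝ), ε = ((2 : ℝ) ^ N)⁻¹ → 4 * (m : ℝ) * ε < 1 →
      ∀ K₁ K₂ : ℤ → ℤ → ℝ, SuppIn ε R K₁ → SuppIn ε R K₂ →
      ∀ M₁ M₂ : ℝ, 0 ≤ M₁ → 0 ≤ M₂ →
        SingBound ε ζ₁ (max m (Nat.floor (ζ₁ + ζ₂ + 3) + 2)) M₁ K₁ →
        SingBound ε ζ₂ (max m (Nat.floor (ζ₁ + ζ₂ + 3) + 2)) M₂ K₂ →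
        SingBound ε (ζ₁ + ζ₂ + 3) m (C * M₁ * M₂)
          (dconvTaylor ε (ζ₁ + ζ₂ + 3) K₁ K₂) := by
  set n := max m (Nat.floor (ζ₁ + ζ₂ + 3) + 2) with hn
  obtain ⟨C, hC, H⟩ := core_s13 ζ₁ ζ₂ h₁ h₂ hbar_nat n (le_max_right _ _)
  refine ⟨C, hC, ?_⟩
  intro N ε hε _ K₁ K₂ hS1 hS2 M₁ M₂ hM₁ hM₂ hb1 hb2
  have hε0 : 0 < ε := by rw [hε]; positivity
  rw [SingBound_iff ε hε0] at hb1 hb2 ⊢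
  have key := H K₁ K₂ _ _ (by positivity) (by positivity) (FS_of_supp ε R hε0 K₁ hS1)
    (FS_of_supp ε R hε0 K₂ hS2) hb1 hb2
  intro k₀ k₁ hk a b
  have := key k₀ k₁ (hk.trans (le_max_left _ _)) a b
  rw [dconvTaylor_eq ε hε0, dd_smul, Pi.smul_apply, Pi.smul_apply, smul_eq_mul, abs_mul,
    abs_of_pos (by positivity : 0 < ε ^ 3)]
  have e : ε ^ (ζ₁ + ζ₂ + 3) = ε ^ ζ₁ * ε ^ ζ₂ * ε ^ 3 := by
    rw [Real.rpow_add hε0, Real.rpow_add hε0]; norm_cast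
  rw [e]
  calc _ ≤ ε ^ 3 * _ := mul_le_mul_of_nonneg_left this (by positivity)
    _ = _ := by ring
end
end

section
/- Let a : ℤ → ℝ be finitely supported with a(−k) = a(k), Σ_k a(k) = 0, Σ_k k² a(k) = 2, and ν̂(θ) := Σ_k a(k) e^{−2πikθ} vanishing only for θ ∈ ℤ; set ν̄ := Σ_k |a(k)| and f(θ) := −ν̂(θ)/θ² for θ ≠ 0. Let b : ℤ → ℝ be finitely supported with Σ_k b(k) = 0 and Σ_k k b(k) = 1, set π̂(θ) := Σ_k b(k) e^{−2πikθ} and g(θ) := π̂(θ)/(iθ) for θ ≠ 0. Let c : ℤ×ℤ → ℝ be finitely supported with c(k,l) = c(l,k) and μ̂(k₁,k₂) := Σ_{y₁,y₂} c(y₁,y₂) e^{−2πi(k₁y₁+k₂y₂)}. Then for every ε = 2^{−N}, the (absolutely convergent) sum C^{⟨2⟩,ε} := ε³ Σ_{n=0}^{∞} Σ_{x∈εℤ} B_ε( D_{x,ε} P^ε(nε², ·), D_{x,ε} P^ε(nε², ·) )(x) satisfies C^{⟨2⟩,ε} = ε^{−1} ∫_{−1/2}^{1/2} g(k) g(−k)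 · (4ν̄²) / ( f(k) (4ν̄ + ν̂(k)) ) · μ̂(−k, k) dk, and this integral is finite. -/
open Real

noncomputable section

/-- One step of the operator `Id + ε²Δ_ε` on grid functions (indexed form; the
powers of `ε` cancel). Here `Δ_ε φ(x) = (2ν̄ε²)⁻¹ Σ_k a(k) φ(x+εk)` with
`ν̄ = Σ_k |a(k)|`. -/
def gridStep (a : ℤ →₀ ℝ) (f : ℤ → ℝ) : ℤ → ℝ :=
  fun j => f j + (2 * ∑ k ∈ a.support, |a k|)⁻¹ * ∑ k ∈ a.support, a k * f (j + k)

/-- `(Id + ε²Δ_ε)^n δ₀` on grid indices, so that the grid discrete heat kernel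
is `P^ε(nε², εj) = ε⁻¹ · gridHeat a n j`. -/
def gridHeat (a : ℤ →₀ ℝ) (n : ℕ) : ℤ → ℝ :=
  (gridStep a)^[n] (fun j => if j = 0 then 1 else 0)

/-- The Fourier transform `ν̂(θ) = Σ_k a(k) e^{-2πikθ}`. -/
def nuHat (a : ℤ →₀ ℝ) (θ : ℝ) : ℂ :=
  ∑ k ∈ a.support, (a k : ℂ) * Complex.exp (-(2 * Real.pi * k * θ) * Complex.I)

/-- The Fourier transform `π̂(θ) = Σ_k b(k) e^{-2πikθ}`. -/
def piHat (b : ℤ →₀ ℝ) (θ : ℝ) : ℂ :=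
  ∑ k ∈ b.support, (b k : ℂ) * Complex.exp (-(2 * Real.pi * k * θ) * Complex.I)

/-- The Fourier transform `μ̂(k₁,k₂) = Σ_{y₁,y₂} c(y₁,y₂) e^{-2πi(k₁y₁+k₂y₂)}`. -/
def muHat (c : (ℤ × ℤ) →₀ ℝ) (k₁ k₂ : ℝ) : ℂ :=
  ∑ p ∈ c.support,
    (c p : ℂ) * Complex.exp (-(2 * Real.pi * (k₁ * p.1 + k₂ * p.2)) * Complex.I)

/-- The grid function `D_{x,ε} P^ε(nε², ·)`, at the point `ε i`. -/
def DPgrid (a b : ℤ →₀ ℝ) (ε : ℝ) (n : ℕ) : ℤ → ℝ :=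
  fun i => ε⁻¹ * ∑ l ∈ b.support, b l * (ε⁻¹ * gridHeat a n (i + l))

def ekk (k : ℤ) (θ : ℝ) : ℂ := Complex.exp (-(2 * Real.pi * k * θ) * Complex.I)

lemma ekk_eq (k : ℤ) (θ : ℝ) : ekk k θ = Complex.exp (((-(2 * Real.pi * k * θ) : ℝ) : ℂ) * Complex.I) := by
  unfold ekk; push_cast; rfl

lemma ekk_norm (k : ℤ) (θ : ℝ) : ‖ekk k θ‖ = 1 := by
  rw [ekk_eq, Complex.norm_exp_ofReal_mul_I]

lemma ekk_cont (k : ℤ) : Continuous (ekk k) := by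
  unfold ekk; fun_prop

lemma ekk_add (k l : ℤ) (θ : ℝ) : ekk (k + l) θ = ekk k θ * ekk l θ := by
  unfold ekk; rw [← Complex.exp_add]; push_cast; ring_nf

lemma ekk_neg (k : ℤ) (θ : ℝ) : ekk (-k) θ = ekk k (-θ) := by
  unfold ekk; push_cast; ring_nf

lemma ekk_zero (θ : ℝ) : ekk 0 θ = 1 := by simp [ekk]

lemma ekk_sub_one (k : ℤ) (θ : ℝ) : ‖ekk k θ - 1‖ ≤ 2 * Real.pi * |(k : ℝ)| * |θ| := by
  rw [ekk_eq, mul_comm]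
  refine Real.norm_exp_I_mul_ofReal_sub_one_le.trans (le_of_eq ?_)
  rw [Real.norm_eq_abs, abs_neg, abs_mul, abs_mul, abs_of_pos Real.two_pi_pos]

lemma ekk_int (k : ℤ) : ∫ θ in (-(1/2 : ℝ))..(1/2 : ℝ), ekk k θ = if k = 0 then 1 else 0 := by
  split_ifs with h
  · subst h; simp only [ekk_zero]; rw [intervalIntegral.integral_const]; norm_num
  · have hc : (-(2 * Real.pi * k) * Complex.I : ℂ) ≠ 0 := by
      simp [h, Real.pi_ne_zero]
    have : ∀ θ : ℝ, ekk k θ = Complex.exp ((-(2 * Real.pi * k) * Complex.I : ℂ) * θ) := by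
      intro θ; unfold ekk; ring_nf
    simp only [this]
    rw [integral_exp_mul_complex hc, div_eq_zero_iff]
    left
    rw [sub_eq_zero, Complex.exp_eq_exp_iff_exists_int]
    refine ⟨-k, ?_⟩
    push_cast; ring

lemma piHat_eq (b : ℤ →₀ ℝ) (θ : ℝ) : piHat b θ = ∑ k ∈ b.support, (b k : ℂ) * ekk k θ := rfl
lemma nuHat_eq (b : ℤ →₀ ℝ) (θ : ℝ) : nuHat b θ = ∑ k ∈ b.support, (b k : ℂ) * ekk k θ := rfl

lemma piHat_cont (b : ℤ →₀ ℝ) : Continuous (piHat b) := by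
  have : piHat b = fun θ => ∑ k ∈ b.support, (b k : ℂ) * ekk k θ := rfl
  rw [this]
  exact continuous_finsetSum _ fun k _ => continuous_const.mul (ekk_cont k)

lemma piHat_bound (b : ℤ →₀ ℝ) (hb0 : ∑ k ∈ b.support, b k = 0) :
    ∃ C : ℝ, 0 ≤ C ∧ ∀ θ : ℝ, ‖piHat b θ‖ ≤ C * |θ| := by
  refine ⟨∑ k ∈ b.support, |b k| * (2 * Real.pi * |(k : ℝ)|), ?_, fun θ => ?_⟩
  · exact Finset.sum_nonneg fun k _ => by positivity
  · have h : piHat b θ = ∑ k ∈ b.support, (b k : ℂ) * (ekk k θ - 1) := by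
      simp only [mul_sub, Finset.sum_sub_distrib, mul_one]
      rw [← Complex.ofReal_sum, hb0, piHat_eq]; simp
    rw [h, Finset.sum_mul]
    refine (norm_sum_le _ _).trans (Finset.sum_le_sum fun k _ => ?_)
    rw [norm_mul, Complex.norm_real, Real.norm_eq_abs, mul_assoc]
    exact mul_le_mul_of_nonneg_left (ekk_sub_one k θ) (abs_nonneg _)

/-- `-ν̂(θ)/θ²`, extended continuously -/
def fF (a : ℤ →₀ ℝ) (θ : ℝ) : ℝ :=
  2 * Real.pi ^ 2 * ∑ k ∈ a.support, (k : ℝ) ^ 2 * a k * (Real.sinc (Real.pi * k * θ)) ^ 2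

lemma fF_cont (a : ℤ →₀ ℝ) : Continuous (fF a) := by
  unfold fF
  refine continuous_const.mul (continuous_finsetSum _ fun k _ => continuous_const.mul ?_)
  exact (Real.continuous_sinc.comp (by fun_prop)).pow 2

lemma fF_neg (a : ℤ →₀ ℝ) (θ : ℝ) : fF a (-θ) = fF a θ := by
  unfold fF; simp [Real.sinc_neg]

lemma sinc_mul_self (x : ℝ) : Real.sinc x * x = Real.sin x := by
  by_cases h : x = 0
  · simp [h]
  · rw [Real.sinc_of_ne_zero h]; field_simp

lemma nuHat_fF (a : ℤ →₀ ℝ) (ha_symm : ∀ k : ℤ, a (-k) = a k)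
    (ha0 : ∑ k ∈ a.support, a k = 0) (θ : ℝ) : nuHat a θ = ((-(fF a θ * θ ^ 2) : ℝ) : ℂ) := by
  have h0 : nuHat a θ = ∑ k ∈ a.support, ((a k * Real.cos (2 * Real.pi * k * θ) : ℝ) : ℂ)
      - (∑ k ∈ a.support, ((a k * Real.sin (2 * Real.pi * k * θ) : ℝ) : ℂ)) * Complex.I := by
    rw [nuHat_eq, Finset.sum_mul, ← Finset.sum_sub_distrib]
    refine Finset.sum_congr rfl fun k _ => ?_
    rw [ekk_eq, Complex.exp_mul_I]
    push_cast
    rw [Complex.cos_neg, Complex.sin_neg]; ring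
  have h1 : ∑ k ∈ a.support, (a k * Real.sin (2 * Real.pi * k * θ)) = 0 := by
    have : ∑ k ∈ a.support, (a k * Real.sin (2 * Real.pi * k * θ))
        = ∑ k ∈ a.support, -(a k * Real.sin (2 * Real.pi * k * θ)) := by
      refine Finset.sum_equiv (Equiv.neg ℤ) (fun k => ?_) (fun k _ => ?_)
      · simp [ha_symm]
      · simp [ha_symm]
    rw [Finset.sum_neg_distrib] at this; linarith
  rw [h0, ← Complex.ofReal_sum, ← Complex.ofReal_sum, h1]
  simp only [Complex.ofReal_zero, zero_mul, sub_zero]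
  congr 1
  have h2 : ∑ k ∈ a.support, (a k * Real.cos (2 * Real.pi * k * θ))
      = ∑ k ∈ a.support, a k - ∑ k ∈ a.support, a k * (2 * Real.sin (Real.pi * k * θ) ^ 2) := by
    rw [← Finset.sum_sub_distrib]
    refine Finset.sum_congr rfl fun k _ => ?_
    have : 2 * Real.pi * k * θ = 2 * (Real.pi * k * θ) := by ring
    rw [this, Real.cos_two_mul, Real.cos_sq']; ring
  rw [h2, ha0, zero_sub, fF, Finset.mul_sum, Finset.sum_mul]
  congr 1
  refine Finset.sum_congr rfl fun k _ => ?_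
  rw [← sinc_mul_self]; ring

lemma fF_lower (a : ℤ →₀ ℝ) (ha_symm : ∀ k : ℤ, a (-k) = a k)
    (ha0 : ∑ k ∈ a.support, a k = 0)
    (ha2 : ∑ k ∈ a.support, ((k : ℝ)) ^ 2 * a k = 2)
    (ha_four : ∀ θ : ℝ, nuHat a θ = 0 → ∃ z : ℤ, θ = (z : ℝ)) :
    ∃ d : ℝ, 0 < d ∧ ∀ θ ∈ Set.Icc (-(1/2 : ℝ)) (1/2), d ≤ fF a θ := by
  have hz : fF a 0 = 4 * Real.pi ^ 2 := by
    unfold fF; simp only [mul_zero, Real.sinc_zero, one_pow, mul_one, ha2]; ring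
  have hz0 : 0 < fF a 0 := by rw [hz]; positivity
  have hne : ∀ θ ∈ Set.Icc (-(1/2 : ℝ)) (1/2), fF a θ ≠ 0 := by
    intro θ hθ h
    have hn : nuHat a θ = 0 := by rw [nuHat_fF a ha_symm ha0, h]; simp
    obtain ⟨z, hz'⟩ := ha_four θ hn
    have h1 : z < 1 := by
      have : (z : ℝ) < 1 := by rw [← hz']; linarith [hθ.2]
      exact_mod_cast this
    have h2 : -1 < z := by
      have : (-1 : ℝ) < z := by rw [← hz']; linarith [hθ.1]
      exact_mod_cast this
    have : z = 0 := by omega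
    rw [this] at hz'
    rw [hz'] at h; simp at h; linarith
  have hpos : ∀ θ ∈ Set.Icc (-(1/2 : ℝ)) (1/2), 0 < fF a θ := by
    intro θ hθ
    by_contra! hc
    have hp : IsPreconnected (Set.Icc (-(1/2 : ℝ)) (1/2)) := isPreconnected_Icc
    have := hp.intermediate_value hθ (show (0:ℝ) ∈ _ by constructor <;> norm_num)
      (fF_cont a).continuousOn
    obtain ⟨y, hy, hy0⟩ := this ⟨hc, hz0.le⟩
    exact hne y hy hy0
  obtain ⟨x, hx, hmin⟩ := (isCompact_Icc (a := (-(1/2 : ℝ))) (b := 1/2)).exists_isMinOn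
    ⟨0, by constructor <;> norm_num⟩ (fF_cont a).continuousOn
  exact ⟨fF a x, hpos x hx, fun θ hθ => hmin hθ⟩

lemma fF_upper (a : ℤ →₀ ℝ) (ha_symm : ∀ k : ℤ, a (-k) = a k)
    (ha0 : ∑ k ∈ a.support, a k = 0) (θ : ℝ) : fF a θ * θ ^ 2 ≤ ∑ k ∈ a.support, |a k| := by
  have h : ‖nuHat a θ‖ ≤ ∑ k ∈ a.support, |a k| := by
    rw [nuHat_eq]
    refine (norm_sum_le _ _).trans (Finset.sum_le_sum fun k _ => ?_)
    rw [norm_mul, ekk_norm, Complex.norm_real, Real.norm_eq_abs, mul_one]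
  rw [nuHat_fF a ha_symm ha0, Complex.norm_real, Real.norm_eq_abs, abs_neg] at h
  exact (le_abs_self _).trans h

def mm (a : ℤ →₀ ℝ) (θ : ℝ) : ℝ := 1 - fF a θ * θ ^ 2 / (2 * ∑ k ∈ a.support, |a k|)

lemma mm_neg (a : ℤ →₀ ℝ) (θ : ℝ) : mm a (-θ) = mm a θ := by
  unfold mm; simp [fF_neg]

lemma mm_cont (a : ℤ →₀ ℝ) : Continuous (mm a) := by
  unfold mm; have := fF_cont a; fun_prop

/-- Fourier transform of a grid function -/
def FT (h : ℤ → ℝ) (θ : ℝ) : ℂ := ∑' i : ℤ, (h i : ℂ) * ekk (-i) θ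

lemma fin_summ (h : ℤ → ℝ) (hf : (Function.support h).Finite) (g : ℤ → ℂ) :
    Summable fun i => (h i : ℂ) * g i := by
  refine summable_of_hasFiniteSupport (hf.subset fun i hi => ?_)
  simp only [Function.mem_support] at *
  intro h0; apply hi; simp [h0]

lemma shift_fin (h : ℤ → ℝ) (hf : (Function.support h).Finite) (l : ℤ) :
    (Function.support fun i => h (i + l)).Finite :=
  hf.preimage (f := fun i => i + l) (add_left_injective l).injOn

lemma FT_shift (h : ℤ → ℝ) (l : ℤ) (θ : ℝ) : FT (fun i => h (i + l)) θ = ekk l θ * FT h θ := by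
  unfold FT
  rw [← tsum_mul_left, ← (Equiv.addRight l).tsum_eq (fun i => ekk l θ * ((h i : ℂ) * ekk (-i) θ))]
  refine tsum_congr fun i => ?_
  have : ekk (-i) θ = ekk l θ * ekk (-(i + l)) θ := by rw [← ekk_add]; congr 1; ring
  simp only [Equiv.coe_addRight]
  rw [this]; ring

lemma sum_fin (b : ℤ →₀ ℝ) (h : ℤ → ℝ) (hf : (Function.support h).Finite) :
    (Function.support fun i => ∑ l ∈ b.support, b l * h (i + l)).Finite := by
  refine Set.Finite.subset (b.support.finite_toSet.biUnion fun l _ => shift_fin h hf l) ?_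
  intro i hi
  simp only [Function.mem_support] at hi
  obtain ⟨l, hl, h0⟩ := Finset.exists_ne_zero_of_sum_ne_zero hi
  exact Set.mem_biUnion (Finset.mem_coe.2 hl) (right_ne_zero_of_mul h0)

lemma FT_sum (b : ℤ →₀ ℝ) (h : ℤ → ℝ) (hf : (Function.support h).Finite) (θ : ℝ) :
    FT (fun i => ∑ l ∈ b.support, b l * h (i + l)) θ = piHat b θ * FT h θ := by
  rw [piHat_eq, Finset.sum_mul]
  have : ∀ l, (b l : ℂ) * ekk l θ * FT h θ = ∑' i : ℤ, (b l : ℂ) * (((h (i + l) : ℝ) : ℂ) * ekk (-i) θ) := by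
    intro l
    rw [mul_assoc, ← FT_shift, tsum_mul_left]; rfl
  simp only [this]
  rw [← Summable.tsum_finsetSum fun l _ => (fin_summ _ (shift_fin h hf l) _).mul_left _]
  unfold FT
  refine tsum_congr fun i => ?_
  push_cast
  rw [Finset.sum_mul]
  simp only [mul_assoc]

lemma step_fin (a : ℤ →₀ ℝ) (h : ℤ → ℝ) (hf : (Function.support h).Finite) :
    (Function.support (gridStep a h)).Finite := by
  refine (hf.union (sum_fin a h hf)).subset fun i hi => ?_
  by_contra hc
  simp only [Set.mem_union, Function.mem_support, not_or, not_not] at hc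
  apply hi
  simp only [gridStep]; rw [hc.1, hc.2]; simp

lemma FT_step (a : ℤ →₀ ℝ) (ha_symm : ∀ k : ℤ, a (-k) = a k)
    (ha0 : ∑ k ∈ a.support, a k = 0) (h : ℤ → ℝ) (hf : (Function.support h).Finite) (θ : ℝ) :
    FT (gridStep a h) θ = (mm a θ : ℂ) * FT h θ := by
  have h1 : (mm a θ : ℂ) = 1 + (((2 * ∑ k ∈ a.support, |a k|)⁻¹ : ℝ) : ℂ) * piHat a θ := by
    have : piHat a θ = nuHat a θ := rfl
    rw [this, nuHat_fF a ha_symm ha0, ← Complex.ofReal_mul, ← Complex.ofReal_one, ← Complex.ofReal_add]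
    congr 1
    unfold mm; ring
  rw [h1, add_mul, one_mul, mul_assoc, ← FT_sum a h hf]
  unfold FT
  rw [← tsum_mul_left, ← Summable.tsum_add (fin_summ _ hf _) ((fin_summ _ (sum_fin a h hf) _).mul_left _)]
  refine tsum_congr fun i => ?_
  unfold gridStep; push_cast; ring

lemma heat_succ (a : ℤ →₀ ℝ) (n : ℕ) : gridHeat a (n+1) = gridStep a (gridHeat a n) := by
  unfold gridHeat; rw [Function.iterate_succ_apply']

lemma heat_fin (a : ℤ →₀ ℝ) (n : ℕ) : (Function.support (gridHeat a n)).Finite := by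
  induction n with
  | zero =>
    refine (Set.finite_singleton (0:ℤ)).subset fun i hi => ?_
    by_contra hc
    apply hi; simp at hc; simp [gridHeat, hc]
  | succ n ih => rw [heat_succ]; exact step_fin a _ ih

lemma FT_heat (a : ℤ →₀ ℝ) (ha_symm : ∀ k : ℤ, a (-k) = a k)
    (ha0 : ∑ k ∈ a.support, a k = 0) (n : ℕ) (θ : ℝ) :
    FT (gridHeat a n) θ = (mm a θ : ℂ) ^ n := by
  induction n with
  | zero =>
    unfold FT
    rw [tsum_eq_single 0]
    · simp [gridHeat, ekk_zero]
    · intro i hi; simp [gridHeat, hi]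
  | succ n ih => rw [heat_succ, FT_step a ha_symm ha0 _ (heat_fin a n), ih, pow_succ']

lemma parseval (h g : ℤ → ℝ) (hf : (Function.support h).Finite) (gf : (Function.support g).Finite) :
    ((∑' i, h i * g i : ℝ) : ℂ) = ∫ θ in (-(1/2 : ℝ))..(1/2 : ℝ), FT h θ * FT g (-θ) := by
  set S := hf.toFinset with hS
  set T := gf.toFinset with hT
  have hS0 : ∀ i ∉ S, h i = 0 := by intro i hi; simpa [hS] using hi
  have hT0 : ∀ i ∉ T, g i = 0 := by intro i hi; simpa [hT] using hi
  have e1 : ∀ θ, FT h θ = ∑ i ∈ S, (h i : ℂ) * ekk (-i) θ := by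
    intro θ; exact tsum_eq_sum fun i hi => by simp [hS0 i hi]
  have e2 : ∀ θ, FT g θ = ∑ i ∈ T, (g i : ℂ) * ekk (-i) θ := by
    intro θ; exact tsum_eq_sum fun i hi => by simp [hT0 i hi]
  have e3 : ∀ θ, FT h θ * FT g (-θ) = ∑ i ∈ S, ∑ j ∈ T, ((h i : ℂ) * g j) * ekk (j - i) θ := by
    intro θ
    rw [e1, e2, Finset.sum_mul_sum]
    refine Finset.sum_congr rfl fun i _ => Finset.sum_congr rfl fun j _ => ?_
    rw [← ekk_neg, neg_neg, sub_eq_add_neg, ekk_add]; ring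
  simp only [e3]
  rw [intervalIntegral.integral_finsetSum]
  · rw [tsum_eq_sum (s := S) fun i hi => by simp [hS0 i hi]]
    push_cast
    refine Finset.sum_congr rfl fun i _ => ?_
    rw [intervalIntegral.integral_finsetSum]
    · simp only [intervalIntegral.integral_const_mul, ekk_int, sub_eq_zero]
      simp only [mul_ite, mul_one, mul_zero]
      rw [Finset.sum_ite_eq']
      split_ifs with h1
      · rfl
      · simp [hT0 i h1]
    · intro j _
      exact (continuous_const.mul (ekk_cont _)).intervalIntegrable _ _
  · intro i _
    exact (continuous_finsetSum _ fun j _ => continuous_const.mul (ekk_cont _)).intervalIntegrable _ _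

def hh (a b : ℤ →₀ ℝ) (n : ℕ) : ℤ → ℝ := fun i => ∑ l ∈ b.support, b l * gridHeat a n (i + l)

lemma DP_hh (a b : ℤ →₀ ℝ) (ε : ℝ) (n : ℕ) (i : ℤ) : DPgrid a b ε n i = ε⁻¹ ^ 2 * hh a b n i := by
  unfold DPgrid hh
  rw [Finset.mul_sum, Finset.mul_sum]
  exact Finset.sum_congr rfl fun l _ => by ring

lemma hh_fin (a b : ℤ →₀ ℝ) (n : ℕ) : (Function.support (hh a b n)).Finite :=
  sum_fin b _ (heat_fin a n)

lemma corr_summ (a b : ℤ →₀ ℝ) (n : ℕ) (q r : ℤ) :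
    Summable fun i => hh a b n (i + q) * hh a b n (i + r) := by
  refine summable_of_hasFiniteSupport ((shift_fin _ (hh_fin a b n) q).subset fun i hi => ?_)
  exact left_ne_zero_of_mul hi

def AA (b : ℤ →₀ ℝ) (θ : ℝ) : ℂ := piHat b θ * piHat b (-θ)

lemma AA_cont (b : ℤ →₀ ℝ) : Continuous (AA b) :=
  (piHat_cont b).mul ((piHat_cont b).comp continuous_neg)

lemma corr (a b : ℤ →₀ ℝ) (ha_symm : ∀ k : ℤ, a (-k) = a k)
    (ha0 : ∑ k ∈ a.support, a k = 0) (n : ℕ) (q r : ℤ) :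
    ((∑' i, hh a b n (i + q) * hh a b n (i + r) : ℝ) : ℂ) =
      ∫ θ in (-(1/2 : ℝ))..(1/2 : ℝ), AA b θ * (((mm a θ) ^ 2 : ℝ) : ℂ) ^ n * (ekk r θ * ekk q (-θ)) := by
  have : ∀ i, hh a b n (i + q) * hh a b n (i + r) = hh a b n (i + r) * hh a b n (i + q) :=
    fun i => mul_comm _ _
  simp only [this]
  rw [parseval _ _ (shift_fin _ (hh_fin a b n) r) (shift_fin _ (hh_fin a b n) q)]
  congr 1
  funext θ
  have h2 : ∀ θ, FT (hh a b n) θ = piHat b θ * (mm a θ : ℂ) ^ n := by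
    intro θ
    rw [← FT_heat a ha_symm ha0]; exact FT_sum b _ (heat_fin a n) θ
  rw [FT_shift, FT_shift, h2, h2, mm_neg]
  unfold AA
  push_cast
  ring

lemma key (a : ℤ →₀ ℝ)
    (ha_symm : ∀ k : ℤ, a (-k) = a k)
    (ha0 : ∑ k ∈ a.support, a k = 0)
    (ha2 : ∑ k ∈ a.support, ((k : ℝ)) ^ 2 * a k = 2)
    (ha_four : ∀ θ : ℝ, nuHat a θ = 0 → ∃ z : ℤ, θ = (z : ℝ))
    (b : ℤ →₀ ℝ)
    (hb0 : ∑ k ∈ b.support, b k = 0) :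
    0 < ∑ k ∈ a.support, |a k| ∧ ∃ C : ℝ, 0 ≤ C ∧ ∀ θ ∈ Set.Icc (-(1/2 : ℝ)) (1/2), θ ≠ 0 →
      0 < fF a θ ∧ (mm a θ) ^ 2 < 1 ∧ ‖AA b θ‖ * (1 - (mm a θ) ^ 2)⁻¹ ≤ C := by
  obtain ⟨d, hd, hdF⟩ := fF_lower a ha_symm ha0 ha2 ha_four
  obtain ⟨C, hC, hCb⟩ := piHat_bound b hb0
  have hs : 0 < ∑ k ∈ a.support, |a k| := by
    have h1 := fF_upper a ha_symm ha0 (1/2)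
    have h2 := hdF (1/2) (by constructor <;> norm_num)
    nlinarith
  refine ⟨hs, C ^ 2 * (2 * ∑ k ∈ a.support, |a k|) / d, by positivity, fun θ hθ h0 => ?_⟩
  have h1 := fF_upper a ha_symm ha0 θ
  have h2 := hdF θ hθ
  have hθ2 : 0 < θ ^ 2 := by positivity
  set s := ∑ k ∈ a.support, |a k| with hsdef
  set u := fF a θ * θ ^ 2 / (2 * s) with hu
  have hm : mm a θ = 1 - u := rfl
  have hu2 : u ≤ 1 / 2 := by rw [hu, div_le_iff₀ (by positivity)]; linarith
  have hu1 : d * θ ^ 2 / (2 * s) ≤ u := by rw [hu]; gcongr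
  have hu0 : 0 < d * θ ^ 2 / (2 * s) := by positivity
  have h3 : d * θ ^ 2 / (2 * s) ≤ 1 - (mm a θ) ^ 2 := by rw [hm]; nlinarith
  refine ⟨by linarith, by linarith, ?_⟩
  have hA : ‖AA b θ‖ ≤ C ^ 2 * θ ^ 2 := by
    unfold AA
    rw [norm_mul]
    have k1 := hCb θ
    have k2 := hCb (-θ)
    rw [abs_neg] at k2
    calc _ ≤ (C * |θ|) * (C * |θ|) := by gcongr
      _ = C ^ 2 * |θ| ^ 2 := by ring
      _ = _ := by rw [sq_abs]
  have hi : 0 ≤ (1 - (mm a θ) ^ 2)⁻¹ := inv_nonneg.2 (by linarith)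
  calc _ ≤ (C ^ 2 * θ ^ 2) * (d * θ ^ 2 / (2 * s))⁻¹ := by gcongr
    _ = _ := by field_simp

lemma ae_ne_zero : ∀ᵐ t : ℝ ∂MeasureTheory.volume, t ≠ 0 := by
  simp [MeasureTheory.ae_iff]

lemma uIoc_Icc {t : ℝ} (h : t ∈ Set.uIoc (-(1/2 : ℝ)) (1/2)) : t ∈ Set.Icc (-(1/2 : ℝ)) (1/2) := by
  rw [Set.uIoc_of_le (by norm_num)] at h; exact ⟨h.1.le, h.2⟩

lemma bdd_ii {E : Type*} [NormedAddCommGroup E] (f : ℝ → E)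
    (hf : MeasureTheory.AEStronglyMeasurable f MeasureTheory.volume) (M : ℝ)
    (h : ∀ θ ∈ Set.Icc (-(1/2 : ℝ)) (1/2), θ ≠ 0 → ‖f θ‖ ≤ M) :
    IntervalIntegrable f MeasureTheory.volume (-(1/2 : ℝ)) (1/2) := by
  rw [intervalIntegrable_iff]
  refine MeasureTheory.Measure.integrableOn_of_bounded (M := M) (by simp [Set.uIoc]) hf ?_
  rw [MeasureTheory.ae_restrict_iff' measurableSet_uIoc]
  filter_upwards [ae_ne_zero] with t ht hm
  exact h t (uIoc_Icc hm) ht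

lemma dct (a : ℤ →₀ ℝ)
    (ha_symm : ∀ k : ℤ, a (-k) = a k)
    (ha0 : ∑ k ∈ a.support, a k = 0)
    (ha2 : ∑ k ∈ a.support, ((k : ℝ)) ^ 2 * a k = 2)
    (ha_four : ∀ θ : ℝ, nuHat a θ = 0 → ∃ z : ℤ, θ = (z : ℝ))
    (b : ℤ →₀ ℝ)
    (hb0 : ∑ k ∈ b.support, b k = 0) (w : ℝ → ℂ) (hw : Continuous w) (M : ℝ)
    (hM : ∀ θ, ‖w θ‖ ≤ M) :
    HasSum (fun n : ℕ => ∫ θ in (-(1/2 : ℝ))..(1/2 : ℝ), AA b θ * (((mm a θ) ^ 2 : ℝ) : ℂ) ^ n * w θ)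
      (∫ θ in (-(1/2 : ℝ))..(1/2 : ℝ), AA b θ * (((1 - (mm a θ) ^ 2)⁻¹ : ℝ) : ℂ) * w θ) ∧
    IntervalIntegrable (fun θ => AA b θ * (((1 - (mm a θ) ^ 2)⁻¹ : ℝ) : ℂ) * w θ)
      MeasureTheory.volume (-(1/2 : ℝ)) (1/2) := by
  obtain ⟨hs, C, hC, hk⟩ := key a ha_symm ha0 ha2 ha_four b hb0
  have hM0 : 0 ≤ M := (norm_nonneg _).trans (hM 0)
  have hAc := AA_cont b
  have hmc := mm_cont a
  have hAm := hAc.measurable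
  have hmm := hmc.measurable
  have hwm := hw.measurable
  constructor
  · refine intervalIntegral.hasSum_integral_of_dominated_convergence
      (fun n θ => ‖AA b θ‖ * ((mm a θ) ^ 2) ^ n * M) ?_ ?_ ?_ ?_ ?_
    · intro n
      exact Continuous.aestronglyMeasurable (by fun_prop)
    · intro n
      refine Filter.Eventually.of_forall fun θ _ => ?_
      rw [norm_mul, norm_mul, norm_pow, Complex.norm_real, Real.norm_eq_abs, abs_of_nonneg (sq_nonneg _)]
      gcongr
      exact hM θ
    · filter_upwards [ae_ne_zero] with t ht hm
      obtain ⟨-, h2, -⟩ := hk t (uIoc_Icc hm) ht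
      exact ((summable_geometric_of_lt_one (sq_nonneg _) h2).mul_left _).mul_right _
    · have : IntervalIntegrable (fun θ => ‖AA b θ‖ * (1 - (mm a θ) ^ 2)⁻¹ * M)
          MeasureTheory.volume (-(1/2 : ℝ)) (1/2) := by
        refine bdd_ii _ (Measurable.aestronglyMeasurable (by fun_prop)) (C * M) ?_
        intro θ hθ h0
        obtain ⟨-, h2, h3⟩ := hk θ hθ h0
        have : 0 < (1 - (mm a θ) ^ 2)⁻¹ := inv_pos.2 (by linarith)
        rw [Real.norm_eq_abs, abs_of_nonneg (by positivity)]
        gcongr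
      refine this.congr_ae ?_
      rw [Filter.EventuallyEq, MeasureTheory.ae_restrict_iff' measurableSet_uIoc]
      filter_upwards [ae_ne_zero] with t ht hm
      obtain ⟨-, h2, -⟩ := hk t (uIoc_Icc hm) ht
      rw [tsum_mul_right, tsum_mul_left, tsum_geometric_of_lt_one (sq_nonneg _) h2]
    · filter_upwards [ae_ne_zero] with t ht hm
      obtain ⟨-, h2, -⟩ := hk t (uIoc_Icc hm) ht
      refine HasSum.mul_right _ (HasSum.mul_left _ ?_)
      have := hasSum_geometric_of_lt_one (sq_nonneg _) h2
      have := Complex.hasSum_ofReal.2 this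
      simpa only [Complex.ofReal_pow] using this
  · refine bdd_ii _ (Measurable.aestronglyMeasurable ?_) (C * M) ?_
    · fun_prop
    · intro θ hθ h0
      obtain ⟨-, h2, h3⟩ := hk θ hθ h0
      have : 0 < (1 - (mm a θ) ^ 2)⁻¹ := inv_pos.2 (by linarith)
      rw [norm_mul, norm_mul, Complex.norm_real, Real.norm_eq_abs, abs_of_pos this]
      have := hM θ
      gcongr

lemma muHat_eq (c : (ℤ × ℤ) →₀ ℝ) (θ : ℝ) :
    muHat c (-θ) θ = ∑ p ∈ c.support, (c p : ℂ) * (ekk p.2 θ * ekk p.1 (-θ)) := by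
  unfold muHat ekk
  refine Finset.sum_congr rfl fun p _ => ?_
  rw [← Complex.exp_add]; push_cast; ring_nf

lemma muHat_cont (c : (ℤ × ℤ) →₀ ℝ) : Continuous fun θ : ℝ => muHat c (-θ) θ := by
  simp only [muHat_eq]
  exact continuous_finsetSum _ fun p _ => continuous_const.mul
    ((ekk_cont _).mul ((ekk_cont _).comp continuous_neg))

lemma muHat_bd (c : (ℤ × ℤ) →₀ ℝ) (θ : ℝ) : ‖muHat c (-θ) θ‖ ≤ ∑ p ∈ c.support, |c p| := by
  rw [muHat_eq]
  refine (norm_sum_le _ _).trans (Finset.sum_le_sum fun k _ => ?_)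
  rw [norm_mul, norm_mul, ekk_norm, ekk_norm, Complex.norm_real, Real.norm_eq_abs, mul_one, mul_one]

lemma sq_summ (a : ℤ →₀ ℝ)
    (ha_symm : ∀ k : ℤ, a (-k) = a k)
    (ha0 : ∑ k ∈ a.support, a k = 0)
    (ha2 : ∑ k ∈ a.support, ((k : ℝ)) ^ 2 * a k = 2)
    (ha_four : ∀ θ : ℝ, nuHat a θ = 0 → ∃ z : ℤ, θ = (z : ℝ))
    (b : ℤ →₀ ℝ)
    (hb0 : ∑ k ∈ b.support, b k = 0) (q : ℤ) :
    Summable fun p : ℕ × ℤ => hh a b p.1 (p.2 + q) ^ 2 := by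
  rw [summable_prod_of_nonneg (fun p => sq_nonneg _)]
  constructor
  · intro n; simpa only [sq] using corr_summ a b n q q
  · rw [← Complex.summable_ofReal]
    simp only [sq, corr a b ha_symm ha0]
    refine (dct a ha_symm ha0 ha2 ha_four b hb0 (fun θ => ekk q θ * ekk q (-θ))
      ((ekk_cont _).mul ((ekk_cont _).comp continuous_neg)) 1 ?_).1.summable.congr fun n => ?_
    · intro θ; simp [ekk_norm]
    · simp only [sq]

set_option maxHeartbeats 1000000

/-- exact value of the renormalization constant `C^{⟨2⟩,ε}`. -/
theorem statement18 (a : ℤ →₀ ℝ)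
    (ha_symm : ∀ k : ℤ, a (-k) = a k)
    (ha0 : ∑ k ∈ a.support, a k = 0)
    (ha2 : ∑ k ∈ a.support, ((k : ℝ)) ^ 2 * a k = 2)
    (ha_four : ∀ θ : ℝ, nuHat a θ = 0 → ∃ z : ℤ, θ = (z : ℝ))
    (b : ℤ →₀ ℝ)
    (hb0 : ∑ k ∈ b.support, b k = 0)
    (hb1 : ∑ k ∈ b.support, (k : ℝ) * b k = 1)
    (c : (ℤ × ℤ) →₀ ℝ) (hc : ∀ k l : ℤ, c (k, l) = c (l, k))
    (N : ℕ) (ε : ℝ) (hε : ε = ((2 : ℝ) ^ N)⁻¹) :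
    Summable (fun p : ℕ × ℤ =>
      |∑ q ∈ c.support, c q * DPgrid a b ε p.1 (p.2 + q.1) * DPgrid a b ε p.1 (p.2 + q.2)|) ∧
    ((ε ^ 3 * ∑' n : ℕ, ∑' i : ℤ,
        ∑ q ∈ c.support, c q * DPgrid a b ε n (i + q.1) * DPgrid a b ε n (i + q.2) : ℝ) : ℂ) =
      (ε⁻¹ : ℝ) * ∫ k in (-(1/2 : ℝ))..(1/2 : ℝ),
        (piHat b k / (Complex.I * k)) * (piHat b (-k) / (Complex.I * (-k))) *
          ((4 * ((∑ l ∈ a.support, |a l| : ℝ) : ℂ) ^ 2) /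
            ((-(nuHat a k) / (k : ℂ) ^ 2) *
              (4 * ((∑ l ∈ a.support, |a l| : ℝ) : ℂ) + nuHat a k))) *
          muHat c (-k) k ∧
    IntervalIntegrable (fun k : ℝ =>
        (piHat b k / (Complex.I * k)) * (piHat b (-k) / (Complex.I * (-k))) *
          ((4 * ((∑ l ∈ a.support, |a l| : ℝ) : ℂ) ^ 2) /
            ((-(nuHat a k) / (k : ℂ) ^ 2) *
              (4 * ((∑ l ∈ a.support, |a l| : ℝ) : ℂ) + nuHat a k))) *
          muHat c (-k) k)
      MeasureTheory.volume (-(1/2 : ℝ)) (1/2 : ℝ) := by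
  have hε0 : ε ≠ 0 := by rw [hε]; positivity
  obtain ⟨hs, C, hC, hk⟩ := key a ha_symm ha0 ha2 ha_four b hb0
  obtain ⟨hsum, hint⟩ := dct a ha_symm ha0 ha2 ha_four b hb0 (fun θ => muHat c (-θ) θ)
    (muHat_cont c) _ (muHat_bd c)
  have hpt : ∀ k ∈ Set.Icc (-(1/2 : ℝ)) (1/2), k ≠ 0 →
      AA b k * (((1 - (mm a k) ^ 2)⁻¹ : ℝ) : ℂ) * muHat c (-k) k =
        (piHat b k / (Complex.I * k)) * (piHat b (-k) / (Complex.I * (-k))) *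
          ((4 * ((∑ l ∈ a.support, |a l| : ℝ) : ℂ) ^ 2) /
            ((-(nuHat a k) / (k : ℂ) ^ 2) *
              (4 * ((∑ l ∈ a.support, |a l| : ℝ) : ℂ) + nuHat a k))) *
          muHat c (-k) k := by
    intro k hkI hk0
    obtain ⟨hF, hm, -⟩ := hk k hkI hk0
    have hup := fF_upper a ha_symm ha0 k
    congr 1
    rw [nuHat_fF a ha_symm ha0]
    unfold AA mm
    set s := ∑ l ∈ a.support, |a l|
    set F := fF a k
    have h1 : (k : ℂ) ≠ 0 := by exact_mod_cast hk0
    have h2 : (F : ℂ) ≠ 0 := by exact_mod_cast hF.ne'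
    have h3 : (s : ℂ) ≠ 0 := by exact_mod_cast hs.ne'
    have h4' : 4 * s - F * k ^ 2 ≠ 0 := by
      have : 0 < 4 * s - F * k ^ 2 := by linarith
      exact this.ne'
    have h4 : (4 * s - F * k ^ 2 : ℂ) ≠ 0 := by exact_mod_cast h4'
    have h5 : (1 - (1 - F * k ^ 2 / (2 * s)) ^ 2)⁻¹ = 4 * s ^ 2 / (F * k ^ 2 * (4 * s - F * k ^ 2)) := by
      have hs' := hs.ne'
      have hF' := hF.ne'
      have : 1 - (1 - F * k ^ 2 / (2 * s)) ^ 2 = (F * k ^ 2 * (4 * s - F * k ^ 2)) / (4 * s ^ 2) := by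
        field_simp; ring
      rw [this, inv_div]
    rw [h5]
    have h6 : (piHat b k / (Complex.I * k)) * (piHat b (-k) / (Complex.I * (-k)))
        = piHat b k * piHat b (-k) / (k : ℂ) ^ 2 := by
      rw [div_mul_div_comm]
      congr 1
      linear_combination (-(k:ℂ)^2) * Complex.I_mul_I
    rw [h6]
    push_cast
    have h7 : (4 * s + -(F * (k:ℂ) ^ 2) : ℂ) = 4 * s - F * k ^ 2 := by ring
    rw [h7, neg_neg]
    field_simp
  have hae : ∀ᵐ k : ℝ ∂MeasureTheory.volume, k ∈ Set.uIoc (-(1/2 : ℝ)) (1/2) →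
      AA b k * (((1 - (mm a k) ^ 2)⁻¹ : ℝ) : ℂ) * muHat c (-k) k =
        (piHat b k / (Complex.I * k)) * (piHat b (-k) / (Complex.I * (-k))) *
          ((4 * ((∑ l ∈ a.support, |a l| : ℝ) : ℂ) ^ 2) /
            ((-(nuHat a k) / (k : ℂ) ^ 2) *
              (4 * ((∑ l ∈ a.support, |a l| : ℝ) : ℂ) + nuHat a k))) *
          muHat c (-k) k := by
    filter_upwards [ae_ne_zero] with t ht hm
    exact hpt t (uIoc_Icc hm) ht
  refine ⟨?_, ?_, ?_⟩
  · have hsq := sq_summ a ha_symm ha0 ha2 ha_four b hb0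
    have hB : Summable fun p : ℕ × ℤ => ∑ q ∈ c.support, |c q| * (ε⁻¹ ^ 4) *
        (hh a b p.1 (p.2 + q.1) ^ 2 + hh a b p.1 (p.2 + q.2) ^ 2) :=
      summable_sum fun q _ => ((hsq q.1).add (hsq q.2)).mul_left _
    refine Summable.of_nonneg_of_le (fun p => abs_nonneg _) (fun p => ?_) hB
    refine (Finset.abs_sum_le_sum_abs _ _).trans (Finset.sum_le_sum fun q _ => ?_)
    rw [DP_hh, DP_hh]
    set x := hh a b p.1 (p.2 + q.1)
    set y := hh a b p.1 (p.2 + q.2)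
    have e : c q * (ε⁻¹ ^ 2 * x) * (ε⁻¹ ^ 2 * y) = c q * (ε⁻¹ ^ 4) * (x * y) := by ring
    have e4 : 0 ≤ ε⁻¹ ^ 4 := by positivity
    rw [e, abs_mul, abs_mul, abs_of_nonneg e4]
    gcongr
    rw [abs_le]
    constructor <;> nlinarith [sq_nonneg (x + y), sq_nonneg (x - y), sq_nonneg x, sq_nonneg y]
  · rw [← intervalIntegral.integral_congr_ae hae, ← hsum.tsum_eq]
    have hn : ∀ n : ℕ, ((∑' i : ℤ, ∑ q ∈ c.support,
        c q * DPgrid a b ε n (i + q.1) * DPgrid a b ε n (i + q.2) : ℝ) : ℂ) = ((ε⁻¹ ^ 4 : ℝ) : ℂ) *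
        ∫ θ in (-(1/2 : ℝ))..(1/2 : ℝ),
          AA b θ * (((mm a θ) ^ 2 : ℝ) : ℂ) ^ n * muHat c (-θ) θ := by
      intro n
      have e1 : ∀ i : ℤ, ∑ q ∈ c.support,
          c q * DPgrid a b ε n (i + q.1) * DPgrid a b ε n (i + q.2) =
          ∑ q ∈ c.support, (ε⁻¹ ^ 4 * c q) * (hh a b n (i + q.1) * hh a b n (i + q.2)) := by
        intro i
        refine Finset.sum_congr rfl fun q _ => ?_
        rw [DP_hh, DP_hh]; ring
      simp only [e1]
      rw [Summable.tsum_finsetSum fun q _ => (corr_summ a b n q.1 q.2).mul_left _]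
      simp only [tsum_mul_left]
      rw [Complex.ofReal_sum]
      simp only [Complex.ofReal_mul (_ * _), corr a b ha_symm ha0]
      have e2 : ∀ θ : ℝ, AA b θ * (((mm a θ) ^ 2 : ℝ) : ℂ) ^ n * muHat c (-θ) θ =
          ∑ q ∈ c.support, (c q : ℂ) *
            (AA b θ * (((mm a θ) ^ 2 : ℝ) : ℂ) ^ n * (ekk q.2 θ * ekk q.1 (-θ))) := by
        intro θ
        rw [muHat_eq, Finset.mul_sum]
        exact Finset.sum_congr rfl fun q _ => by ring
      simp only [e2]
      rw [intervalIntegral.integral_finsetSum]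
      · rw [Finset.mul_sum]
        refine Finset.sum_congr rfl fun q _ => ?_
        rw [intervalIntegral.integral_const_mul]; push_cast; ring
      · intro q _
        have h1 := AA_cont b
        have h2 := mm_cont a
        have h3 := ekk_cont q.2
        have h4 := ekk_cont q.1
        exact Continuous.intervalIntegrable (by fun_prop) _ _
    rw [Complex.ofReal_mul, Complex.ofReal_tsum]
    simp only [hn]
    rw [tsum_mul_left, ← mul_assoc, ← Complex.ofReal_mul]
    congr 2
    field_simp
  · refine hint.congr_ae ?_
    rw [Filter.EventuallyEq, MeasureTheory.ae_restrict_iff' measurableSet_uIoc]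
    exact hae
end
end
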